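/- arXiv:1305.2043 — 2 statements merged into one kernel-verified Lean document; each statement's English description precedes it below -/
import Mathlib

section
/- Let d ≥ 2, α ∈ (1,2), T > 0, and for 0 < t ≤ T define the semigroup (P_t φ)(x) = ∫_{ℝ^d} φ(x + y) p_t(y) dy acting on bounded measurable functions φ : ℝ^d → ℝ, where p_t(x) = (2π)^{−d} ∫_{ℝ^d} cos(⟨x,u⟩) e^{−tΨ(u)} du and Ψ(u) = ∫_{|y|≤1} (1 − cos(⟨u,y⟩)) |y|^{−(d+α)} dy. Then for each 0 < t ≤ T, P_t φ is continuously differentiable, and there exists a constant C < ∞ (depending only on d, α, T) such that |∂(P_t φ)/∂x_i (x)| ≤ C ‖φ‖_∞ t^{−1/α} for all x ∈ ℝ^d, all 0 < t ≤ T, and all i = 1,…,d, where ‖φ‖_∞ = sup_{x∈ℝ^d} |φ(x)|. -/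
open MeasureTheory Metric
open scoped RealInnerProductSpace

/-- Characteristic exponent of the truncated `α`-stable process. -/
noncomputable def Psi (d : ℕ) (α : ℝ) (u : EuclideanSpace ℝ (Fin d)) : ℝ :=
  ∫ y in Metric.closedBall (0 : EuclideanSpace ℝ (Fin d)) 1,
    (1 - Real.cos ⟪u, y⟫) / ‖y‖ ^ ((d : ℝ) + α)

/-- Transition density of the truncated `α`-stable process, via Fourier inversion. -/
noncomputable def pdens (d : ℕ) (α : ℝ) (t : ℝ) (x : EuclideanSpace ℝ (Fin d)) : ℝ :=
  ((2 * Real.pi) ^ d)⁻¹ *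
    ∫ u : EuclideanSpace ℝ (Fin d), Real.cos ⟪x, u⟫ * Real.exp (-t * Psi d α u)

/-- The semigroup `(P_t φ)(x) = ∫ φ(x+y) p_t(y) dy`. -/
noncomputable def Pt (d : ℕ) (α : ℝ) (φ : EuclideanSpace ℝ (Fin d) → ℝ) (t : ℝ)
    (x : EuclideanSpace ℝ (Fin d)) : ℝ :=
  ∫ y : EuclideanSpace ℝ (Fin d), φ (x + y) * pdens d α t y


abbrev EE (d : ℕ) := EuclideanSpace ℝ (Fin d)

noncomputable def wt (d : ℕ) (α : ℝ) (y : EE d) : ℝ := (‖y‖ ^ ((d : ℝ) + α))⁻¹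

lemma wt_nonneg (d : ℕ) (α : ℝ) (y : EE d) : 0 ≤ wt d α y := by
  unfold wt; positivity

lemma wt_meas (d : ℕ) (α : ℝ) : Measurable (wt d α) := by
  unfold wt; fun_prop

lemma sq_wt_int (d : ℕ) (hd : 2 ≤ d) (α : ℝ) (hα2 : α < 2) :
    IntegrableOn (fun y : EE d => ‖y‖ ^ 2 * wt d α y) (closedBall 0 1) := by
  have hfin : Module.finrank ℝ (EE d) = d := by simp
  have := integrableOn_ball_of_norm_le_rpow (E := EE d) (μ := volume)
    (f := fun y : EE d => ‖y‖ ^ 2 * wt d α y) (C := 1) (α := d + α - 2) (r := 2)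
    (by omega) (by rw [hfin]; linarith) (by
      refine Filter.Eventually.of_forall fun y => ?_
      have h0 : 0 ≤ ‖y‖ ^ 2 * wt d α y := mul_nonneg (by positivity) (wt_nonneg _ _ _)
      rw [Real.norm_of_nonneg h0, one_mul]
      rcases eq_or_ne y 0 with rfl | hy
      · simp
        positivity
      · have hy' : 0 < ‖y‖ := norm_pos_iff.2 hy
        unfold wt
        rw [← Real.rpow_neg hy'.le, ← Real.rpow_natCast, ← Real.rpow_add hy']
        apply le_of_eq; congr 1; push_cast; ring)
    (by
      apply Measurable.aestronglyMeasurable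
      have := wt_meas d α
      fun_prop)
  exact this.mono_set (closedBall_subset_ball (by norm_num))

lemma int_of_le {F : Type*} [NormedAddCommGroup F] (d : ℕ) (hd : 2 ≤ d) (α : ℝ) (hα2 : α < 2)
    (f : EE d → F) (C : ℝ) (hf : AEStronglyMeasurable f (volume.restrict (closedBall 0 1)))
    (h : ∀ y ∈ closedBall (0 : EE d) 1, ‖f y‖ ≤ C * (‖y‖ ^ 2 * wt d α y)) :
    IntegrableOn f (closedBall 0 1) := by
  refine Integrable.mono' ((sq_wt_int d hd α hα2).const_mul C) hf ?_
  filter_upwards [ae_restrict_mem measurableSet_closedBall] with y hy using h y hy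

lemma abs_sin_inner_le {d : ℕ} (u y : EE d) : |Real.sin ⟪u, y⟫| ≤ ‖u‖ * ‖y‖ :=
  (Real.abs_sin_le_abs).trans (abs_real_inner_le_norm u y)

lemma one_sub_cos_inner_le {d : ℕ} (u y : EE d) :
    1 - Real.cos ⟪u, y⟫ ≤ (‖u‖ * ‖y‖) ^ 2 / 2 := by
  have h1 := Real.one_sub_sq_div_two_le_cos (x := ⟪u, y⟫)
  have h2 := abs_real_inner_le_norm u y
  have h3 : ⟪u, y⟫ ^ 2 ≤ (‖u‖ * ‖y‖) ^ 2 := by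
    rw [← sq_abs]; gcongr
  linarith

lemma psi_int (d : ℕ) (hd : 2 ≤ d) (α : ℝ) (hα2 : α < 2) (u : EE d) :
    IntegrableOn (fun y : EE d => (1 - Real.cos ⟪u, y⟫) / ‖y‖ ^ ((d : ℝ) + α))
      (closedBall 0 1) := by
  refine int_of_le d hd α hα2 _ (‖u‖ ^ 2 / 2) ?_ ?_
  · apply Measurable.aestronglyMeasurable
    fun_prop
  · intro y _
    have h1 := one_sub_cos_inner_le u y
    have h2 := Real.cos_le_one ⟪u, y⟫
    have h3 := wt_nonneg d α y
    rw [div_eq_mul_inv, show (‖y‖ ^ ((d : ℝ) + α))⁻¹ = wt d α y from rfl,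
      Real.norm_of_nonneg (mul_nonneg (by linarith) h3)]
    calc _ ≤ (‖u‖ * ‖y‖) ^ 2 / 2 * wt d α y := by gcongr
      _ = _ := by ring

/-- gradient of Psi -/
noncomputable def gradPsi (d : ℕ) (α : ℝ) (u : EE d) : EE d →L[ℝ] ℝ :=
  ∫ y in closedBall (0 : EE d) 1, (Real.sin ⟪u, y⟫ * wt d α y) • innerSL ℝ y

noncomputable def hessPsi (d : ℕ) (α : ℝ) (u : EE d) : EE d →L[ℝ] EE d →L[ℝ] ℝ :=
  ∫ y in closedBall (0 : EE d) 1,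
    (Real.cos ⟪u, y⟫ * wt d α y) • (innerSL ℝ y).smulRight (innerSL ℝ y)

lemma hasFDerivAt_inner_left {d : ℕ} (u y : EE d) :
    HasFDerivAt (fun u : EE d => ⟪u, y⟫) (innerSL ℝ y) u := by
  have : (fun u : EE d => ⟪u, y⟫) = innerSL ℝ y := by
    ext u; simp [real_inner_comm]
  rw [this]
  exact (innerSL ℝ y).hasFDerivAt

lemma grad_meas (d : ℕ) (α : ℝ) (u : EE d) :
    Measurable (fun y : EE d => (Real.sin ⟪u, y⟫ * wt d α y) • innerSL ℝ y) := by
  have := wt_meas d α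
  have h2 : Measurable (fun y : EE d => innerSL ℝ y) := (innerSL ℝ).continuous.measurable
  fun_prop

lemma grad_bound {d : ℕ} (α : ℝ) (u y : EE d) :
    ‖(Real.sin ⟪u, y⟫ * wt d α y) • innerSL ℝ y‖ ≤ ‖u‖ * (‖y‖ ^ 2 * wt d α y) := by
  rw [norm_smul, innerSL_apply_norm, norm_mul, Real.norm_of_nonneg (wt_nonneg d α y),
    Real.norm_eq_abs]
  have := abs_sin_inner_le u y
  have h3 := wt_nonneg d α y
  calc _ ≤ (‖u‖ * ‖y‖) * wt d α y * ‖y‖ := by gcongr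
    _ = _ := by ring

lemma hasFDerivAt_Psi (d : ℕ) (hd : 2 ≤ d) (α : ℝ) (hα2 : α < 2) (u : EE d) :
    HasFDerivAt (Psi d α) (gradPsi d α u) u := by
  unfold Psi gradPsi
  refine hasFDerivAt_integral_of_dominated_of_fderiv_le (s := ball u 1)
    (bound := fun y => (‖u‖ + 1) * (‖y‖ ^ 2 * wt d α y))
    (F' := fun u y => (Real.sin ⟪u, y⟫ * wt d α y) • innerSL ℝ y)
    (ball_mem_nhds u one_pos) ?_ (psi_int d hd α hα2 u) ?_ ?_ ?_ ?_
  · refine Filter.Eventually.of_forall fun x => ?_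
    apply Measurable.aestronglyMeasurable
    fun_prop
  · exact (grad_meas d α u).aestronglyMeasurable
  · refine Filter.Eventually.of_forall fun y x hx => (grad_bound α x y).trans ?_
    have h3 := wt_nonneg d α y
    have : ‖x‖ ≤ ‖u‖ + 1 := by
      have := norm_sub_norm_le x u
      have h4 : ‖x - u‖ < 1 := by simpa [dist_eq_norm] using hx
      linarith
    gcongr
  · exact (sq_wt_int d hd α hα2).const_mul _
  · refine Filter.Eventually.of_forall fun y x _ => ?_
    have h := (((hasFDerivAt_inner_left x y).cos).const_sub 1).mul_const (wt d α y)
    simp only [div_eq_mul_inv]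
    refine h.congr_fderiv ?_
    ext v; simp; ring

lemma hess_meas (d : ℕ) (α : ℝ) (u : EE d) :
    Measurable (fun y : EE d =>
      (Real.cos ⟪u, y⟫ * wt d α y) • (innerSL ℝ y).smulRight (innerSL ℝ y)) := by
  have := wt_meas d α
  have h2 : Measurable (fun y : EE d => (innerSL ℝ y).smulRight (innerSL ℝ y)) := by
    apply Continuous.measurable
    have : Continuous fun y : EE d => ContinuousLinearMap.smulRightL ℝ (EE d) (EE d →L[ℝ] ℝ)
      (innerSL ℝ y) (innerSL ℝ y) := by fun_prop
    exact this
  fun_prop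

lemma hess_bound {d : ℕ} (α : ℝ) (u y : EE d) :
    ‖(Real.cos ⟪u, y⟫ * wt d α y) • (innerSL ℝ y).smulRight (innerSL ℝ y)‖
      ≤ 1 * (‖y‖ ^ 2 * wt d α y) := by
  refine (ContinuousLinearMap.opNorm_smul_le _ _).trans ?_
  rw [ContinuousLinearMap.norm_smulRight_apply, innerSL_apply_norm, norm_mul,
    Real.norm_of_nonneg (wt_nonneg d α y), Real.norm_eq_abs]
  have := Real.abs_cos_le_one ⟪u, y⟫
  have h3 := wt_nonneg d α y
  calc _ ≤ 1 * wt d α y * (‖y‖ * ‖y‖) := by gcongr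
    _ = _ := by ring

lemma hasFDerivAt_gradPsi (d : ℕ) (hd : 2 ≤ d) (α : ℝ) (hα2 : α < 2) (u : EE d) :
    HasFDerivAt (gradPsi d α) (hessPsi d α u) u := by
  unfold hessPsi gradPsi
  refine hasFDerivAt_integral_of_dominated_of_fderiv_le (s := Set.univ)
    (bound := fun y => 1 * (‖y‖ ^ 2 * wt d α y))
    (F' := fun u y => (Real.cos ⟪u, y⟫ * wt d α y) • (innerSL ℝ y).smulRight (innerSL ℝ y))
    Filter.univ_mem ?_ ?_ ?_ ?_ ?_ ?_
  · exact Filter.Eventually.of_forall fun x => (grad_meas d α x).aestronglyMeasurable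
  · exact int_of_le d hd α hα2 _ _ (grad_meas d α u).aestronglyMeasurable
      fun y _ => grad_bound α u y
  · exact (hess_meas d α u).aestronglyMeasurable
  · exact Filter.Eventually.of_forall fun y x _ => hess_bound α x y
  · exact (sq_wt_int d hd α hα2).const_mul _
  · refine Filter.Eventually.of_forall fun y x _ => ?_
    have h := (((hasFDerivAt_inner_left x y).sin).mul_const (wt d α y)).smul_const (innerSL ℝ y)
    refine h.congr_fderiv ?_
    ext v w; simp; ring
set_option maxSynthPendingDepth 3

lemma temperate_fourierIntegral {V F : Type*} [NormedAddCommGroup V] [NormedSpace ℝ V]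
    [MeasurableSpace V] [BorelSpace V] [SecondCountableTopology V]
    [NormedAddCommGroup F] [NormedSpace ℂ F]
    (μ : Measure V) (L : V →L[ℝ] V →L[ℝ] ℝ) (f : V → F)
    (hf : ∀ n : ℕ, Integrable (fun v => ‖v‖ ^ n * ‖f v‖) μ) (h'f : AEStronglyMeasurable f μ) :
    Function.HasTemperateGrowth
      (VectorFourier.fourierIntegral Real.fourierChar μ L.toLinearMap₁₂ f) := by
  refine ⟨VectorFourier.contDiff_fourierIntegral L (fun n _ => hf n), fun n => ?_⟩
  refine ⟨0, ∫ v, ‖VectorFourier.fourierPowSMulRight L f v n‖ ∂μ, fun x => ?_⟩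
  rw [VectorFourier.iteratedFDeriv_fourierIntegral (N := n) L (fun n _ => hf n) h'f le_rfl]
  simpa using VectorFourier.norm_fourierIntegral_le_integral_norm _ _ _ _ _

noncomputable def KC (d : ℕ) (α : ℝ) (y : EE d) : EE d →L[ℝ] EE d →L[ℝ] ℂ :=
  (wt d α y) • (innerSL ℝ y).smulRight ((innerSL ℝ y).smulRight (1 : ℂ))

noncomputable def TC (d : ℕ) : (EE d →L[ℝ] EE d →L[ℝ] ℂ) →L[ℝ] (EE d →L[ℝ] EE d →L[ℝ] ℝ) :=
  ContinuousLinearMap.compL ℝ (EE d) (EE d →L[ℝ] ℂ) (EE d →L[ℝ] ℝ)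
    (ContinuousLinearMap.compL ℝ (EE d) ℂ ℝ Complex.reCLM)

lemma KC_meas (d : ℕ) (α : ℝ) : Measurable (KC d α) := by
  have := wt_meas d α
  have h2 : Measurable (fun y : EE d => (innerSL ℝ y).smulRight ((innerSL ℝ y).smulRight (1 : ℂ))) := by
    apply Continuous.measurable
    have : Continuous fun y : EE d => ContinuousLinearMap.smulRightL ℝ (EE d) (EE d →L[ℝ] ℂ)
      (innerSL ℝ y) (ContinuousLinearMap.smulRightL ℝ (EE d) ℂ (innerSL ℝ y) 1) := by fun_prop
    exact this
  unfold KC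
  fun_prop

lemma KC_bound {d : ℕ} (α : ℝ) (y : EE d) : ‖KC d α y‖ ≤ ‖y‖ ^ 2 * wt d α y := by
  refine (ContinuousLinearMap.opNorm_smul_le _ _).trans ?_
  rw [ContinuousLinearMap.norm_smulRight_apply, ContinuousLinearMap.norm_smulRight_apply,
    innerSL_apply_norm, Real.norm_of_nonneg (wt_nonneg d α y), norm_one]
  apply le_of_eq; ring

noncomputable def LC (d : ℕ) : EE d →L[ℝ] EE d →L[ℝ] ℝ := (-(2 * Real.pi)⁻¹) • innerSL ℝ

lemma KC_int (d : ℕ) (hd : 2 ≤ d) (α : ℝ) (hα2 : α < 2) (n : ℕ) :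
    IntegrableOn (fun v => ‖v‖ ^ n * ‖KC d α v‖) (closedBall 0 1) := by
  refine int_of_le d hd α hα2 _ 1 ?_ ?_
  · have := KC_meas d α
    exact (by fun_prop : Measurable fun v => ‖v‖ ^ n * ‖KC d α v‖).aestronglyMeasurable
  · intro y hy
    have h1 : ‖y‖ ≤ 1 := by simpa using hy
    have h2 := KC_bound α y
    rw [Real.norm_of_nonneg (by positivity)]
    have : ‖y‖ ^ n ≤ 1 := pow_le_one₀ (norm_nonneg _) h1
    gcongr

lemma hessPsi_eq (d : ℕ) (hd : 2 ≤ d) (α : ℝ) (hα2 : α < 2) :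
    hessPsi d α = fun u => TC d (VectorFourier.fourierIntegral Real.fourierChar
      (volume.restrict (closedBall (0 : EE d) 1)) (LC d).toLinearMap₁₂ (KC d α) u) := by
  ext1 u
  unfold hessPsi VectorFourier.fourierIntegral
  have hInteg : Integrable (KC d α) (volume.restrict (closedBall (0 : EE d) 1)) := by
    rw [← integrable_norm_iff (KC_meas d α).aestronglyMeasurable]
    simpa [IntegrableOn] using KC_int d hd α hα2 0
  rw [← ContinuousLinearMap.integral_comp_comm]
  · congr 1
    ext1 y
    ext v w
    simp [TC, KC, LC, Circle.smul_def, Real.fourierChar_apply]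
    have : (2 * (Real.pi : ℂ) * ((Real.pi : ℂ)⁻¹ * 2⁻¹ * (⟪y, u⟫ : ℝ)) * Complex.I) =
        ((⟪y, u⟫ : ℝ) : ℂ) * Complex.I := by
      have : (Real.pi : ℂ) ≠ 0 := by exact_mod_cast Real.pi_ne_zero
      field_simp
    rw [innerSL_apply_apply, this, Complex.exp_ofReal_mul_I_re, real_inner_comm]
    ring
  · have := (VectorFourier.fourierIntegral_convergent_iff (μ := volume.restrict (closedBall (0 : EE d) 1)) (f := KC d α) Real.continuous_fourierChar (L := (LC d).toLinearMap₁₂) (by exact (LC d).continuous₂) u).2 hInteg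
    exact this

lemma psi_temperate (d : ℕ) (hd : 2 ≤ d) (α : ℝ) (hα2 : α < 2) :
    Function.HasTemperateGrowth (Psi d α) := by
  have h2 : Function.HasTemperateGrowth (hessPsi d α) := by
    rw [hessPsi_eq d hd α hα2]
    exact (TC d).hasTemperateGrowth.comp (temperate_fourierIntegral _ _ _ (KC_int d hd α hα2)
      (KC_meas d α).aestronglyMeasurable)
  have e2 : fderiv ℝ (gradPsi d α) = hessPsi d α :=
    funext fun u => (hasFDerivAt_gradPsi d hd α hα2 u).fderiv
  have e1 : fderiv ℝ (Psi d α) = gradPsi d α :=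
    funext fun u => (hasFDerivAt_Psi d hd α hα2 u).fderiv
  set I := ∫ y in closedBall (0 : EE d) 1, ‖y‖ ^ 2 * wt d α y with hI
  have hI0 : 0 ≤ I := integral_nonneg fun y => mul_nonneg (by positivity) (wt_nonneg _ _ _)
  have h1 : Function.HasTemperateGrowth (gradPsi d α) := by
    refine Function.HasTemperateGrowth.of_fderiv (e2 ▸ h2)
      (fun u => (hasFDerivAt_gradPsi d hd α hα2 u).differentiableAt) (k := 1) (C := I) ?_
    intro u
    have : ‖gradPsi d α u‖ ≤ ‖u‖ * I := by
      rw [hI, ← integral_const_mul]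
      exact norm_integral_le_of_norm_le ((sq_wt_int d hd α hα2).const_mul _)
        (Filter.Eventually.of_forall fun y => grad_bound α u y)
    nlinarith
  refine Function.HasTemperateGrowth.of_fderiv (e1 ▸ h1)
    (fun u => (hasFDerivAt_Psi d hd α hα2 u).differentiableAt) (k := 2) (C := I) ?_
  intro u
  have : ‖Psi d α u‖ ≤ ‖u‖ ^ 2 / 2 * I := by
    rw [hI, ← integral_const_mul]
    refine norm_integral_le_of_norm_le ((sq_wt_int d hd α hα2).const_mul _)
        (Filter.Eventually.of_forall fun y => ?_)
    have h1 := one_sub_cos_inner_le u y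
    have h2 := Real.cos_le_one ⟪u, y⟫
    have h3 := wt_nonneg d α y
    rw [div_eq_mul_inv, show (‖y‖ ^ ((d : ℝ) + α))⁻¹ = wt d α y from rfl,
      Real.norm_of_nonneg (mul_nonneg (by linarith) h3)]
    calc _ ≤ (‖u‖ * ‖y‖) ^ 2 / 2 * wt d α y := by gcongr
      _ = _ := by ring
  have : ‖u‖ ^ 2 / 2 * I ≤ I * (1 + ‖u‖) ^ 2 := by
    nlinarith [mul_nonneg hI0 (sq_nonneg ‖u‖), mul_nonneg hI0 (norm_nonneg u)]
  linarith
set_option maxSynthPendingDepth 3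

lemma psi_scale (d : ℕ) (α : ℝ) (r : ℝ) (hr : 0 < r) (u : EE d) :
    ∫ y in closedBall (0 : EE d) r, (1 - Real.cos ⟪u, y⟫) / ‖y‖ ^ ((d : ℝ) + α) =
      r ^ (-α) * Psi d α (r • u) := by
  have h := Measure.setIntegral_comp_smul_of_pos (volume : Measure (EE d))
    (fun y => (1 - Real.cos ⟪u, y⟫) / ‖y‖ ^ ((d : ℝ) + α)) (closedBall (0 : EE d) 1) hr
  rw [_root_.smul_closedBall _ _ zero_le_one] at h
  simp only [smul_zero, mul_one, norm_smul, Real.norm_of_nonneg hr.le, finrank_euclideanSpace,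
    Fintype.card_fin, smul_eq_mul] at h
  have h2 : ∫ x in closedBall (0 : EE d) 1, (1 - Real.cos ⟪u, r • x⟫) / (r * ‖x‖) ^ ((d : ℝ) + α)
      = r ^ (-((d : ℝ) + α)) * Psi d α (r • u) := by
    unfold Psi
    rw [← integral_const_mul]
    congr 1
    ext x
    rw [Real.mul_rpow hr.le (norm_nonneg _), Real.rpow_neg hr.le, real_inner_smul_right,
      real_inner_smul_left]
    field_simp
  rw [h2] at h
  have hrd : (r ^ d : ℝ) ≠ 0 := by positivity
  have h3 : r ^ (-α) = r ^ d * r ^ (-((d : ℝ) + α)) := by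
    rw [← Real.rpow_natCast, ← Real.rpow_add hr]
    congr 1; ring
  rw [h3, mul_assoc, h]
  field_simp

lemma integrand_nonneg (d : ℕ) (α : ℝ) (u y : EE d) :
    0 ≤ (1 - Real.cos ⟪u, y⟫) / ‖y‖ ^ ((d : ℝ) + α) := by
  have h2 := Real.cos_le_one ⟪u, y⟫
  have : 0 ≤ 1 - Real.cos ⟪u, y⟫ := by linarith
  positivity

lemma psi_nonneg (d : ℕ) (α : ℝ) (u : EE d) : 0 ≤ Psi d α u :=
  integral_nonneg fun y => integrand_nonneg d α u y

lemma psi_pos (d : ℕ) (hd : 2 ≤ d) (α : ℝ) (hα2 : α < 2) (u : EE d) (hu : ‖u‖ = 1) :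
    0 < Psi d α u := by
  unfold Psi
  rw [integral_pos_iff_support_of_nonneg (fun y => integrand_nonneg d α u y)
    (psi_int d hd α hα2 u)]
  rw [Measure.restrict_apply' measurableSet_closedBall]
  have hopen : IsOpen (ball (0 : EE d) 1 ∩ {y | 0 < ⟪u, y⟫}) :=
    isOpen_ball.inter (isOpen_lt continuous_const (by fun_prop))
  have hne : (ball (0 : EE d) 1 ∩ {y | 0 < ⟪u, y⟫}).Nonempty := by
    refine ⟨(1 / 2 : ℝ) • u, ?_, ?_⟩
    · simp [norm_smul, hu]; norm_num
    · simp [real_inner_smul_right, hu]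
  refine (hopen.measure_pos volume hne).trans_le (measure_mono ?_)
  rintro y ⟨hy1, hy2⟩
  refine ⟨?_, ball_subset_closedBall hy1⟩
  have hy1' : ‖y‖ < 1 := by simpa using hy1
  have hy2' : 0 < ⟪u, y⟫ := hy2
  have hle : ⟪u, y⟫ ≤ 1 := by
    have := real_inner_le_norm u y
    rw [hu] at this; linarith
  have hc : Real.cos ⟪u, y⟫ < 1 := by
    rw [← Real.cos_zero]
    exact Real.cos_lt_cos_of_nonneg_of_le_pi le_rfl (by linarith [Real.pi_gt_three]) hy2'
  have hy0 : 0 < ‖y‖ := by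
    rw [norm_pos_iff]; rintro rfl; simp at hy2'
  have : 0 < (1 - Real.cos ⟪u, y⟫) / ‖y‖ ^ ((d : ℝ) + α) := by
    have : 0 < 1 - Real.cos ⟪u, y⟫ := by linarith
    positivity
  exact this.ne'

lemma psi_mono (d : ℕ) (hd : 2 ≤ d) (α : ℝ) (hα2 : α < 2) (r : ℝ) (hr : 0 < r) (hr1 : r ≤ 1)
    (u : EE d) : r ^ (-α) * Psi d α (r • u) ≤ Psi d α u := by
  rw [← psi_scale d α r hr u]
  exact setIntegral_mono_set (psi_int d hd α hα2 u)
    (Filter.Eventually.of_forall fun y => integrand_nonneg d α u y)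
    (closedBall_subset_closedBall hr1).eventuallyLE

lemma psi_lower (d : ℕ) (hd : 2 ≤ d) (α : ℝ) (hα1 : 1 < α) (hα2 : α < 2) :
    ∃ κ : ℝ, 0 < κ ∧ ∀ u : EE d, κ * ‖u‖ - κ ≤ Psi d α u := by
  have hcont : Continuous (Psi d α) := (psi_temperate d hd α hα2).1.continuous
  have : Nonempty (Fin d) := ⟨⟨0, by omega⟩⟩
  obtain ⟨v, hv, hmin⟩ := (isCompact_sphere (0 : EE d) 1).exists_isMinOn
    (NormedSpace.sphere_nonempty.2 zero_le_one) hcont.continuousOn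
  have hv1 : ‖v‖ = 1 := by simpa using hv
  refine ⟨Psi d α v, psi_pos d hd α hα2 v hv1, fun u => ?_⟩
  have hp := psi_pos d hd α hα2 v hv1
  rcases le_or_gt ‖u‖ 1 with h | h
  · have := psi_nonneg d α u
    nlinarith
  · have h0 : 0 < ‖u‖ := by linarith
    have h1 := psi_mono d hd α hα2 (‖u‖⁻¹) (by positivity) (inv_le_one_of_one_le₀ h.le) u
    have h2 : Psi d α v ≤ Psi d α (‖u‖⁻¹ • u) := hmin (by simp [norm_smul, h0.ne'])
    rw [Real.inv_rpow h0.le, Real.rpow_neg h0.le, inv_inv] at h1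
    have h3 : ‖u‖ ≤ ‖u‖ ^ α := by
      conv_lhs => rw [← Real.rpow_one ‖u‖]
      exact Real.rpow_le_rpow_of_exponent_le h.le hα1.le
    calc Psi d α v * ‖u‖ - Psi d α v ≤ ‖u‖ ^ α * Psi d α v := by nlinarith
      _ ≤ ‖u‖ ^ α * Psi d α (‖u‖⁻¹ • u) := by gcongr
      _ ≤ _ := h1

lemma exp_psi_bound (d : ℕ) (hd : 2 ≤ d) (α : ℝ) (hα1 : 1 < α) (hα2 : α < 2) (c : ℝ) (hc : 0 < c)
    (m : ℕ) : ∃ B : ℝ, ∀ x : EE d, (1 + ‖x‖) ^ m * Real.exp (-c * Psi d α x) ≤ B := by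
  obtain ⟨κ, hκ, h⟩ := psi_lower d hd α hα1 hα2
  set a := c * κ with ha
  have ha0 : 0 < a := by positivity
  refine ⟨(m.factorial : ℝ) * (a ^ m)⁻¹ * Real.exp (2 * a), fun x => ?_⟩
  have h1 : (a * (1 + ‖x‖)) ^ m / (m.factorial : ℝ) ≤ Real.exp (a * (1 + ‖x‖)) :=
    Real.pow_div_factorial_le_exp _ (by positivity) m
  have h2 : Real.exp (-c * Psi d α x) ≤ Real.exp (2 * a - a * (1 + ‖x‖)) := by
    apply Real.exp_le_exp.2
    have := mul_le_mul_of_nonneg_left (h x) hc.le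
    rw [ha]; nlinarith
  have h3 : (1 + ‖x‖) ^ m ≤ (m.factorial : ℝ) * (a ^ m)⁻¹ * Real.exp (a * (1 + ‖x‖)) := by
    rw [div_le_iff₀ (by positivity), mul_pow] at h1
    have : (0 : ℝ) < a ^ m := by positivity
    rw [mul_comm (m.factorial : ℝ), mul_assoc, inv_mul_eq_div, le_div_iff₀ this]
    linarith
  calc _ ≤ ((m.factorial : ℝ) * (a ^ m)⁻¹ * Real.exp (a * (1 + ‖x‖))) *
        Real.exp (2 * a - a * (1 + ‖x‖)) := by gcongr
    _ = _ := by rw [mul_assoc, ← Real.exp_add]; congr 2; ring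

lemma exp_decay (d : ℕ) (hd : 2 ≤ d) (α : ℝ) (hα1 : 1 < α) (hα2 : α < 2) (c : ℝ) (hc : 0 < c)
    (k n : ℕ) : ∃ C : ℝ, ∀ x : EE d,
      ‖x‖ ^ k * ‖iteratedFDeriv ℝ n (fun u => Real.exp (-c * Psi d α u)) x‖ ≤ C := by
  have hf : Function.HasTemperateGrowth (fun u : EE d => -c * Psi d α u) :=
    (Function.HasTemperateGrowth.const (-c)).mul (psi_temperate d hd α hα2)
  obtain ⟨k', C, hC, hb⟩ := hf.norm_iteratedFDeriv_le_uniform n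
  obtain ⟨B, hB⟩ := exp_psi_bound d hd α hα1 hα2 c hc (k + k' * n)
  refine ⟨(n.factorial : ℝ) * (C + 1) ^ n * B, fun x => ?_⟩
  have key := norm_iteratedFDeriv_comp_le (𝕜 := ℝ) (n := n) (N := n)
    (g := Real.exp) (f := fun u : EE d => -c * Psi d α u) Real.contDiff_exp (hf.1.of_le (by exact_mod_cast le_top)) le_rfl x
    (C := Real.exp (-c * Psi d α x)) (D := (C + 1) * (1 + ‖x‖) ^ k') (by
      intro i _
      rw [norm_iteratedFDeriv_eq_norm_iteratedDeriv, iteratedDeriv_eq_iterate,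
        Real.iter_deriv_exp]
      simp) (by
      intro i hi hin
      refine (hb i hin x).trans ?_
      have h1 : (1 : ℝ) ≤ (1 + ‖x‖) ^ k' := one_le_pow₀ (by linarith [norm_nonneg x])
      calc C * (1 + ‖x‖) ^ k' ≤ (C + 1) * (1 + ‖x‖) ^ k' := by gcongr; linarith
        _ ≤ ((C + 1) * (1 + ‖x‖) ^ k') ^ i := le_self_pow₀ (by nlinarith) (by omega))
  have h4 : ‖x‖ ^ k ≤ (1 + ‖x‖) ^ k := by gcongr; linarith
  calc _ ≤ (1 + ‖x‖) ^ k * ((n.factorial : ℝ) * Real.exp (-c * Psi d α x) *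
          ((C + 1) * (1 + ‖x‖) ^ k') ^ n) := by
        gcongr
        exact key
    _ = (n.factorial : ℝ) * (C + 1) ^ n *
          ((1 + ‖x‖) ^ (k + k' * n) * Real.exp (-c * Psi d α x)) := by
        rw [mul_pow, ← pow_mul, pow_add]; ring
    _ ≤ _ := by gcongr; exact hB x

noncomputable def gS (d : ℕ) (hd : 2 ≤ d) (α : ℝ) (hα1 : 1 < α) (hα2 : α < 2) (c : ℝ) (hc : 0 < c) :
    SchwartzMap (EE d) ℝ where
  toFun u := Real.exp (-c * Psi d α u)
  smooth' := Real.contDiff_exp.comp (contDiff_const.mul (psi_temperate d hd α hα2).1)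
  decay' := exp_decay d hd α hα1 hα2 c hc

lemma pdens_schwartz (d : ℕ) (hd : 2 ≤ d) (α : ℝ) (hα1 : 1 < α) (hα2 : α < 2) (c : ℝ)
    (hc : 0 < c) : ∃ S : SchwartzMap (EE d) ℝ, ∀ x, S x = pdens d α c x := by
  let g := gS d hd α hα1 hα2 c hc
  let gC : SchwartzMap (EE d) ℂ := g.postcompCLM Complex.ofRealCLM
  let h : SchwartzMap (EE d) ℂ := FourierTransform.fourier gC
  have h2pi : (2 * Real.pi)⁻¹ ≠ 0 := by positivity
  let e : EE d ≃L[ℝ] EE d := ContinuousLinearEquiv.smulLeft (Units.mk0 _ h2pi)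
  let S0 : SchwartzMap (EE d) ℝ :=
    (SchwartzMap.compCLMOfContinuousLinearEquiv ℝ e h).postcompCLM Complex.reCLM
  refine ⟨((2 * Real.pi) ^ d)⁻¹ • S0, fun x => ?_⟩
  have h1 : S0 x = Complex.re (h ((2 * Real.pi)⁻¹ • x)) := rfl
  have h2 : h ((2 * Real.pi)⁻¹ • x) =
      ∫ v : EE d, Real.fourierChar (-⟪v, (2 * Real.pi)⁻¹ • x⟫) • gC v := by
    show (FourierTransform.fourier gC : SchwartzMap (EE d) ℂ) _ = _
    rw [SchwartzMap.fourier_coe, Real.fourier_eq]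
  have hInteg : Integrable (fun v : EE d =>
      Real.fourierChar (-⟪v, (2 * Real.pi)⁻¹ • x⟫) • gC v) := by
    exact (Real.fourierIntegral_convergent_iff _).2 gC.integrable
  unfold pdens
  rw [smul_apply, smul_eq_mul, h1, h2]
  congr 1
  have := integral_re hInteg
  simp only [RCLike.re_to_complex] at this
  rw [← this]
  congr 1
  ext v
  have hg : gC v = ((Real.exp (-c * Psi d α v) : ℝ) : ℂ) := rfl
  rw [hg, Circle.smul_def, Real.fourierChar_apply, smul_eq_mul, Complex.re_mul_ofReal]
  congr 1
  have : (2 * Real.pi * -⟪v, (2 * Real.pi)⁻¹ • x⟫ : ℝ) = -⟪x, v⟫ := by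
    rw [real_inner_smul_right, real_inner_comm]
    field_simp
  rw [this, Complex.exp_ofReal_mul_I_re, Real.cos_neg]
set_option maxSynthPendingDepth 3

lemma schwartz_dom {d : ℕ} {F : Type*} [NormedAddCommGroup F] [NormedSpace ℝ F]
    (G : SchwartzMap (EE d) F) (x0 : EE d) :
    ∃ b : EE d → ℝ, Integrable b ∧ ∀ z, ∀ x ∈ ball x0 1, ‖G (z - x)‖ ≤ b z := by
  obtain ⟨A, hA⟩ : ∃ A : ℝ, ∀ x, (1 + ‖x‖) ^ (d + 1) * ‖G x‖ ≤ A :=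
    ⟨_, fun x => by
      simpa using SchwartzMap.one_add_le_sup_seminorm_apply (𝕜 := ℝ) (m := (d + 1, 0)) (k := d + 1)
        (n := 0) le_rfl le_rfl G x⟩
  have hInteg : Integrable (fun z : EE d => (1 + ‖z‖) ^ (-((d + 1 : ℕ) : ℝ))) :=
    integrable_one_add_norm (by simp)
  refine ⟨fun z => (2 ^ (d + 1) * A) * (1 + ‖z - x0‖) ^ (-((d + 1 : ℕ) : ℝ)),
    (hInteg.comp_sub_right x0).const_mul _, fun z x hx => ?_⟩
  beta_reduce
  rw [Real.rpow_neg (by positivity), Real.rpow_natCast, ← div_eq_mul_inv,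
    le_div_iff₀ (by positivity)]
  have h1 : 1 + ‖z - x0‖ ≤ 2 * (1 + ‖z - x‖) := by
    have h4 : ‖x - x0‖ < 1 := by simpa [dist_eq_norm] using hx
    have : ‖z - x0‖ ≤ ‖z - x‖ + ‖x - x0‖ := by
      simpa using norm_add_le (z - x) (x - x0)
    linarith [norm_nonneg (z - x)]
  calc _ ≤ ‖G (z - x)‖ * (2 * (1 + ‖z - x‖)) ^ (d + 1) := by gcongr
    _ = 2 ^ (d + 1) * ((1 + ‖z - x‖) ^ (d + 1) * ‖G (z - x)‖) := by rw [mul_pow]; ring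
    _ ≤ _ := by gcongr; exact hA _

lemma smul_dom {d : ℕ} {F : Type*} [NormedAddCommGroup F] [NormedSpace ℝ F]
    (G : SchwartzMap (EE d) F) (φ : EE d → ℝ) (M : ℝ) (hM : ∀ x, |φ x| ≤ M) (x0 : EE d) :
    ∃ b : EE d → ℝ, Integrable b ∧ ∀ z, ∀ x ∈ ball x0 1, ‖φ z • G (z - x)‖ ≤ b z := by
  obtain ⟨b, hb, h⟩ := schwartz_dom G x0
  refine ⟨fun z => M * b z, hb.const_mul _, fun z x hx => ?_⟩
  have h0 : 0 ≤ M := (abs_nonneg _).trans (hM 0)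
  rw [norm_smul]
  exact mul_le_mul (hM z) (h z x hx) (norm_nonneg _) h0

lemma smul_meas {d : ℕ} {F : Type*} [NormedAddCommGroup F] [NormedSpace ℝ F]
    (G : SchwartzMap (EE d) F) (φ : EE d → ℝ) (hφ : Measurable φ) (x : EE d) :
    AEStronglyMeasurable (fun z => φ z • G (z - x)) := by
  refine hφ.aestronglyMeasurable.smul (Continuous.aestronglyMeasurable ?_)
  exact G.continuous.comp (by fun_prop)

lemma smul_cont {d : ℕ} {F : Type*} [NormedAddCommGroup F] [NormedSpace ℝ F]
    (G : SchwartzMap (EE d) F) (φ : EE d → ℝ) (hφ : Measurable φ) (M : ℝ)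
    (hM : ∀ x, |φ x| ≤ M) : Continuous fun x => ∫ z, φ z • G (z - x) := by
  refine continuous_iff_continuousAt.2 fun x0 => ?_
  obtain ⟨b, hb, h⟩ := smul_dom G φ M hM x0
  refine continuousAt_of_dominated (bound := b)
    (Filter.Eventually.of_forall fun x => smul_meas G φ hφ x) ?_ hb ?_
  · filter_upwards [ball_mem_nhds x0 one_pos] with x hx
    exact Filter.Eventually.of_forall fun z => h z x hx
  · refine Filter.Eventually.of_forall fun z => ?_
    exact (continuous_const.smul (G.continuous.comp (by fun_prop))).continuousAt

lemma smul_deriv {d : ℕ} (S : SchwartzMap (EE d) ℝ) (φ : EE d → ℝ) (hφ : Measurable φ) (M : ℝ)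
    (hM : ∀ x, |φ x| ≤ M) (x0 : EE d) :
    HasFDerivAt (fun x => ∫ z, φ z • S (z - x))
      (∫ z, φ z • (-SchwartzMap.fderivCLM ℝ (EE d) ℝ S) (z - x0)) x0 := by
  obtain ⟨b, hb, h⟩ := smul_dom (-SchwartzMap.fderivCLM ℝ (EE d) ℝ S) φ M hM x0
  obtain ⟨b', hb', h'⟩ := smul_dom S φ M hM x0
  refine hasFDerivAt_integral_of_dominated_of_fderiv_le (s := ball x0 1) (bound := b)
    (F' := fun x z => φ z • (-SchwartzMap.fderivCLM ℝ (EE d) ℝ S) (z - x))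
    (ball_mem_nhds x0 one_pos) (Filter.Eventually.of_forall fun x => smul_meas S φ hφ x)
    (hb'.mono' (smul_meas S φ hφ x0)
      (Filter.Eventually.of_forall fun z => h' z x0 (mem_ball_self one_pos)))
    (smul_meas _ φ hφ x0) (Filter.Eventually.of_forall fun z x hx => h z x hx) hb
    (Filter.Eventually.of_forall fun z x _ => ?_)
  have h1 : HasFDerivAt (fun x => S (z - x)) ((fderiv ℝ S (z - x)).comp
      (-ContinuousLinearMap.id ℝ (EE d))) x :=
    (S.differentiableAt.hasFDerivAt).comp x ((hasFDerivAt_id x).const_sub z)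
  refine (h1.const_smul (φ z)).congr_fderiv ?_
  ext v
  simp

lemma grad_fixed {d : ℕ} (S : SchwartzMap (EE d) ℝ) :
    ∃ K : ℝ, 0 ≤ K ∧ ∀ φ : EE d → ℝ, Measurable φ → ∀ M : ℝ, (∀ x, |φ x| ≤ M) →
      ContDiff ℝ 1 (fun x => ∫ y, φ (x + y) * S y) ∧
      ∀ x, ‖fderiv ℝ (fun x => ∫ y, φ (x + y) * S y) x‖ ≤ K * M := by
  let D := -SchwartzMap.fderivCLM ℝ (EE d) ℝ S
  refine ⟨∫ z, ‖D z‖, integral_nonneg fun _ => norm_nonneg _, fun φ hφ M hM => ?_⟩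
  have e : (fun x => ∫ y, φ (x + y) * S y) = fun x => ∫ z, φ z • S (z - x) := by
    ext x
    rw [← integral_add_left_eq_self (fun z => φ z • S (z - x)) x]
    simp
  rw [e]
  have hD := smul_deriv S φ hφ M hM
  have hf : fderiv ℝ (fun x => ∫ z, φ z • S (z - x)) = fun x => ∫ z, φ z • D (z - x) :=
    funext fun x => (hD x).fderiv
  refine ⟨contDiff_one_iff_fderiv.2 ⟨fun x => (hD x).differentiableAt, ?_⟩, fun x => ?_⟩
  · rw [hf]; exact smul_cont D φ hφ M hM
  · rw [hf]
    have hi : Integrable fun z => ‖D (z - x)‖ := (D.integrable.comp_sub_right x).norm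
    calc ‖∫ z, φ z • D (z - x)‖ ≤ ∫ z, M * ‖D (z - x)‖ := by
          refine norm_integral_le_of_norm_le (hi.const_mul M)
            (Filter.Eventually.of_forall fun z => ?_)
          rw [norm_smul]
          gcongr
          exact hM z
      _ = _ := by
          rw [integral_const_mul, integral_sub_right_eq_self (fun z => ‖D z‖) x, mul_comm]
set_option maxSynthPendingDepth 3

noncomputable def pw {d : ℕ} (l : Measure (EE d)) : ℕ → Measure (EE d)
  | 0 => Measure.dirac 0
  | n + 1 => (pw l n).conv l

lemma pw_fin {d : ℕ} (l : Measure (EE d)) [IsFiniteMeasure l] (n : ℕ) :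
    IsFiniteMeasure (pw l n) := by
  induction n with
  | zero => unfold pw; infer_instance
  | succ n ih => unfold pw; infer_instance

lemma pw_mass {d : ℕ} (l : Measure (EE d)) [IsFiniteMeasure l] (n : ℕ) :
    (pw l n).real Set.univ = l.real Set.univ ^ n := by
  induction n with
  | zero => simp [pw]
  | succ n ih =>
    have := pw_fin l n
    unfold pw
    rw [Measure.conv, measureReal_def, Measure.map_apply (by fun_prop) MeasurableSet.univ,
      Set.preimage_univ, ← measureReal_def, ← Set.univ_prod_univ, measureReal_prod_prod, ih, pow_succ]

lemma pw_charFun {d : ℕ} (l : Measure (EE d)) [IsFiniteMeasure l] (n : ℕ) (u : EE d) :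
    charFun (pw l n) u = charFun l u ^ n := by
  induction n with
  | zero => simp [pw, charFun_dirac]
  | succ n ih =>
    have := pw_fin l n
    unfold pw
    rw [charFun_conv, ih, pow_succ]

lemma compound_poisson {d : ℕ} (l : Measure (EE d)) [IsFiniteMeasure l] :
    ∃ μ : Measure (EE d), IsProbabilityMeasure μ ∧
      ∀ u, charFun μ u = Complex.exp (charFun l u - l.real Set.univ) := by
  set m := l.real Set.univ with hm
  have hm0 : 0 ≤ m := measureReal_nonneg
  have hc : ∀ n : ℕ, 0 ≤ Real.exp (-m) / (n.factorial : ℝ) := fun n => by positivity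
  let ν : ℕ → Measure (EE d) := fun n => ENNReal.ofReal (Real.exp (-m) / (n.factorial : ℝ)) • pw l n
  have hsum : HasSum (fun n : ℕ => Real.exp (-m) / (n.factorial : ℝ) * m ^ n) 1 := by
    have := (NormedSpace.expSeries_div_hasSum_exp (𝔸 := ℝ) m).mul_left (Real.exp (-m))
    rw [← Real.exp_eq_exp_ℝ, ← Real.exp_add, neg_add_cancel, Real.exp_zero] at this
    refine this.congr_fun ?_
    intro n; ring
  have hprob : IsProbabilityMeasure (Measure.sum ν) := by
    refine ⟨?_⟩
    rw [Measure.sum_apply _ MeasurableSet.univ]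
    have h1 : ∀ n, ν n Set.univ = ENNReal.ofReal (Real.exp (-m) / (n.factorial : ℝ) * m ^ n) := by
      intro n
      have := pw_fin l n
      rw [ENNReal.ofReal_mul (hc n), ← pw_mass, measureReal_def,
        ENNReal.ofReal_toReal (measure_ne_top _ _)]
      rfl
    simp_rw [h1]
    rw [← ENNReal.ofReal_tsum_of_nonneg (fun n => mul_nonneg (hc n) (pow_nonneg hm0 n))
      hsum.summable, hsum.tsum_eq, ENNReal.ofReal_one]
  refine ⟨Measure.sum ν, hprob, fun u => ?_⟩
  have hInteg : Integrable (fun x : EE d => Complex.exp (⟪x, u⟫ * Complex.I)) (Measure.sum ν) := by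
    refine Integrable.of_bound (C := 1) (by fun_prop) ?_
    exact Filter.Eventually.of_forall fun x => by simp [Complex.norm_exp_ofReal_mul_I]
  have h2 := hasSum_integral_measure hInteg
  have h3 : ∀ n, ∫ x, Complex.exp (⟪x, u⟫ * Complex.I) ∂(ν n) =
      Complex.exp (-m) * (charFun l u ^ n / (n.factorial : ℂ)) := by
    intro n
    show ∫ x, Complex.exp (⟪x, u⟫ * Complex.I) ∂(ENNReal.ofReal _ • pw l n) = _
    rw [integral_smul_measure, ← charFun_apply, pw_charFun, ENNReal.toReal_ofReal (hc n)]
    rw [Complex.real_smul]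
    push_cast
    ring
  simp_rw [h3] at h2
  have h4 := (NormedSpace.expSeries_div_hasSum_exp (𝔸 := ℂ) (charFun l u)).mul_left (Complex.exp (-m))
  rw [← Complex.exp_eq_exp_ℂ, ← Complex.exp_add] at h4
  rw [charFun_apply, h2.unique h4]
  congr 1
  ring
set_option maxSynthPendingDepth 3

lemma wt_annulus_int (d : ℕ) (hd : 2 ≤ d) (α : ℝ) (hα2 : α < 2) (r : ℝ) (hr : 0 < r) :
    IntegrableOn (wt d α) (closedBall (0 : EE d) 1 \ closedBall 0 r) := by
  have h := ((sq_wt_int d hd α hα2).mono_set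
    (Set.sdiff_subset (s := closedBall (0 : EE d) 1) (t := closedBall 0 r))).const_mul ((r ^ 2)⁻¹)
  refine Integrable.mono' h (wt_meas d α).aestronglyMeasurable ?_
  filter_upwards [ae_restrict_mem (measurableSet_closedBall.diff measurableSet_closedBall)] with y hy
  have hy2 : r < ‖y‖ := by simpa using hy.2
  rw [Real.norm_of_nonneg (wt_nonneg _ _ _), ← mul_assoc]
  refine le_mul_of_one_le_left (wt_nonneg _ _ _) ?_
  rw [inv_mul_eq_div, one_le_div (by positivity)]
  gcongr

lemma annulus_odd (d : ℕ) (r : ℝ) (f : EE d → ℝ) (hf : ∀ y, f (-y) = - f y) :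
    ∫ y in closedBall (0 : EE d) 1 \ closedBall 0 r, f y = 0 := by
  rw [← integral_indicator (measurableSet_closedBall.diff measurableSet_closedBall)]
  have h := integral_neg_eq_self
    ((closedBall (0 : EE d) 1 \ closedBall 0 r).indicator f) volume
  have h2 : ∀ y, (closedBall (0 : EE d) 1 \ closedBall 0 r).indicator f (-y) =
      - (closedBall (0 : EE d) 1 \ closedBall 0 r).indicator f y := by
    intro y
    simp only [Set.indicator, Set.mem_sdiff, mem_closedBall, dist_zero_right, norm_neg]
    split_ifs <;> simp [hf]
  simp_rw [h2] at h
  rw [integral_neg] at h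
  linarith

lemma psi_split (d : ℕ) (hd : 2 ≤ d) (α : ℝ) (hα2 : α < 2) (r : ℝ) (hr : 0 < r) (hr1 : r ≤ 1)
    (u : EE d) :
    ∫ y in closedBall (0 : EE d) 1 \ closedBall 0 r, (1 - Real.cos ⟪u, y⟫) / ‖y‖ ^ ((d : ℝ) + α)
      = Psi d α u - r ^ (-α) * Psi d α (r • u) := by
  rw [setIntegral_sdiff measurableSet_closedBall (psi_int d hd α hα2 u) (closedBall_subset_closedBall hr1),
    psi_scale d α r hr u]
  rfl

lemma jump_measure (d : ℕ) (hd : 2 ≤ d) (α : ℝ) (hα2 : α < 2) (t : ℝ) (ht : 0 < t)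
    (r : ℝ) (hr : 0 < r) (hr1 : r ≤ 1) :
    ∃ μ : Measure (EE d), IsProbabilityMeasure μ ∧ ∀ u,
      (∫ z, Real.cos ⟪z, u⟫ ∂μ = Real.exp (-(t * Psi d α u - t * r ^ (-α) * Psi d α (r • u)))) ∧
      ∫ z, Real.sin ⟪z, u⟫ ∂μ = 0 := by
  set A := closedBall (0 : EE d) 1 \ closedBall 0 r with hA
  have hmeas : Measurable fun y : EE d => ENNReal.ofReal (t * wt d α y) :=
    ((wt_meas d α).const_mul t).ennreal_ofReal
  have hw : IntegrableOn (fun y => t * wt d α y) A := (wt_annulus_int d hd α hα2 r hr).const_mul t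
  let l := (volume.restrict A).withDensity (fun y => ENNReal.ofReal (t * wt d α y))
  have hlf : IsFiniteMeasure l := isFiniteMeasure_withDensity_ofReal hw.2
  have hl : ∀ (f : EE d → ℝ), ∫ y, f y ∂l = ∫ y in A, t * wt d α y * f y := by
    intro f
    rw [integral_withDensity_eq_integral_toReal_smul hmeas (by simp)]
    congr 1; ext y
    rw [ENNReal.toReal_ofReal (mul_nonneg ht.le (wt_nonneg _ _ _)), smul_eq_mul]
  have hexp : ∀ (ν : Measure (EE d)) [IsFiniteMeasure ν] (u : EE d),
      (charFun ν u).re = ∫ z, Real.cos ⟪z, u⟫ ∂ν ∧ (charFun ν u).im = ∫ z, Real.sin ⟪z, u⟫ ∂ν := by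
    intro ν _ u
    have hInteg : Integrable (fun x : EE d => Complex.exp (⟪x, u⟫ * Complex.I)) ν := by
      refine Integrable.of_bound (C := 1) (by fun_prop) ?_
      exact Filter.Eventually.of_forall fun x => by simp [Complex.norm_exp_ofReal_mul_I]
    have h1 := integral_re hInteg
    have h2 := integral_im hInteg
    simp only [RCLike.re_to_complex, RCLike.im_to_complex, Complex.exp_ofReal_mul_I_re,
      Complex.exp_ofReal_mul_I_im] at h1 h2
    rw [charFun_apply]
    exact ⟨h1.symm, h2.symm⟩
  obtain ⟨μ, hμ, h⟩ := compound_poisson l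
  refine ⟨μ, hμ, fun u => ?_⟩
  have him : (charFun l u).im = 0 := by
    rw [(hexp l u).2, hl]
    refine annulus_odd d r _ fun y => ?_
    simp [wt, inner_neg_left]
  have hcint : Integrable (fun z => Real.cos ⟪z, u⟫) l :=
    Integrable.of_bound (C := 1) (by fun_prop)
      (Filter.Eventually.of_forall fun x => Real.abs_cos_le_one _)
  have hre : (charFun l u).re - l.real Set.univ
      = -(t * Psi d α u - t * r ^ (-α) * Psi d α (r • u)) := by
    have h1 : ∫ z, (1 - Real.cos ⟪z, u⟫) ∂l = l.real Set.univ - (charFun l u).re := by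
      rw [integral_sub (integrable_const _) hcint, (hexp l u).1]
      simp
    have h2 : ∫ z, (1 - Real.cos ⟪z, u⟫) ∂l = t * (Psi d α u - r ^ (-α) * Psi d α (r • u)) := by
      rw [hl, ← psi_split d hd α hα2 r hr hr1 u, ← integral_const_mul]
      congr 1; ext y
      rw [real_inner_comm]
      unfold wt
      ring
    linear_combination h1 - h2
  have hch : charFun μ u =
      ((Real.exp (-(t * Psi d α u - t * r ^ (-α) * Psi d α (r • u))) : ℝ) : ℂ) := by
    rw [h, ← hre, Complex.ofReal_exp]
    congr 1
    apply Complex.ext <;> simp [him]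
  rw [← (hexp μ u).1, ← (hexp μ u).2, hch]
  exact ⟨Complex.ofReal_re _, Complex.ofReal_im _⟩
set_option maxSynthPendingDepth 3

noncomputable def Qd (d : ℕ) (α T r : ℝ) (x : EE d) : ℝ :=
  ((2 * Real.pi) ^ d)⁻¹ * ∫ u : EE d, Real.cos ⟪x, u⟫ * Real.exp (-T * Psi d α (r • u))

lemma Qd_eq (d : ℕ) (α T r : ℝ) (hr : 0 < r) (x : EE d) :
    Qd d α T r x = (r ^ d)⁻¹ * pdens d α T (r⁻¹ • x) := by
  unfold Qd pdens
  have h := Measure.integral_comp_smul (volume : Measure (EE d))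
    (fun u => Real.cos ⟪r⁻¹ • x, u⟫ * Real.exp (-T * Psi d α u)) r
  simp only [finrank_euclideanSpace, Fintype.card_fin, smul_eq_mul,
    abs_of_pos (inv_pos.2 (pow_pos hr d))] at h
  have h2 : ∀ u : EE d, ⟪r⁻¹ • x, r • u⟫ = ⟪x, u⟫ := by
    intro u
    rw [real_inner_smul_left, real_inner_smul_right, inv_mul_cancel_left₀ hr.ne']
  simp_rw [h2] at h
  rw [h]
  ring

lemma exp_psi_int (d : ℕ) (hd : 2 ≤ d) (α : ℝ) (hα1 : 1 < α) (hα2 : α < 2) (T : ℝ) (hT : 0 < T)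
    (r : ℝ) (hr : 0 < r) : Integrable (fun u : EE d => Real.exp (-T * Psi d α (r • u))) :=
  (gS d hd α hα1 hα2 T hT).integrable.comp_smul hr.ne'

lemma dens_conv (d : ℕ) (hd : 2 ≤ d) (α : ℝ) (hα1 : 1 < α) (hα2 : α < 2) (T : ℝ) (hT : 0 < T)
    (t : ℝ) (r : ℝ) (hr : 0 < r) (htr : t * r ^ (-α) = T)
    (μ : Measure (EE d)) [IsProbabilityMeasure μ]
    (hμ : ∀ u, 
      (∫ z, Real.cos ⟪z, u⟫ ∂μ = Real.exp (-(t * Psi d α u - t * r ^ (-α) * Psi d α (r • u)))) ∧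
      ∫ z, Real.sin ⟪z, u⟫ ∂μ = 0) (y : EE d) :
    pdens d α t y = ∫ z, Qd d α T r (y - z) ∂μ := by
  have hg := exp_psi_int d hd α hα1 hα2 T hT r hr
  have hcont : Continuous (fun u : EE d => Real.exp (-T * Psi d α (r • u))) := 
    (gS d hd α hα1 hα2 T hT).continuous.comp (continuous_const_smul r)
  unfold pdens Qd
  rw [integral_const_mul]
  congr 1
  rw [integral_integral_swap]
  · congr 1; ext u
    rw [integral_mul_const]
    have hc : Integrable (fun z => Real.cos ⟪z, u⟫) μ :=
      Integrable.of_bound (C := 1) (by fun_prop)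
        (Filter.Eventually.of_forall fun x => Real.abs_cos_le_one _)
    have hs : Integrable (fun z => Real.sin ⟪z, u⟫) μ :=
      Integrable.of_bound (C := 1) (by fun_prop)
        (Filter.Eventually.of_forall fun x => Real.abs_sin_le_one _)
    simp_rw [inner_sub_left, Real.cos_sub]
    rw [integral_add (hc.const_mul _) (hs.const_mul _), integral_const_mul, integral_const_mul,
      (hμ u).1, (hμ u).2, mul_zero, add_zero, mul_assoc, ← Real.exp_add, htr]
    congr 2
    ring
  · have h2 : Integrable (fun p : EE d × EE d => Real.exp (-T * Psi d α (r • p.2)))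
        (μ.prod volume) := by
      simpa using (integrable_const (μ := μ) (1 : ℝ)).mul_prod hg
    refine h2.mono' ?_ ?_
    · apply Continuous.aestronglyMeasurable
      have := hcont.comp (continuous_snd (X := EE d))
      simp only [Function.comp_def] at this
      simp only [Function.uncurry_def]
      fun_prop
    · refine Filter.Eventually.of_forall fun p => ?_
      simp only [Function.uncurry_def]
      rw [norm_mul, Real.norm_of_nonneg (Real.exp_nonneg _)]
      exact mul_le_of_le_one_left (Real.exp_nonneg _) (Real.abs_cos_le_one _)

lemma Pt_eq (d : ℕ) (hd : 2 ≤ d) (α : ℝ) (hα1 : 1 < α) (hα2 : α < 2) (T : ℝ) (hT : 0 < T)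
    (S : SchwartzMap (EE d) ℝ) (hS : ∀ x, S x = pdens d α T x)
    (t : ℝ) (r : ℝ) (hr : 0 < r) (htr : t * r ^ (-α) = T)
    (μ : Measure (EE d)) [IsProbabilityMeasure μ]
    (hμ : ∀ u, 
      (∫ z, Real.cos ⟪z, u⟫ ∂μ = Real.exp (-(t * Psi d α u - t * r ^ (-α) * Psi d α (r • u)))) ∧
      ∫ z, Real.sin ⟪z, u⟫ ∂μ = 0)
    (φ : EE d → ℝ) (hφ : Measurable φ) (M : ℝ) (hM : ∀ x, |φ x| ≤ M) (x : EE d) :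
    Pt d α φ t x = ∫ v, (∫ z, φ (r • (r⁻¹ • x + v) + z) ∂μ) * S v := by
  have hM0 : 0 ≤ M := (abs_nonneg _).trans (hM 0)
  have hQ : Qd d α T r = fun x => (r ^ d)⁻¹ * S (r⁻¹ • x) := by
    ext x; rw [Qd_eq d α T r hr, hS]
  have hQi : Integrable (Qd d α T r) := by
    rw [hQ]
    exact (S.integrable.comp_smul (inv_ne_zero hr.ne')).const_mul _
  have hQc : Continuous (Qd d α T r) := by
    rw [hQ]
    exact continuous_const.mul (S.continuous.comp (continuous_const_smul _))
  unfold Pt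
  simp_rw [dens_conv d hd α hα1 hα2 T hT t r hr htr μ hμ, ← integral_const_mul]
  rw [integral_integral_swap]
  · have h1 : ∀ z, ∫ y, φ (x + y) * Qd d α T r (y - z) = ∫ w, φ (x + w + z) * Qd d α T r w := by
      intro z
      rw [← integral_add_right_eq_self _ z]
      simp [add_assoc]
    simp_rw [h1]
    rw [integral_integral_swap]
    · simp_rw [integral_mul_const]
      have h := Measure.integral_comp_smul (volume : Measure (EE d))
        (fun w => (∫ z, φ (x + w + z) ∂μ) * Qd d α T r w) r
      simp only [finrank_euclideanSpace, Fintype.card_fin, smul_eq_mul,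
        abs_of_pos (inv_pos.2 (pow_pos hr d))] at h
      have hrd : (r ^ d) ≠ 0 := pow_ne_zero _ hr.ne'
      rw [inv_mul_eq_div, eq_div_iff hrd] at h
      rw [← h, ← integral_mul_const]
      congr 1; ext v
      rw [hQ, smul_add, smul_inv_smul₀ hr.ne']
      beta_reduce
      rw [inv_smul_smul₀ hr.ne']
      field_simp
    · have h2 : Integrable (fun p : EE d × EE d => M * ‖Qd d α T r p.2‖) (μ.prod volume) := by
        simpa using ((integrable_const (μ := μ) (1 : ℝ)).mul_prod hQi.norm).const_mul M
      refine h2.mono' ?_ ?_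
      · apply Measurable.aestronglyMeasurable
        have := hQc.measurable
        simp only [Function.uncurry_def]
        fun_prop
      · refine Filter.Eventually.of_forall fun p => ?_
        simp only [Function.uncurry_def]
        rw [norm_mul]
        exact mul_le_mul_of_nonneg_right (hM _) (norm_nonneg _)
  · have h2 : Integrable (fun p : EE d × EE d => M * ‖Qd d α T r (p.1 - p.2)‖)
        (volume.prod μ) := by
      have := (Integrable.convolution_integrand (ContinuousLinearMap.mul ℝ ℝ)
        (integrable_const (μ := μ) (1 : ℝ)) hQi).norm.const_mul M
      simpa using this
    refine h2.mono' ?_ ?_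
    · apply Measurable.aestronglyMeasurable
      have := hQc.measurable
      simp only [Function.uncurry_def]
      fun_prop
    · refine Filter.Eventually.of_forall fun p => ?_
      simp only [Function.uncurry_def]
      rw [norm_mul]
      exact mul_le_mul_of_nonneg_right (hM _) (norm_nonneg _)
set_option maxSynthPendingDepth 3

theorem stmt_7 (d : ℕ) (hd : 2 ≤ d) (α T : ℝ) (hα1 : 1 < α) (hα2 : α < 2) (hT : 0 < T) :
    ∃ C : ℝ, ∀ φ : EuclideanSpace ℝ (Fin d) → ℝ, Measurable φ →
      ∀ M : ℝ, (∀ x, |φ x| ≤ M) →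
        ∀ t : ℝ, 0 < t → t ≤ T →
          ContDiff ℝ 1 (Pt d α φ t) ∧
          ∀ (x : EuclideanSpace ℝ (Fin d)) (i : Fin d),
            |fderiv ℝ (Pt d α φ t) x (EuclideanSpace.single i 1)| ≤
              C * M * t ^ (-(1 / α)) := by
  obtain ⟨S, hS⟩ := pdens_schwartz d hd α hα1 hα2 T hT
  obtain ⟨K, hK, hmain⟩ := grad_fixed S
  refine ⟨K * T ^ (1 / α), fun φ hφ M hM t ht htT => ?_⟩
  have hM0 : 0 ≤ M := (abs_nonneg _).trans (hM 0)
  have hα0 : 0 < α := by linarith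
  set r : ℝ := (t / T) ^ (1 / α) with hrdef
  have hr : 0 < r := by positivity
  have hr1 : r ≤ 1 := Real.rpow_le_one (by positivity) ((div_le_one hT).2 htT) (by positivity)
  have htr : t * r ^ (-α) = T := by
    rw [hrdef, ← Real.rpow_mul (by positivity)]
    have : 1 / α * -α = -1 := by field_simp
    rw [this, Real.rpow_neg_one]
    field_simp
  have hrinv : r⁻¹ = T ^ (1 / α) * t ^ (-(1 / α)) := by
    rw [hrdef, ← Real.inv_rpow (by positivity), inv_div, Real.div_rpow hT.le ht.le,
      Real.rpow_neg ht.le, div_eq_mul_inv]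
  obtain ⟨μ, hμp, hμ⟩ := jump_measure d hd α hα2 t ht r hr hr1
  let ψ : EE d → ℝ := fun v => ∫ z, φ (r • v + z) ∂μ
  have hψm : Measurable ψ := by
    have : Measurable (fun p : EE d × EE d => φ (r • p.1 + p.2)) := by fun_prop
    exact this.stronglyMeasurable.integral_prod_right.measurable
  have hψM : ∀ v, |ψ v| ≤ M := by
    intro v
    have := norm_integral_le_of_norm_le_const (μ := μ) (f := fun z => φ (r • v + z)) (C := M)
      (Filter.Eventually.of_forall fun z => hM _)
    simpa using this
  obtain ⟨hcd, hb⟩ := hmain ψ hψm M hψM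
  set F : EE d → ℝ := fun x => ∫ y, ψ (x + y) * S y with hF
  have hPt : Pt d α φ t = fun x => F (r⁻¹ • x) := by
    ext x
    exact Pt_eq d hd α hα1 hα2 T hT S hS t r hr htr μ hμ φ hφ M hM x
  rw [hPt]
  refine ⟨hcd.comp (contDiff_const_smul _), fun x i => ?_⟩
  have hd1 : HasFDerivAt (fun x => F (r⁻¹ • x))
      ((fderiv ℝ F (r⁻¹ • x)).comp (r⁻¹ • ContinuousLinearMap.id ℝ (EE d))) x := by
    have h1 : HasFDerivAt F (fderiv ℝ F (r⁻¹ • x)) (r⁻¹ • x) :=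
      (hcd.differentiable (by norm_num) _).hasFDerivAt
    exact h1.comp x ((hasFDerivAt_id x).const_smul r⁻¹)
  rw [hd1.fderiv]
  have h3 := (fderiv ℝ F (r⁻¹ • x)).le_opNorm (EuclideanSpace.single i (1 : ℝ))
  rw [EuclideanSpace.norm_single, norm_one, mul_one, Real.norm_eq_abs] at h3
  have h4 : ((fderiv ℝ F (r⁻¹ • x)).comp (r⁻¹ • ContinuousLinearMap.id ℝ (EE d)))
      (EuclideanSpace.single i 1) =
      r⁻¹ * fderiv ℝ F (r⁻¹ • x) (EuclideanSpace.single i (1 : ℝ)) := by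
    simp
  rw [h4, abs_mul, abs_of_pos (inv_pos.2 hr)]
  calc _ ≤ r⁻¹ * (K * M) := by
        gcongr
        exact h3.trans (hb _)
    _ = _ := by rw [hrinv]; ring
end

section
/- Let d ≥ 2, α ∈ (1,2), T > 0, and for 0 < t ≤ T let (P_t φ)(x) = ∫_{ℝ^d} φ(x + y) p_t(y) dy, where p_t(x) = (2π)^{−d} ∫_{ℝ^d} cos(⟨x,u⟩) e^{−tΨ(u)} du and Ψ(u) = ∫_{|y|≤1} (1 − cos(⟨u,y⟩)) |y|^{−(d+α)} dy. Then for every bounded measurable φ : ℝ^d → ℝ and every 0 < t ≤ T, P_t φ is twice continuously differentiable and there exists a constant C < ∞ (depending only on d, α, T) such that ‖D²(P_t φ)‖_∞ ≤ C ‖φ‖_∞ t^{−2/α}, where ‖D²(P_t φ)‖_∞ denotes the supremum over x ∈ ℝ^d of the norm of the Hessian matrix of P_t φ at x and ‖φ‖_∞ = sup_{x∈ℝ^d} |φ(x)|. -/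
open MeasureTheory Metric
open scoped RealInnerProductSpace

section PosFramework

variable {Ω S : Type} [MeasurableSpace Ω]

/-- `F` lies in the closed convex cone generated by the characters `χ`. -/
def PosC (μ : Measure Ω) (χ : S → Ω → ℂ) (F : Ω → ℂ) : Prop :=
  Measurable F ∧ (∃ C : ℝ, ∀ ω, ‖F ω‖ ≤ C) ∧
    ∀ h : Ω → ℂ, Integrable h μ → (∀ s, 0 ≤ (∫ ω, h ω * χ s ω ∂μ).re) →
      0 ≤ (∫ ω, h ω * F ω ∂μ).re

variable {μ : Measure Ω} {χ : S → Ω → ℂ}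

lemma integrable_mul_bdd {h F : Ω → ℂ} (hh : Integrable h μ) (hF : Measurable F)
    {C : ℝ} (hC : ∀ ω, ‖F ω‖ ≤ C) : Integrable (fun ω => h ω * F ω) μ :=
  hh.mul_bdd (c := C) hF.aestronglyMeasurable (Filter.Eventually.of_forall hC)

lemma PosC.char (hm : ∀ s, Measurable (χ s)) (hb : ∀ s ω, ‖χ s ω‖ ≤ 1) (s : S) :
    PosC μ χ (χ s) :=
  ⟨hm s, ⟨1, hb s⟩, fun _ _ h => h s⟩

lemma PosC.mul (hm : ∀ s, Measurable (χ s)) (hb : ∀ s ω, ‖χ s ω‖ ≤ 1)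
    (hmul : ∀ s s', ∃ s'', ∀ ω, χ s'' ω = χ s ω * χ s' ω) {F G : Ω → ℂ}
    (hF : PosC μ χ F) (hG : PosC μ χ G) : PosC μ χ (fun ω => F ω * G ω) := by
  obtain ⟨hFm, ⟨C, hC⟩, hFp⟩ := hF
  obtain ⟨hGm, ⟨D, hD⟩, hGp⟩ := hG
  refine ⟨hFm.mul hGm, ⟨C * D, fun ω => ?_⟩, fun h hh hs => ?_⟩
  · rw [norm_mul]
    exact mul_le_mul (hC ω) (hD ω) (norm_nonneg _) ((norm_nonneg _).trans (hC ω))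
  · have h1 : ∀ s, 0 ≤ (∫ ω, (h ω * F ω) * χ s ω ∂μ).re := by
      intro s
      have := hFp (fun ω => h ω * χ s ω) (integrable_mul_bdd hh (hm s) (hb s)) (by
        intro s'
        obtain ⟨s'', h''⟩ := hmul s s'
        have := hs s''
        simpa [h'', mul_assoc] using this)
      convert this using 4
      ring
    have := hGp _ (integrable_mul_bdd hh hFm hC) h1
    simpa [mul_assoc] using this

lemma PosC.add {F G : Ω → ℂ}
    (hF : PosC μ χ F) (hG : PosC μ χ G) : PosC μ χ (fun ω => F ω + G ω) := by
  obtain ⟨hFm, ⟨C, hC⟩, hFp⟩ := hF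
  obtain ⟨hGm, ⟨D, hD⟩, hGp⟩ := hG
  refine ⟨hFm.add hGm, ⟨C + D, fun ω => norm_add_le_of_le (hC ω) (hD ω)⟩, fun h hh hs => ?_⟩
  simp_rw [mul_add]
  rw [integral_add (integrable_mul_bdd hh hFm hC) (integrable_mul_bdd hh hGm hD), Complex.add_re]
  exact add_nonneg (hFp h hh hs) (hGp h hh hs)

lemma PosC.smul {F : Ω → ℂ} (hF : PosC μ χ F) {c : ℝ} (hc : 0 ≤ c) :
    PosC μ χ (fun ω => (c : ℂ) * F ω) := by
  obtain ⟨hFm, ⟨C, hC⟩, hFp⟩ := hF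
  refine ⟨hFm.const_mul _, ⟨c * C, fun ω => ?_⟩, fun h hh hs => ?_⟩
  · rw [norm_mul, Complex.norm_real, Real.norm_of_nonneg hc]
    exact mul_le_mul_of_nonneg_left (hC ω) hc
  · have : (∫ ω, h ω * ((c : ℂ) * F ω) ∂μ) = (c : ℂ) * ∫ ω, h ω * F ω ∂μ := by
      rw [← integral_const_mul]; congr 1; ext ω; ring
    rw [this, Complex.re_ofReal_mul]
    exact mul_nonneg hc (hFp h hh hs)

lemma PosC.lim {F : ℕ → Ω → ℂ} {G : Ω → ℂ} (hF : ∀ n, PosC μ χ (F n)) (C : ℝ)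
    (hC : ∀ n ω, ‖F n ω‖ ≤ C)
    (hlim : ∀ ω, Filter.Tendsto (fun n => F n ω) Filter.atTop (nhds (G ω))) : PosC μ χ G := by
  refine ⟨measurable_of_tendsto_metrizable (fun n => (hF n).1) (tendsto_pi_nhds.2 hlim),
    ⟨C, fun ω => le_of_tendsto (hlim ω).norm (Filter.Eventually.of_forall fun n => hC n ω)⟩,
    fun h hh hs => ?_⟩
  have : Filter.Tendsto (fun n => ∫ ω, h ω * F n ω ∂μ) Filter.atTop
      (nhds (∫ ω, h ω * G ω ∂μ)) := by
    refine tendsto_integral_of_dominated_convergence (fun ω => ‖h ω‖ * C)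
      (fun n => (integrable_mul_bdd hh (hF n).1 (hC n)).aestronglyMeasurable)
      (hh.norm.mul_const C) (fun n => Filter.Eventually.of_forall fun ω => ?_)
      (Filter.Eventually.of_forall fun ω => (hlim ω).const_mul _)
    rw [norm_mul]
    exact mul_le_mul_of_nonneg_left (hC n ω) (norm_nonneg _)
  exact ge_of_tendsto ((Complex.continuous_re.tendsto _).comp this)
    (Filter.Eventually.of_forall fun n => (hF n).2.2 h hh hs)

lemma PosC.exp (hm : ∀ s, Measurable (χ s)) (hb : ∀ s ω, ‖χ s ω‖ ≤ 1)
    (hmul : ∀ s s', ∃ s'', ∀ ω, χ s'' ω = χ s ω * χ s' ω)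
    (hone : ∃ s, ∀ ω, χ s ω = 1) {F : Ω → ℂ}
    (hF : PosC μ χ F) : PosC μ χ (fun ω => Complex.exp (F ω)) := by
  have h1 : PosC μ χ (fun _ => 1) := by
    obtain ⟨s, hs⟩ := hone
    have : χ s = fun _ => 1 := funext hs
    exact this ▸ PosC.char hm hb s
  have hpow : ∀ n : ℕ, PosC μ χ (fun ω => F ω ^ n) := by
    intro n
    induction n with
    | zero => simpa using h1
    | succ n ih => simpa [pow_succ] using PosC.mul hm hb hmul ih hF
  have h0 : PosC μ χ (fun _ => 0) := by simpa using h1.smul le_rfl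
  have hsum : ∀ n : ℕ, PosC μ χ
      (fun ω => ∑ k ∈ Finset.range n, F ω ^ k / (k.factorial : ℂ)) := by
    intro n
    induction n with
    | zero => simpa using h0
    | succ n ih =>
      simp_rw [Finset.sum_range_succ]
      refine ih.add ?_
      have := (hpow n).smul (c := ((n.factorial : ℝ))⁻¹) (by positivity)
      convert this using 2
      push_cast
      rw [div_eq_inv_mul]
  obtain ⟨C, hC⟩ := hF.2.1
  refine PosC.lim hsum (Real.exp C) (fun n ω => ?_) (fun ω => ?_)
  · refine (norm_sum_le _ _).trans ?_
    refine le_trans ?_ (Real.exp_le_exp.2 (hC ω))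
    refine le_trans (le_of_eq ?_) (Real.sum_le_exp_of_nonneg (norm_nonneg (F ω)) n)
    refine Finset.sum_congr rfl fun k _ => ?_
    simp
  · have := NormedSpace.expSeries_div_hasSum_exp (𝔸 := ℂ) (F ω)
    rw [Complex.exp_eq_exp_ℂ]
    exact this.tendsto_sum_nat

lemma PosC.mix [SFinite μ] {Y : Type} [MeasurableSpace Y] (ρ : Measure Y) [IsFiniteMeasure ρ]
    {Φ : Y → Ω → ℂ} (hΦ : ∀ y, PosC μ χ (Φ y)) (hm : Measurable (Function.uncurry Φ)) (C : ℝ)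
    (hC : ∀ y ω, ‖Φ y ω‖ ≤ C) : PosC μ χ (fun ω => ∫ y, Φ y ω ∂ρ) := by
  refine ⟨?_, ⟨C * ρ.real Set.univ, fun ω => ?_⟩, fun h hh hs => ?_⟩
  · have : StronglyMeasurable (Function.uncurry fun ω y => Φ y ω) :=
      (hm.comp measurable_swap).stronglyMeasurable
    exact this.integral_prod_right.measurable
  · exact norm_integral_le_of_norm_le_const (Filter.Eventually.of_forall fun y => hC y ω)
  · have hInt0 : Integrable (Function.uncurry fun ω y => h ω * Φ y ω) (μ.prod ρ) := by
      have := (hh.comp_fst ρ).mul_bdd (c := C)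
        (hm.comp measurable_swap).aestronglyMeasurable
        (Filter.Eventually.of_forall fun z => hC z.2 z.1)
      exact this
    have e : (∫ ω, h ω * ∫ y, Φ y ω ∂ρ ∂μ) = ∫ y, ∫ ω, h ω * Φ y ω ∂μ ∂ρ := by
      rw [← integral_integral_swap hInt0]
      simp_rw [integral_const_mul]
    rw [e]
    have : (∫ y, ∫ ω, h ω * Φ y ω ∂μ ∂ρ).re = ∫ y, (∫ ω, h ω * Φ y ω ∂μ).re ∂ρ := by
      have := integral_re (𝕜 := ℂ) hInt0.integral_prod_right
      exact this.symm
    rw [this]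
    exact integral_nonneg fun y => (hΦ y).2.2 h hh hs

end PosFramework


section GaussMB

set_option linter.unusedSectionVars false

variable {V : Type} [NormedAddCommGroup V] [InnerProductSpace ℝ V] [FiniteDimensional ℝ V]
  [MeasurableSpace V] [BorelSpace V]

/-- Gaussian density with Fourier transform `exp (-‖u‖^2)`. -/
noncomputable def gG (y : V) : ℝ :=
  ((4 * Real.pi) ^ (Module.finrank ℝ V / 2 : ℝ))⁻¹ * Real.exp (-(1/4) * ‖y‖ ^ 2)

lemma gG_pos (y : V) : 0 < gG y := by unfold gG; positivity

lemma gG_cont : Continuous (gG : V → ℝ) := by unfold gG; fun_prop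

lemma gG_integrable : Integrable (gG : V → ℝ) := by
  unfold gG
  refine Integrable.const_mul ?_ _
  have := (GaussianFourier.integrable_cexp_neg_mul_sq_norm_add (V := V) (b := 1/4) (by norm_num) 0 0).norm
  refine this.congr (Filter.Eventually.of_forall fun y => ?_)
  simp [Complex.norm_exp, ← Complex.ofReal_pow]

lemma gG_integrable_norm : Integrable (fun y : V => ‖y‖ * gG y) := by
  have h8 : Integrable (fun y : V => Real.exp (-(1/8) * ‖y‖ ^ 2)) := by
    have := (GaussianFourier.integrable_cexp_neg_mul_sq_norm_add (V := V) (b := 1/8) (by norm_num) 0 0).norm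
    refine this.congr (Filter.Eventually.of_forall fun y => ?_)
    simp [Complex.norm_exp, ← Complex.ofReal_pow]
  refine (h8.const_mul (8 * ((4 * Real.pi) ^ (Module.finrank ℝ V / 2 : ℝ))⁻¹)).mono'
    (continuous_norm.mul gG_cont).aestronglyMeasurable (Filter.Eventually.of_forall fun y => ?_)
  have hp := gG_pos y
  rw [Real.norm_of_nonneg (by positivity)]
  unfold gG
  have e : Real.exp (-(1/4) * ‖y‖ ^ 2) = Real.exp (-(1/8) * ‖y‖ ^ 2) * Real.exp (-(1/8) * ‖y‖ ^ 2) := by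
    rw [← Real.exp_add]; ring_nf
  have h1 : ‖y‖ * Real.exp (-(1/8) * ‖y‖ ^ 2) ≤ 8 := by
    have h2 : (1/8) * ‖y‖^2 + 1 ≤ Real.exp ((1/8) * ‖y‖ ^ 2) := Real.add_one_le_exp _
    have h3 : Real.exp (-(1/8) * ‖y‖ ^ 2) * Real.exp ((1/8) * ‖y‖ ^ 2) = 1 := by
      rw [← Real.exp_add]; simp
    have h4 : ‖y‖ ≤ 8 * Real.exp ((1/8) * ‖y‖ ^ 2) := by nlinarith [sq_nonneg (‖y‖ - 1), norm_nonneg y]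
    calc ‖y‖ * Real.exp (-(1/8) * ‖y‖ ^ 2)
        ≤ (8 * Real.exp ((1/8) * ‖y‖ ^ 2)) * Real.exp (-(1/8) * ‖y‖ ^ 2) := by gcongr
      _ = 8 := by rw [mul_assoc, mul_comm (Real.exp _), h3, mul_one]
  rw [e]
  have : 0 ≤ ((4 * Real.pi) ^ (Module.finrank ℝ V / 2 : ℝ))⁻¹ * Real.exp (-(1/8) * ‖y‖ ^ 2) := by positivity
  nlinarith [mul_le_mul_of_nonneg_right h1 this]

lemma gG_ft (u : V) : ∫ y : V, Complex.exp (Complex.I * ⟪u, y⟫) * (gG y : ℂ) =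
    (Real.exp (-‖u‖ ^ 2) : ℂ) := by
  have h := GaussianFourier.integral_cexp_neg_mul_sq_norm_add (V := V) (b := 1/4) (by norm_num) Complex.I u
  have e : ∀ y : V, Complex.exp (Complex.I * ⟪u, y⟫) * (gG y : ℂ) =
      (((4 * Real.pi) ^ (Module.finrank ℝ V / 2 : ℝ))⁻¹ : ℝ) *
        Complex.exp (-(1/4) * (‖y‖:ℂ) ^ 2 + Complex.I * ⟪u, y⟫) := by
    intro y
    unfold gG
    rw [Complex.exp_add]
    push_cast
    ring
  simp_rw [e]
  rw [integral_const_mul, h]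
  have e2 : ((Real.pi : ℂ) / (1/4)) ^ (Module.finrank ℝ V / 2 : ℂ) =
      (((4 * Real.pi) ^ (Module.finrank ℝ V / 2 : ℝ) : ℝ) : ℂ) := by
    rw [Complex.ofReal_cpow (by positivity)]
    push_cast
    congr 1
    ring
  rw [e2, ← mul_assoc, ← Complex.ofReal_mul, inv_mul_cancel₀ (by positivity)]
  push_cast
  rw [one_mul]
  congr 1
  rw [Complex.I_sq]; ring

lemma gG_ft_cos (u : V) : ∫ y : V, Real.cos ⟪u, y⟫ * gG y = Real.exp (-‖u‖ ^ 2) := by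
  have h := congrArg Complex.re (gG_ft u)
  rw [Complex.ofReal_re] at h
  rw [← h]
  have hi : Integrable (fun y : V => Complex.exp (Complex.I * ⟪u, y⟫) * (gG y : ℂ)) := by
    refine (gG_integrable (V := V)).mono (by
      have := gG_cont (V := V)
      exact Continuous.aestronglyMeasurable (by fun_prop)) (Filter.Eventually.of_forall fun y => ?_)
    rw [norm_mul, mul_comm Complex.I, Complex.norm_exp_ofReal_mul_I, one_mul, Complex.norm_real]
  refine Eq.trans ?_ (integral_re (𝕜 := ℂ) hi)
  congr 1
  ext y
  simp only [RCLike.re_eq_complex_re]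
  rw [Complex.re_mul_ofReal, mul_comm Complex.I, Complex.exp_ofReal_mul_I_re]

lemma gG_integral : ∫ y : V, gG y = 1 := by
  simpa using gG_ft_cos (0 : V)

lemma gG_ft_deriv (u v : V) :
    ∫ y : V, Complex.exp (Complex.I * ⟪u, y⟫) * (Complex.I * ⟪v, y⟫ * (gG y : ℂ)) =
    ((-2 * ⟪u, v⟫ * Real.exp (-‖u‖ ^ 2) : ℝ) : ℂ) := by
  have hc := gG_cont (V := V)
  have h1 : HasDerivAt (fun r : ℝ => ∫ y : V, Complex.exp (Complex.I * ⟪u + r • v, y⟫) * (gG y : ℂ))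
      (∫ y : V, Complex.exp (Complex.I * ⟪u, y⟫) * (Complex.I * ⟪v, y⟫ * (gG y : ℂ))) 0 := by
    have := (hasDerivAt_integral_of_dominated_loc_of_deriv_le (μ := (volume : Measure V))
      (F := fun (r : ℝ) y => Complex.exp (Complex.I * ⟪u + r • v, y⟫) * (gG y : ℂ))
      (F' := fun (r : ℝ) y => Complex.exp (Complex.I * ⟪u + r • v, y⟫) * (Complex.I * ⟪v, y⟫ * (gG y : ℂ)))
      (x₀ := 0) (s := Set.univ) (bound := fun y => ‖v‖ * (‖y‖ * gG y)) Filter.univ_mem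
      (Filter.Eventually.of_forall fun r => Continuous.aestronglyMeasurable (by fun_prop))
      ?_ (Continuous.aestronglyMeasurable (by fun_prop)) ?_ ?_ ?_).2
    · simpa using this
    · refine (gG_integrable (V := V)).mono (Continuous.aestronglyMeasurable (by fun_prop)) (Filter.Eventually.of_forall fun y => ?_)
      rw [norm_mul, mul_comm Complex.I, Complex.norm_exp_ofReal_mul_I, one_mul, Complex.norm_real]
    · refine Filter.Eventually.of_forall fun y r _ => ?_
      rw [norm_mul, mul_comm Complex.I, Complex.norm_exp_ofReal_mul_I, one_mul, norm_mul, norm_mul,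
        Complex.norm_real, Complex.norm_real, Complex.norm_I, one_mul, Real.norm_of_nonneg (gG_pos y).le,
        ← mul_assoc]
      exact mul_le_mul_of_nonneg_right (norm_inner_le_norm _ _) (gG_pos y).le
    · exact gG_integrable_norm.const_mul _
    · refine Filter.Eventually.of_forall fun y r _ => ?_
      have h2 : HasDerivAt (fun r : ℝ => ⟪u + r • v, y⟫) ⟪v, y⟫ r := by
        simp_rw [inner_add_left, inner_smul_left]
        simpa using ((hasDerivAt_id r).mul_const ⟪v, y⟫).const_add ⟪u, y⟫
      have h3 := ((h2.ofReal_comp.const_mul Complex.I).cexp).mul_const (gG y : ℂ)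
      exact h3.congr_deriv (by ring)
  have h2 : HasDerivAt (fun r : ℝ => ∫ y : V, Complex.exp (Complex.I * ⟪u + r • v, y⟫) * (gG y : ℂ))
      ((-2 * ⟪u, v⟫ * Real.exp (-‖u‖ ^ 2) : ℝ) : ℂ) 0 := by
    simp_rw [gG_ft]
    have : HasDerivAt (fun r : ℝ => Real.exp (-‖u + r • v‖ ^ 2)) (-2 * ⟪u, v⟫ * Real.exp (-‖u‖ ^ 2)) 0 := by
      have e : ∀ r : ℝ, -‖u + r • v‖ ^ 2 = -(‖u‖^2 + r * (2 * ⟪u, v⟫) + r^2 * ‖v‖^2) := by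
        intro r
        rw [norm_add_sq_real, inner_smul_right, norm_smul, mul_pow, Real.norm_eq_abs, sq_abs]; ring
      simp_rw [e]
      have h5 : HasDerivAt (fun r : ℝ => -(‖u‖^2 + r * (2 * ⟪u, v⟫) + r^2 * ‖v‖^2)) (-(2 * ⟪u, v⟫)) 0 := by
        have := ((((hasDerivAt_id (0:ℝ)).mul_const (2 * ⟪u, v⟫)).const_add (‖u‖^2)).add
          (((hasDerivAt_id (0:ℝ)).pow 2).mul_const (‖v‖^2))).neg
        exact this.congr_deriv (by simp)
      have := h5.exp
      convert this using 1
      simp; ring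
    exact this.ofReal_comp
  exact h1.unique h2

/-- Multipliers which are Fourier transforms of measures of total mass at most `K`. -/
def MB (m : V → ℂ) (K : ℝ) : Prop :=
  Measurable m ∧ (∃ C : ℝ, ∀ u, ‖m u‖ ≤ C) ∧
    ∀ h : V → ℂ, Integrable h → ∀ B : ℝ,
      (∀ x : V, ‖∫ u, h u * Complex.exp (Complex.I * ⟪x, u⟫)‖ ≤ B) → ‖∫ u, h u * m u‖ ≤ K * B

lemma norm_char (x u : V) : ‖Complex.exp (Complex.I * ⟪x, u⟫)‖ = 1 := by
  rw [mul_comm Complex.I, Complex.norm_exp_ofReal_mul_I]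

lemma MB.mul {m n : V → ℂ} {K L : ℝ} (hm : MB m K) (hn : MB n L) :
    MB (fun u => m u * n u) (K * L) := by
  obtain ⟨m1, ⟨C, m2⟩, m3⟩ := hm
  obtain ⟨n1, ⟨D, n2⟩, n3⟩ := hn
  refine ⟨m1.mul n1, ⟨C * D, fun ω => ?_⟩, fun h hh B hB => ?_⟩
  · rw [norm_mul]
    exact mul_le_mul (m2 ω) (n2 ω) (norm_nonneg _) ((norm_nonneg _).trans (m2 ω))
  · have := n3 (fun u => h u * m u) (integrable_mul_bdd hh m1 m2) (K * B) (fun x => by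
      have h5 := m3 (fun u => h u * Complex.exp (Complex.I * ⟪x, u⟫))
        (integrable_mul_bdd hh (by fun_prop) (fun u => (norm_char x u).le)) B (fun x' => by
          convert hB (x + x') using 4
          rw [inner_add_left]
          push_cast
          rw [mul_add, Complex.exp_add]; ring)
      convert h5 using 4
      ring)
    calc _ = ‖∫ u, h u * m u * n u‖ := by simp_rw [mul_assoc]
      _ ≤ _ := this
      _ = _ := by ring

lemma MB.mono {m : V → ℂ} {K L : ℝ} (hm : MB m K) (h : K ≤ L) : MB m L := by
  refine ⟨hm.1, hm.2.1, fun f hf B hB => (hm.2.2 f hf B hB).trans ?_⟩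
  exact mul_le_mul_of_nonneg_right h ((norm_nonneg _).trans (hB 0))

lemma MB.smul {m : V → ℂ} {K : ℝ} (hm : MB m K) (c : ℂ) : MB (fun u => c * m u) (‖c‖ * K) := by
  obtain ⟨m1, ⟨C, m2⟩, m3⟩ := hm
  refine ⟨m1.const_mul c, ⟨‖c‖ * C, fun u => ?_⟩, fun h hh B hB => ?_⟩
  · rw [norm_mul]; exact mul_le_mul_of_nonneg_left (m2 u) (norm_nonneg _)
  · have : (∫ u, h u * (c * m u)) = c * ∫ u, h u * m u := by
      rw [← integral_const_mul]; congr 1; ext; ring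
    rw [this, norm_mul, mul_assoc]
    exact mul_le_mul_of_nonneg_left (m3 h hh B hB) (norm_nonneg _)

lemma MB.mix (γ : V → ℂ) (hγ : Integrable γ) (r : ℝ) :
    MB (fun u : V => ∫ y : V, Complex.exp (Complex.I * ⟪r • u, y⟫) * γ y) (∫ y, ‖γ y‖) := by
  refine ⟨?_, ⟨∫ y, ‖γ y‖, fun u => ?_⟩, fun h hh B hB => ?_⟩
  · refine Continuous.measurable ?_
    refine continuous_of_dominated (bound := fun y => ‖γ y‖) (fun u => ?_) (fun u => ?_) hγ.norm ?_
    · exact (Continuous.aestronglyMeasurable (by fun_prop)).mul hγ.aestronglyMeasurable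
    · refine Filter.Eventually.of_forall fun y => ?_
      rw [norm_mul, norm_char, one_mul]
    · refine Filter.Eventually.of_forall fun y => ?_
      fun_prop
  · refine (norm_integral_le_integral_norm _).trans (le_of_eq ?_)
    congr 1; ext y
    rw [norm_mul, norm_char, one_mul]
  · have hInt0 : Integrable (Function.uncurry fun u y => h u * (Complex.exp (Complex.I * ⟪r • u, y⟫) * γ y))
        ((volume : Measure V).prod volume) := by
      have := (hh.mul_prod hγ).bdd_mul (c := 1) (f := fun z : V × V => Complex.exp (Complex.I * ⟪r • z.1, z.2⟫))
        (Continuous.aestronglyMeasurable (by fun_prop)) (Filter.Eventually.of_forall fun z => (norm_char _ _).le)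
      refine this.congr (Filter.Eventually.of_forall fun z => ?_)
      simp only [Function.uncurry]; ring
    have e : (∫ u, h u * ∫ y, Complex.exp (Complex.I * ⟪r • u, y⟫) * γ y) =
        ∫ y, γ y * ∫ u, h u * Complex.exp (Complex.I * ⟪r • y, u⟫) := by
      simp_rw [← integral_const_mul]
      rw [integral_integral_swap hInt0]
      congr 1; ext y; congr 1; ext u
      rw [inner_smul_left, inner_smul_left, real_inner_comm]; ring
    rw [e, ← integral_mul_const]
    refine norm_integral_le_of_norm_le (hγ.norm.mul_const B) (Filter.Eventually.of_forall fun y => ?_)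
    rw [norm_mul]
    exact mul_le_mul_of_nonneg_left (hB _) (norm_nonneg _)

lemma MB_gauss {τ : ℝ} (hτ : 0 ≤ τ) :
    MB (fun u : V => (Real.exp (-τ * ‖u‖ ^ 2) : ℂ)) 1 := by
  have h := MB.mix (V := V) (fun y => (gG y : ℂ)) gG_integrable.ofReal (Real.sqrt τ)
  simp_rw [gG_ft] at h
  have e : ∫ y : V, ‖(gG y : ℂ)‖ = 1 := by
    rw [← gG_integral (V := V)]; congr 1; ext y
    rw [Complex.norm_real, Real.norm_of_nonneg (gG_pos y).le]
  rw [e] at h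
  convert h using 4 with u
  rw [norm_smul, mul_pow, Real.norm_eq_abs, sq_abs, Real.sq_sqrt hτ]; ring

/-- constant in the gradient estimate for the Gaussian -/
noncomputable def gC (V : Type) [NormedAddCommGroup V] [InnerProductSpace ℝ V] [FiniteDimensional ℝ V]
  [MeasurableSpace V] [BorelSpace V] : ℝ := ∫ y : V, ‖y‖ * gG y

lemma gC_nonneg : 0 ≤ gC V := integral_nonneg fun y => mul_nonneg (norm_nonneg _) (gG_pos y).le

lemma MB_gauss1 {τ : ℝ} (hτ : 0 < τ) (v : V) :
    MB (fun u : V => (⟪v, u⟫ : ℂ) * (Real.exp (-τ * ‖u‖ ^ 2) : ℂ)) (gC V * ‖v‖ / Real.sqrt τ) := by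
  have hInt0 : Integrable (fun y : V => Complex.I * ⟪v, y⟫ * (gG y : ℂ)) := by
    have hc := gG_cont (V := V)
    refine (gG_integrable_norm.const_mul ‖v‖).mono' (Continuous.aestronglyMeasurable (by fun_prop))
      (Filter.Eventually.of_forall fun y => ?_)
    rw [norm_mul, norm_mul,
        Complex.norm_real, Complex.norm_real, Complex.norm_I, one_mul, Real.norm_of_nonneg (gG_pos y).le,
        ← mul_assoc]
    exact mul_le_mul_of_nonneg_right (norm_inner_le_norm _ _) (gG_pos y).le
  have h := MB.mix (V := V) _ hInt0 (Real.sqrt τ)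
  simp_rw [gG_ft_deriv] at h
  have hs : 0 < Real.sqrt τ := Real.sqrt_pos.2 hτ
  have h2 := h.smul (((-(2 * Real.sqrt τ)⁻¹ : ℝ)) : ℂ)
  have hK : ∫ y : V, ‖Complex.I * ⟪v, y⟫ * (gG y : ℂ)‖ ≤ ‖v‖ * gC V := by
    unfold gC
    rw [← integral_const_mul]
    refine integral_mono hInt0.norm (gG_integrable_norm.const_mul ‖v‖) fun y => ?_
    simp only
    rw [norm_mul, norm_mul,
        Complex.norm_real, Complex.norm_real, Complex.norm_I, one_mul, Real.norm_of_nonneg (gG_pos y).le,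
        ← mul_assoc]
    exact mul_le_mul_of_nonneg_right (norm_inner_le_norm _ _) (gG_pos y).le
  have h3 : MB (fun u : V => (⟪v, u⟫ : ℂ) * (Real.exp (-τ * ‖u‖ ^ 2) : ℂ)) 
     (‖(((-(2 * Real.sqrt τ)⁻¹ : ℝ)) : ℂ)‖ * ∫ y : V, ‖Complex.I * ⟪v, y⟫ * (gG y : ℂ)‖) := by
    convert h2 using 2 with u
    rw [← Complex.ofReal_mul, ← Complex.ofReal_mul]
    congr 1
    rw [norm_smul, mul_pow, Real.norm_eq_abs, sq_abs, Real.sq_sqrt hτ.le, inner_smul_left, real_inner_comm]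
    simp
    field_simp
  refine h3.mono ?_
  rw [Complex.norm_real, norm_neg, norm_inv, Real.norm_of_nonneg (by positivity)]
  have : 0 ≤ gC V := gC_nonneg
  calc _ ≤ (2 * Real.sqrt τ)⁻¹ * (‖v‖ * gC V) := by gcongr
    _ ≤ (Real.sqrt τ)⁻¹ * (‖v‖ * gC V) := by
      gcongr
      linarith
    _ = _ := by field_simp

lemma MB_gauss2 {τ : ℝ} (hτ : 0 < τ) (v w : V) :
    MB (fun u : V => ((⟪v, u⟫ : ℂ) * ⟪w, u⟫) * (Real.exp (-τ * ‖u‖ ^ 2) : ℂ))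
      (2 * gC V ^ 2 * ‖v‖ * ‖w‖ / τ) := by
  have h := (MB_gauss1 (half_pos hτ) v).mul (MB_gauss1 (half_pos hτ) w)
  convert h using 2 with u
  · have : (Real.exp (-τ * ‖u‖ ^ 2) : ℂ) = (Real.exp (-(τ/2) * ‖u‖ ^ 2) : ℂ) * (Real.exp (-(τ/2) * ‖u‖ ^ 2) : ℂ) := by
      rw [← Complex.ofReal_mul, ← Real.exp_add]; ring_nf
    rw [this]; ring
  · rw [div_mul_div_comm, Real.mul_self_sqrt (half_pos hτ).le]
    field_simp

end GaussMB


section PsiPart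

set_option linter.unusedSectionVars false

/-- the Bernstein function `c x^β` as an integral -/
noncomputable def psi1 (β l : ℝ) : ℝ := ∫ s in Set.Ioi (0:ℝ), (1 - Real.exp (-s * l)) * s ^ (-1 - β)

lemma psi1_nonneg_integrand {β l s : ℝ} (hl : 0 ≤ l) (hs : 0 < s) :
    0 ≤ (1 - Real.exp (-s * l)) * s ^ (-1 - β) := by
  have : Real.exp (-s * l) ≤ 1 := Real.exp_le_one_iff.2 (by nlinarith)
  have := Real.rpow_pos_of_pos hs (-1 - β)
  apply mul_nonneg <;> linarith

lemma psi1_integrable {β l : ℝ} (hβ : 0 < β) (hβ1 : β < 1) (hl : 0 ≤ l) :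
    IntegrableOn (fun s => (1 - Real.exp (-s * l)) * s ^ (-1 - β)) (Set.Ioi (0:ℝ)) := by
  have hmeas : Measurable (fun s : ℝ => (1 - Real.exp (-s * l)) * s ^ (-1 - β)) := by fun_prop
  rw [← Set.Ioo_union_Ici_eq_Ioi (zero_lt_one' ℝ)]
  refine IntegrableOn.union ?_ ?_
  · have h : IntegrableOn (fun s : ℝ => l * s ^ (-β)) (Set.Ioo 0 1) := by
      refine Integrable.const_mul ?_ l
      exact (intervalIntegral.integrableOn_Ioo_rpow_iff zero_lt_one).2 (by linarith)
    refine Integrable.mono' h hmeas.aestronglyMeasurable ?_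
    refine (ae_restrict_iff' measurableSet_Ioo).2 (Filter.Eventually.of_forall fun s hs => ?_)
    rw [Real.norm_of_nonneg (psi1_nonneg_integrand hl hs.1)]
    have h1 : 1 - Real.exp (-s * l) ≤ s * l := by linarith [Real.add_one_le_exp (-s * l)]
    have h2 : s ^ (-β) = s * s ^ (-1 - β) := by
      rw [← Real.rpow_one_add' hs.1.le (by linarith)]; congr 1; ring
    rw [h2]
    have := Real.rpow_pos_of_pos hs.1 (-1 - β)
    nlinarith [mul_le_mul_of_nonneg_right h1 this.le]
  · have h : IntegrableOn (fun s : ℝ => s ^ (-1-β)) (Set.Ici 1) := by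
      rw [integrableOn_Ici_iff_integrableOn_Ioi]
      exact integrableOn_Ioi_rpow_of_lt (by linarith) zero_lt_one
    refine Integrable.mono' h hmeas.aestronglyMeasurable ?_
    refine (ae_restrict_iff' measurableSet_Ici).2 (Filter.Eventually.of_forall fun s hs => ?_)
    have hs0 : 0 < s := lt_of_lt_of_le zero_lt_one hs
    rw [Real.norm_of_nonneg (psi1_nonneg_integrand hl hs0)]
    have := Real.rpow_pos_of_pos hs0 (-1 - β)
    nlinarith [Real.exp_pos (-s * l)]

lemma psi1_zero (β : ℝ) : psi1 β 0 = 0 := by simp [psi1]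

lemma psi1_scale {β l : ℝ} (hl : 0 < l) : psi1 β l = l ^ β * psi1 β 1 := by
  unfold psi1
  have h := integral_comp_mul_left_Ioi' (fun s : ℝ => (1 - Real.exp (-s * 1)) * s ^ (-1 - β)) 0 hl
  rw [mul_zero] at h
  rw [← h, smul_eq_mul, ← mul_assoc, ← integral_const_mul]
  refine setIntegral_congr_fun measurableSet_Ioi fun s hs => ?_
  rw [Real.mul_rpow hl.le (le_of_lt hs)]
  have : l ^ β * l * l ^ (-1 - β) = 1 := by
    rw [← Real.rpow_add_one hl.ne', ← Real.rpow_add hl]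
    rw [show β + 1 + (-1 - β) = 0 by ring, Real.rpow_zero]
  have e : -s * l = -(l * s) * 1 := by ring
  rw [e]
  linear_combination (-(1 - Real.exp (-(l * s) * 1)) * s ^ (-1 - β)) * this

lemma psi1_eq {β l : ℝ} (hβ : 0 < β) (hl : 0 ≤ l) : psi1 β l = l ^ β * psi1 β 1 := by
  rcases hl.eq_or_lt with rfl | h
  · rw [psi1_zero, Real.zero_rpow hβ.ne', zero_mul]
  · exact psi1_scale h

lemma psi1_pos {β l : ℝ} (hβ : 0 < β) (hβ1 : β < 1) (hl : 0 < l) : 0 < psi1 β l := by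
  unfold psi1
  rw [setIntegral_pos_iff_support_of_nonneg_ae ?_ (psi1_integrable hβ hβ1 hl.le)]
  · have : Set.Ioi (0:ℝ) ⊆ Function.support (fun s : ℝ => (1 - Real.exp (-s * l)) * s ^ (-1 - β)) ∩ Set.Ioi 0 := by
      intro s hs
      refine ⟨?_, hs⟩
      have hs : 0 < s := hs
      have h1 : Real.exp (-s * l) < 1 := Real.exp_lt_one_iff.2 (by nlinarith)
      have := Real.rpow_pos_of_pos hs (-1 - β)
      exact (mul_pos (by linarith) this).ne'
    refine lt_of_lt_of_le ?_ (measure_mono this)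
    simp
  · exact (ae_restrict_iff' measurableSet_Ioi).2 (Filter.Eventually.of_forall fun s hs => psi1_nonneg_integrand hl.le hs)

lemma lintegral_scale {c : ℝ} (hc : 0 < c) {f : ℝ → ENNReal} (hf : Measurable f) :
    ∫⁻ s in Set.Ioi (0:ℝ), f s = ENNReal.ofReal c * ∫⁻ r in Set.Ioi (0:ℝ), f (c * r) := by
  rw [← lintegral_indicator measurableSet_Ioi, ← lintegral_indicator measurableSet_Ioi]
  conv_lhs => rw [← Real.smul_map_volume_mul_left hc.ne']
  rw [lintegral_smul_measure, lintegral_map (hf.indicator measurableSet_Ioi) (by fun_prop),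
    abs_of_pos hc, smul_eq_mul]
  congr 2
  ext r
  simp only [Set.indicator, Set.mem_Ioi, mul_pos_iff_of_pos_left hc]

variable {V : Type} [NormedAddCommGroup V] [InnerProductSpace ℝ V] [FiniteDimensional ℝ V]
  [MeasurableSpace V] [BorelSpace V]

lemma one_sub_cos_nonneg (x : ℝ) : 0 ≤ 1 - Real.cos x := by linarith [Real.cos_le_one x]

lemma one_sub_cos_int (u : V) : Integrable (fun y : V => (1 - Real.cos ⟪u, y⟫) * gG y) :=
  (gG_integrable (V := V)).bdd_mul (c := 2) (Continuous.aestronglyMeasurable (by fun_prop))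
    (Filter.Eventually.of_forall fun y => by
      rw [Real.norm_of_nonneg (one_sub_cos_nonneg _)]; linarith [Real.neg_one_le_cos ⟪u, y⟫])

lemma one_sub_exp_eq (u : V) {s : ℝ} (hs : 0 < s) :
    ENNReal.ofReal (1 - Real.exp (-s * ‖u‖ ^ 2)) =
      ∫⁻ z : V, ENNReal.ofReal (((Real.sqrt s) ^ (Module.finrank ℝ V))⁻¹ *
        ((1 - Real.cos ⟪u, z⟫) * gG ((Real.sqrt s)⁻¹ • z))) := by
  have hq : 0 < Real.sqrt s := Real.sqrt_pos.2 hs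
  have h1 : 1 - Real.exp (-s * ‖u‖ ^ 2) = ∫ y : V, (1 - Real.cos ⟪Real.sqrt s • u, y⟫) * gG y := by
    have e : ∀ y : V, (1 - Real.cos ⟪Real.sqrt s • u, y⟫) * gG y =
      gG y - Real.cos ⟪Real.sqrt s • u, y⟫ * gG y := fun y => by ring
    simp_rw [e]
    rw [integral_sub gG_integrable, gG_integral, gG_ft_cos, norm_smul, mul_pow, Real.norm_eq_abs, sq_abs,
      Real.sq_sqrt hs.le]
    · ring_nf
    · exact (gG_integrable (V := V)).bdd_mul (c := 1) (Continuous.aestronglyMeasurable (by fun_prop))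
        (Filter.Eventually.of_forall fun y => by
          rw [Real.norm_eq_abs]; exact Real.abs_cos_le_one _)
  have h2 := Measure.integral_comp_smul (volume : Measure V)
    (fun z : V => (1 - Real.cos ⟪u, z⟫) * gG ((Real.sqrt s)⁻¹ • z)) (Real.sqrt s)
  have e3 : ∀ y : V, (1 - Real.cos ⟪u, Real.sqrt s • y⟫) * gG ((Real.sqrt s)⁻¹ • Real.sqrt s • y) =
    (1 - Real.cos ⟪Real.sqrt s • u, y⟫) * gG y := by
    intro y
    rw [smul_smul, inv_mul_cancel₀ hq.ne', one_smul, inner_smul_left, inner_smul_right]; rfl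
  simp_rw [e3] at h2
  rw [h1, h2, smul_eq_mul, ← integral_const_mul, abs_of_pos (by positivity),
    ofReal_integral_eq_lintegral_ofReal]
  · refine Integrable.const_mul ?_ _
    have h4 := one_sub_cos_int (Real.sqrt s • u : V)
    have := h4.comp_smul (R := (Real.sqrt s)⁻¹) (by positivity)
    refine this.congr (Filter.Eventually.of_forall fun y => ?_)
    simp only
    rw [← e3, smul_smul, mul_inv_cancel₀ hq.ne', one_smul]
  · refine Filter.Eventually.of_forall fun y => ?_
    have := one_sub_cos_nonneg ⟪u, y⟫
    have := gG_pos ((Real.sqrt s)⁻¹ • y)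
    simp only [Pi.zero_apply]
    positivity

/-- radial profile constant -/
noncomputable def kap (V : Type) [NormedAddCommGroup V] [InnerProductSpace ℝ V] (β : ℝ) : ENNReal :=
  ∫⁻ r in Set.Ioi (0:ℝ), ENNReal.ofReal (r ^ (-1-β) * (((Real.sqrt r) ^ (Module.finrank ℝ V))⁻¹ *
     (((4 * Real.pi) ^ (Module.finrank ℝ V / 2 : ℝ))⁻¹ * Real.exp (-(1/4) * r⁻¹))))

lemma kap_ne_zero (β : ℝ) : kap V β ≠ 0 := by
  unfold kap
  rw [← pos_iff_ne_zero, setLIntegral_pos_iff (by fun_prop)]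
  have : Set.Ioi (0:ℝ) ⊆ Function.support (fun r : ℝ => ENNReal.ofReal (r ^ (-1-β) * (((Real.sqrt r) ^ (Module.finrank ℝ V))⁻¹ *
     (((4 * Real.pi) ^ (Module.finrank ℝ V / 2 : ℝ))⁻¹ * Real.exp (-(1/4) * r⁻¹))))) ∩ Set.Ioi 0 := by
    intro s hs
    refine ⟨?_, hs⟩
    have hs : 0 < s := hs
    simp only [Function.mem_support, ne_eq, ENNReal.ofReal_eq_zero, not_le]
    have := Real.sqrt_pos.2 hs
    positivity
  refine lt_of_lt_of_le ?_ (measure_mono this)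
  simp

lemma radial (β : ℝ) {z : V} (hz : z ≠ 0) :
    ∫⁻ s in Set.Ioi (0:ℝ), ENNReal.ofReal (s ^ (-1-β) * (((Real.sqrt s) ^ (Module.finrank ℝ V))⁻¹ *
      gG ((Real.sqrt s)⁻¹ • z))) =
    ENNReal.ofReal ((‖z‖ ^ ((Module.finrank ℝ V : ℝ) + 2 * β))⁻¹) * kap V β := by
  have hz0 : 0 < ‖z‖ := norm_pos_iff.2 hz
  have hgm : Measurable (gG : V → ℝ) := gG_cont.measurable
  rw [lintegral_scale (c := ‖z‖ ^ 2) (by positivity) (by fun_prop)]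
  unfold kap
  rw [← lintegral_const_mul _ (by fun_prop), ← lintegral_const_mul _ (by fun_prop)]
  refine setLIntegral_congr_fun measurableSet_Ioi fun r hr => ?_
  have hr : 0 < r := hr
  rw [← ENNReal.ofReal_mul (by positivity), ← ENNReal.ofReal_mul (by positivity)]
  congr 1
  have hsq : Real.sqrt (‖z‖ ^ 2 * r) = ‖z‖ * Real.sqrt r := by
    rw [Real.sqrt_mul (by positivity), Real.sqrt_sq hz0.le]
  have hq : 0 < Real.sqrt r := Real.sqrt_pos.2 hr
  unfold gG
  rw [hsq, norm_smul, norm_inv, Real.norm_of_nonneg (by positivity)]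
  have e1 : ((‖z‖ * Real.sqrt r)⁻¹ * ‖z‖) ^ 2 = r⁻¹ := by
    rw [mul_inv, mul_right_comm, inv_mul_cancel₀ hz0.ne', one_mul, inv_pow, Real.sq_sqrt hr.le]
  rw [e1, Real.mul_rpow (by positivity) hr.le, mul_pow]
  have e2 : (‖z‖ ^ ((Module.finrank ℝ V : ℝ) + 2 * β))⁻¹ = ‖z‖ ^ 2 * (‖z‖ ^ 2) ^ (-1-β) * (‖z‖ ^ Module.finrank ℝ V)⁻¹ := by
    rw [← Real.rpow_natCast ‖z‖ (Module.finrank ℝ V), ← Real.rpow_neg hz0.le, ← Real.rpow_neg hz0.le,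
      ← Real.rpow_natCast ‖z‖ 2, ← Real.rpow_mul hz0.le, ← Real.rpow_add hz0, ← Real.rpow_add hz0]
    congr 1
    push_cast; ring
  rw [e2, mul_inv]
  ring

lemma psi_lintegral {β : ℝ} (hβ : 0 < β) (hβ1 : β < 1) (hV : 0 < Module.finrank ℝ V) (u : V) :
    ENNReal.ofReal (psi1 β (‖u‖ ^ 2)) =
      kap V β * ∫⁻ y : V, ENNReal.ofReal ((1 - Real.cos ⟪u, y⟫) / ‖y‖ ^ ((Module.finrank ℝ V : ℝ) + 2 * β)) := by
  have hgm : Measurable (gG : V → ℝ) := gG_cont.measurable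
  have : Nontrivial V := Module.nontrivial_of_finrank_pos hV
  unfold psi1
  rw [ofReal_integral_eq_lintegral_ofReal (psi1_integrable hβ hβ1 (by positivity))
    ((ae_restrict_iff' measurableSet_Ioi).2 (Filter.Eventually.of_forall fun s hs => psi1_nonneg_integrand (by positivity) hs))]
  calc _ = ∫⁻ s in Set.Ioi (0:ℝ), ∫⁻ z : V, ENNReal.ofReal (1 - Real.cos ⟪u, z⟫) *
        ENNReal.ofReal (s ^ (-1-β) * (((Real.sqrt s) ^ (Module.finrank ℝ V))⁻¹ *
      gG ((Real.sqrt s)⁻¹ • z))) := by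
        refine setLIntegral_congr_fun measurableSet_Ioi fun s hs => ?_
        have hs : 0 < s := hs
        have hq := Real.sqrt_pos.2 hs
        rw [mul_comm, ENNReal.ofReal_mul (by positivity), one_sub_exp_eq u hs, ← lintegral_const_mul _ (by fun_prop)]
        congr 1
        ext z
        rw [← ENNReal.ofReal_mul (by positivity), ← ENNReal.ofReal_mul (one_sub_cos_nonneg _)]
        congr 1
        ring
    _ = ∫⁻ z : V, ∫⁻ s in Set.Ioi (0:ℝ), ENNReal.ofReal (1 - Real.cos ⟪u, z⟫) *
        ENNReal.ofReal (s ^ (-1-β) * (((Real.sqrt s) ^ (Module.finrank ℝ V))⁻¹ *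
      gG ((Real.sqrt s)⁻¹ • z))) := by
        refine lintegral_lintegral_swap ?_
        refine Measurable.aemeasurable ?_
        simp only [Function.uncurry_def]
        fun_prop
    _ = ∫⁻ z : V, kap V β * ENNReal.ofReal ((1 - Real.cos ⟪u, z⟫) / ‖z‖ ^ ((Module.finrank ℝ V : ℝ) + 2 * β)) := by
        refine lintegral_congr_ae ?_
        have : ∀ᵐ z : V, z ≠ 0 := by
          simp [ae_iff, measure_singleton]
        filter_upwards [this] with z hz
        rw [lintegral_const_mul _ (by fun_prop), radial β hz, ← mul_assoc,
          ← ENNReal.ofReal_mul (one_sub_cos_nonneg _), mul_comm, div_eq_mul_inv]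
    _ = _ := by
        rw [lintegral_const_mul _ (by fun_prop)]

lemma psi_identity {β : ℝ} (hβ : 0 < β) (hβ1 : β < 1) (hV : 0 < Module.finrank ℝ V) :
    ∃ κ : ℝ, 0 < κ ∧ ∀ u : V,
      Integrable (fun y : V => (1 - Real.cos ⟪u, y⟫) / ‖y‖ ^ ((Module.finrank ℝ V : ℝ) + 2 * β)) ∧
      ∫ y : V, (1 - Real.cos ⟪u, y⟫) / ‖y‖ ^ ((Module.finrank ℝ V : ℝ) + 2 * β) = κ * psi1 β (‖u‖ ^ 2) := by
  have : Nontrivial V := Module.nontrivial_of_finrank_pos hV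
  have h := psi_lintegral (V := V) hβ hβ1 hV
  have hk0 := kap_ne_zero (V := V) β
  have hkt : kap V β ≠ ⊤ := by
    intro hk
    obtain ⟨u, hu⟩ := exists_ne (0 : V)
    have hu' : 0 < ‖u‖ := norm_pos_iff.2 hu
    have h1 := h u
    have hp := psi1_pos (l := ‖u‖ ^ 2) hβ hβ1 (by positivity)
    rw [hk] at h1
    by_cases h0 : (∫⁻ y : V, ENNReal.ofReal ((1 - Real.cos ⟪u, y⟫) / ‖y‖ ^ ((Module.finrank ℝ V : ℝ) + 2 * β))) = 0
    · rw [h0, mul_zero, ENNReal.ofReal_eq_zero] at h1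
      linarith
    · rw [ENNReal.top_mul h0] at h1
      exact ENNReal.ofReal_ne_top h1
  have hkpos : 0 < (kap V β).toReal := ENNReal.toReal_pos hk0 hkt
  refine ⟨((kap V β).toReal)⁻¹, by positivity, fun u => ?_⟩
  have hnn : 0 ≤ᵐ[volume] fun y : V => (1 - Real.cos ⟪u, y⟫) / ‖y‖ ^ ((Module.finrank ℝ V : ℝ) + 2 * β) :=
    Filter.Eventually.of_forall fun y => div_nonneg (one_sub_cos_nonneg _) (by positivity)
  have hmeas : AEStronglyMeasurable (fun y : V => (1 - Real.cos ⟪u, y⟫) / ‖y‖ ^ ((Module.finrank ℝ V : ℝ) + 2 * β)) volume :=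
    Measurable.aestronglyMeasurable (by fun_prop)
  have hInt0 : Integrable (fun y : V => (1 - Real.cos ⟪u, y⟫) / ‖y‖ ^ ((Module.finrank ℝ V : ℝ) + 2 * β)) := by
    refine ⟨hmeas, ?_⟩
    rw [hasFiniteIntegral_iff_ofReal hnn]
    have h1 := h u
    by_contra hcon
    rw [not_lt_top_iff.1 hcon, ENNReal.mul_top hk0] at h1
    exact ENNReal.ofReal_ne_top h1
  refine ⟨hInt0, ?_⟩
  have h1 := congrArg ENNReal.toReal (h u)
  have hp : 0 ≤ psi1 β (‖u‖ ^ 2) := setIntegral_nonneg measurableSet_Ioi fun s hs => psi1_nonneg_integrand (by positivity) hs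
  rw [ENNReal.toReal_ofReal hp, ENNReal.toReal_mul, ← integral_eq_lintegral_of_nonneg_ae hnn hmeas] at h1
  rw [h1, ← mul_assoc, inv_mul_cancel₀ hkpos.ne', one_mul]

end PsiPart


section KeyPart

set_option linter.unusedSectionVars false

variable {V : Type} [NormedAddCommGroup V] [InnerProductSpace ℝ V] [FiniteDimensional ℝ V]
  [MeasurableSpace V] [BorelSpace V]

/-- base measure on `V ⊕ ℝ` -/
noncomputable def mSum (μ : Measure ℝ) : Measure (V ⊕ ℝ) :=
  (volume : Measure V).map Sum.inl + μ.map Sum.inr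

instance (μ : Measure ℝ) [SFinite μ] : SFinite (mSum (V := V) μ) := by
  unfold mSum; infer_instance

lemma emb_inl : MeasurableEmbedding (Sum.inl : V → V ⊕ ℝ) :=
  ⟨Sum.inl_injective, measurable_inl, fun _ hs => measurableSet_inl_image.2 hs⟩

lemma emb_inr : MeasurableEmbedding (Sum.inr : ℝ → V ⊕ ℝ) :=
  ⟨Sum.inr_injective, measurable_inr, fun _ hs => measurableSet_inr_image.2 hs⟩

lemma mSum_integrable {μ : Measure ℝ} {f : V → ℂ} {g : ℝ → ℂ} (hf : Integrable f) (hg : Integrable g μ) :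
    Integrable (Sum.elim f g) (mSum μ) := by
  unfold mSum
  refine Integrable.add_measure ?_ ?_
  · exact (emb_inl.integrable_map_iff).2 hf
  · exact (emb_inr.integrable_map_iff).2 hg

lemma mSum_integral {μ : Measure ℝ} {H : V ⊕ ℝ → ℂ} (hf : Integrable (fun u => H (Sum.inl u)))
    (hg : Integrable (fun l => H (Sum.inr l)) μ) :
    ∫ ω, H ω ∂(mSum μ) = (∫ u, H (Sum.inl u)) + ∫ l, H (Sum.inr l) ∂μ := by
  unfold mSum
  rw [integral_add_measure, emb_inl.integral_map, emb_inr.integral_map]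
  · exact (emb_inl.integrable_map_iff).2 hf
  · exact (emb_inr.integrable_map_iff).2 hg

/-- index set of the characters -/
abbrev SInd (V : Type) : Type := {s : ℝ // 0 ≤ s} × V × {c : ℂ // ‖c‖ ≤ 1}

/-- characters on `V ⊕ ℝ` -/
noncomputable def chi (p : SInd V) : V ⊕ ℝ → ℂ :=
  Sum.elim (fun u => (p.2.2 : ℂ) * (Real.exp (-p.1 * ‖u‖ ^ 2) : ℂ) * Complex.exp (Complex.I * ⟪p.2.1, u⟫))
    (fun l => (Real.exp (-p.1 * |l|) : ℂ))

lemma chi_meas (p : SInd V) : Measurable (chi p) := by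
  unfold chi
  exact Measurable.sumElim (by fun_prop) (by fun_prop)

lemma chi_bdd (p : SInd V) (ω : V ⊕ ℝ) : ‖chi p ω‖ ≤ 1 := by
  have hp := p.1.2
  have hc := p.2.2.2
  unfold chi
  rcases ω with u | l
  · simp only [Sum.elim_inl]
    rw [norm_mul, norm_mul, norm_char, mul_one, Complex.norm_real, Real.norm_of_nonneg (Real.exp_pos _).le]
    have : Real.exp (-p.1 * ‖u‖ ^ 2) ≤ 1 := Real.exp_le_one_iff.2 (by nlinarith [sq_nonneg ‖u‖])
    exact mul_le_one₀ hc (Real.exp_pos _).le this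
  · simp only [Sum.elim_inr]
    rw [Complex.norm_real, Real.norm_of_nonneg (Real.exp_pos _).le]
    exact Real.exp_le_one_iff.2 (by nlinarith [abs_nonneg l])

lemma chi_mul (p q : SInd V) : ∃ r : SInd V, ∀ ω, chi r ω = chi p ω * chi q ω := by
  refine ⟨⟨⟨p.1 + q.1, add_nonneg p.1.2 q.1.2⟩, p.2.1 + q.2.1, ⟨p.2.2 * q.2.2, ?_⟩⟩, fun ω => ?_⟩
  · rw [norm_mul]; exact mul_le_one₀ p.2.2.2 (norm_nonneg _) q.2.2.2
  · unfold chi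
    rcases ω with u | l
    · simp only [Sum.elim_inl]
      rw [inner_add_left]
      push_cast
      rw [mul_add, Complex.exp_add, neg_add, add_mul, Complex.exp_add]
      ring
    · simp only [Sum.elim_inr]
      push_cast
      rw [neg_add, add_mul, Complex.exp_add]

lemma chi_one : ∃ p : SInd V, ∀ ω, chi p ω = 1 := by
  refine ⟨⟨⟨0, le_rfl⟩, 0, ⟨1, by simp⟩⟩, fun ω => ?_⟩
  rcases ω with u | l <;> simp [chi]

/-- the quadratic variable on `V ⊕ ℝ` -/
noncomputable def ell : V ⊕ ℝ → ℝ := Sum.elim (fun u => ‖u‖ ^ 2) (fun l => |l|)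

lemma ell_nonneg (ω : V ⊕ ℝ) : 0 ≤ ell ω := by
  rcases ω with u | l <;> simp [ell]

lemma ell_meas : Measurable (ell : V ⊕ ℝ → ℝ) := by
  unfold ell
  exact Measurable.sumElim (by fun_prop) (by fun_prop)

lemma pos_gauss (μ : Measure ℝ) (s : ℝ) (hs : 0 ≤ s) :
    PosC (mSum (V := V) μ) chi (fun ω => (Real.exp (-s * ell ω) : ℂ)) := by
  have h := PosC.char (μ := mSum (V := V) μ) chi_meas chi_bdd (⟨⟨s, hs⟩, 0, ⟨1, by simp⟩⟩ : SInd V)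
  have h2 : chi (⟨⟨s, hs⟩, 0, ⟨1, by simp⟩⟩ : SInd V) = fun ω => (Real.exp (-s * ell ω) : ℂ) := by
    ext ω
    rcases ω with u | l <;> simp [chi, ell]
  rw [h2] at h
  exact h

lemma pos_gauss_bdd (s : ℝ) (hs : 0 ≤ s) (ω : V ⊕ ℝ) : ‖(Real.exp (-s * ell ω) : ℂ)‖ ≤ 1 := by
  rw [Complex.norm_real, Real.norm_of_nonneg (Real.exp_pos _).le]
  exact Real.exp_le_one_iff.2 (by nlinarith [ell_nonneg ω])

lemma pos_gauss_meas : Measurable (Function.uncurry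
    fun (s : ℝ) (ω : V ⊕ ℝ) => (Real.exp (-(max s 0) * ell ω) : ℂ)) := by
  have := ell_meas (V := V)
  unfold Function.uncurry
  fun_prop

lemma pos_stable (μ : Measure ℝ) [SFinite μ] {β : ℝ} (hβ : 0 < β) (hβ1 : β < 1) {a : ℝ} (ha : 0 ≤ a) :
    PosC (mSum (V := V) μ) chi (fun ω => (Real.exp (-a * psi1 β (ell ω)) : ℂ)) := by
  set e : ℕ → ℝ := fun n => 1 / ((n : ℝ) + 1) with he
  have epos : ∀ n, 0 < e n := fun n => by positivity
  have hInt0 : ∀ n, IntegrableOn (fun s : ℝ => s ^ (-1-β)) (Set.Ioi (e n)) := fun n =>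
    integrableOn_Ioi_rpow_of_lt (by linarith) (epos n)
  have hint2 : ∀ n, ∀ ω : V ⊕ ℝ, IntegrableOn (fun s : ℝ => Real.exp (-s * ell ω) * s ^ (-1-β)) (Set.Ioi (e n)) := by
    intro n ω
    refine Integrable.mono' (hInt0 n) (Measurable.aestronglyMeasurable (by fun_prop)) ?_
    refine (ae_restrict_iff' measurableSet_Ioi).2 (Filter.Eventually.of_forall fun s hs => ?_)
    have hs0 : 0 < s := (epos n).trans hs
    rw [norm_mul, Real.norm_of_nonneg (Real.exp_pos _).le, Real.norm_of_nonneg (by positivity)]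
    have : Real.exp (-s * ell ω) ≤ 1 := Real.exp_le_one_iff.2 (by nlinarith [ell_nonneg ω])
    exact mul_le_of_le_one_left (by positivity) this
  -- mixture
  have hA : ∀ n, PosC (mSum (V := V) μ) chi
      (fun ω => ((∫ s in Set.Ioi (e n), Real.exp (-s * ell ω) * s ^ (-1-β) : ℝ) : ℂ)) := by
    intro n
    have hfin : IsFiniteMeasure ((volume.restrict (Set.Ioi (e n))).withDensity
        (fun s : ℝ => ENNReal.ofReal (s ^ (-1-β)))) := isFiniteMeasure_withDensity_ofReal (hInt0 n).2
    have h1 := PosC.mix (μ := mSum (V := V) μ) (χ := chi) ((volume.restrict (Set.Ioi (e n))).withDensity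
        (fun s : ℝ => ENNReal.ofReal (s ^ (-1-β))))
      (Φ := fun (s : ℝ) (ω : V ⊕ ℝ) => (Real.exp (-(max s 0) * ell ω) : ℂ))
      (fun s => pos_gauss μ _ (le_max_right _ _)) (pos_gauss_meas) 1 (fun s ω => pos_gauss_bdd _ (le_max_right _ _) _)
    have h2 : (fun ω : V ⊕ ℝ => ((∫ s in Set.Ioi (e n), Real.exp (-s * ell ω) * s ^ (-1-β) : ℝ) : ℂ)) =
        fun ω => ∫ s, (Real.exp (-(max s 0) * ell ω) : ℂ) ∂((volume.restrict (Set.Ioi (e n))).withDensity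
        (fun s : ℝ => ENNReal.ofReal (s ^ (-1-β)))) := by
      ext ω
      rw [← integral_complex_ofReal, integral_withDensity_eq_integral_toReal_smul (by fun_prop) (by simp)]
      refine setIntegral_congr_fun measurableSet_Ioi fun s hs => ?_
      have hs0 : 0 < s := (epos n).trans hs
      rw [ENNReal.toReal_ofReal (by positivity), max_eq_left hs0.le, Complex.real_smul]
      push_cast
      ring
    rw [h2]
    exact h1
  have hE : ∀ n, PosC (mSum (V := V) μ) chi (fun ω => (Real.exp (-a *
      ∫ s in Set.Ioi (e n), (1 - Real.exp (-s * ell ω)) * s ^ (-1-β)) : ℂ)) := by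
    intro n
    have h1 := (PosC.exp chi_meas chi_bdd chi_mul chi_one ((hA n).smul ha)).smul
      (c := Real.exp (-a * ∫ s in Set.Ioi (e n), s ^ (-1-β))) (Real.exp_pos _).le
    convert h1 using 2 with ω
    rw [← Complex.ofReal_mul, ← Complex.ofReal_exp, ← Complex.ofReal_mul, ← Real.exp_add]
    congr 2
    simp_rw [sub_mul, one_mul]
    rw [integral_sub (hInt0 n) (hint2 n ω)]
    ring
  refine PosC.lim hE 1 (fun n ω => ?_) (fun ω => ?_)
  · rw [Complex.norm_real, Real.norm_of_nonneg (Real.exp_pos _).le]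
    refine Real.exp_le_one_iff.2 ?_
    have : 0 ≤ ∫ s in Set.Ioi (e n), (1 - Real.exp (-s * ell ω)) * s ^ (-1-β) :=
      setIntegral_nonneg measurableSet_Ioi fun s hs => psi1_nonneg_integrand (ell_nonneg ω) ((epos n).trans hs)
    nlinarith
  · have hU : (⋃ n, Set.Ioi (e n)) = Set.Ioi 0 := by
      ext s
      simp only [Set.mem_iUnion, Set.mem_Ioi]
      constructor
      · rintro ⟨n, hn⟩; exact (epos n).trans hn
      · intro hs; exact exists_nat_one_div_lt hs
    have ht : Filter.Tendsto (fun n => ∫ s in Set.Ioi (e n), (1 - Real.exp (-s * ell ω)) * s ^ (-1-β)) Filter.atTop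
        (nhds (psi1 β (ell ω))) := by
      have := tendsto_setIntegral_of_monotone (μ := (volume : Measure ℝ)) (s := fun n => Set.Ioi (e n))
        (f := fun s => (1 - Real.exp (-s * ell ω)) * s ^ (-1-β)) (fun n => measurableSet_Ioi)
        (fun m n hmn => Set.Ioi_subset_Ioi (Nat.one_div_le_one_div hmn))
        (by rw [hU]; exact psi1_integrable hβ hβ1 (ell_nonneg ω))
      rw [hU] at this
      exact this
    exact (Complex.continuous_ofReal.tendsto _).comp ((Real.continuous_exp.tendsto _).comp (ht.const_mul (-a)))

/-- Characteristic exponent on a general Euclidean space. -/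
noncomputable def PsiV (β : ℝ) (u : V) : ℝ :=
  ∫ y in closedBall (0 : V) 1, (1 - Real.cos ⟪u, y⟫) / ‖y‖ ^ ((Module.finrank ℝ V : ℝ) + 2 * β)

/-- mass of the big jumps -/
noncomputable def lamV (V : Type) [NormedAddCommGroup V] [InnerProductSpace ℝ V] [FiniteDimensional ℝ V]
    [MeasurableSpace V] [BorelSpace V] (β : ℝ) : ℝ :=
  ∫ y in (closedBall (0 : V) 1)ᶜ, (‖y‖ ^ ((Module.finrank ℝ V : ℝ) + 2 * β))⁻¹

lemma lamV_int {β : ℝ} (hβ : 0 < β) :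
    IntegrableOn (fun y : V => (‖y‖ ^ ((Module.finrank ℝ V : ℝ) + 2 * β))⁻¹) (closedBall (0 : V) 1)ᶜ := by
  have h := (integrable_one_add_norm (E := V) (μ := volume) (r := (Module.finrank ℝ V : ℝ) + 2 * β) (by linarith))
  refine Integrable.mono' ((h.const_mul (2 ^ ((Module.finrank ℝ V : ℝ) + 2 * β))).integrableOn
    (s := (closedBall (0 : V) 1)ᶜ)) (Measurable.aestronglyMeasurable (by fun_prop)) ?_
  refine (ae_restrict_iff' measurableSet_closedBall.compl).2 (Filter.Eventually.of_forall fun y hy => ?_)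
  have hy : 1 < ‖y‖ := by simpa using hy
  rw [Real.norm_of_nonneg (by positivity), ← Real.rpow_neg (by positivity)]
  have hp : 0 < (Module.finrank ℝ V : ℝ) + 2 * β := by positivity
  calc ‖y‖ ^ (-((Module.finrank ℝ V : ℝ) + 2 * β)) ≤ ((1 + ‖y‖) / 2) ^ (-((Module.finrank ℝ V : ℝ) + 2 * β)) :=
        Real.rpow_le_rpow_of_nonpos (by positivity) (by linarith) (by linarith)
    _ = _ := by
      rw [Real.div_rpow (by positivity) (by positivity), Real.rpow_neg (x := 2) (by positivity)]
      field_simp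

lemma lamV_nonneg (β : ℝ) : 0 ≤ lamV V β :=
  setIntegral_nonneg measurableSet_closedBall.compl fun y _ => by positivity

lemma cos_int {β : ℝ} (hβ : 0 < β) (u : V) :
    IntegrableOn (fun y : V => Real.cos ⟪u, y⟫ * (‖y‖ ^ ((Module.finrank ℝ V : ℝ) + 2 * β))⁻¹) (closedBall (0 : V) 1)ᶜ :=
  (lamV_int (V := V) hβ).bdd_mul (c := 1) (Continuous.aestronglyMeasurable (by fun_prop))
    (Filter.Eventually.of_forall fun y => by rw [Real.norm_eq_abs]; exact Real.abs_cos_le_one _)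

lemma PsiV_eq {β κ : ℝ} (hβ : 0 < β) (u : V)
    (hi : Integrable (fun y : V => (1 - Real.cos ⟪u, y⟫) / ‖y‖ ^ ((Module.finrank ℝ V : ℝ) + 2 * β)))
    (hκ : ∫ y : V, (1 - Real.cos ⟪u, y⟫) / ‖y‖ ^ ((Module.finrank ℝ V : ℝ) + 2 * β) = κ * psi1 β (‖u‖ ^ 2)) :
    PsiV β u = κ * psi1 β (‖u‖ ^ 2) - lamV V β +
      ∫ y in (closedBall (0 : V) 1)ᶜ, Real.cos ⟪u, y⟫ * (‖y‖ ^ ((Module.finrank ℝ V : ℝ) + 2 * β))⁻¹ := by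
  have h1 := integral_add_compl (μ := (volume : Measure V)) (measurableSet_closedBall (x := (0:V)) (ε := 1)) hi
  have h2 : ∫ y in (closedBall (0 : V) 1)ᶜ, (1 - Real.cos ⟪u, y⟫) / ‖y‖ ^ ((Module.finrank ℝ V : ℝ) + 2 * β) =
      lamV V β - ∫ y in (closedBall (0 : V) 1)ᶜ, Real.cos ⟪u, y⟫ * (‖y‖ ^ ((Module.finrank ℝ V : ℝ) + 2 * β))⁻¹ := by
    unfold lamV
    rw [← integral_sub (lamV_int hβ) (cos_int hβ u)]
    congr 1; ext y
    rw [div_eq_mul_inv]; ring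
  rw [h2, hκ] at h1
  unfold PsiV
  linarith

lemma PsiV_lower {β κ : ℝ} (hβ : 0 < β) (u : V)
    (hi : Integrable (fun y : V => (1 - Real.cos ⟪u, y⟫) / ‖y‖ ^ ((Module.finrank ℝ V : ℝ) + 2 * β)))
    (hκ : ∫ y : V, (1 - Real.cos ⟪u, y⟫) / ‖y‖ ^ ((Module.finrank ℝ V : ℝ) + 2 * β) = κ * psi1 β (‖u‖ ^ 2)) :
    κ * psi1 β (‖u‖ ^ 2) - 2 * lamV V β ≤ PsiV β u := by
  rw [PsiV_eq hβ u hi hκ]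
  have : -lamV V β ≤ ∫ y in (closedBall (0 : V) 1)ᶜ, Real.cos ⟪u, y⟫ * (‖y‖ ^ ((Module.finrank ℝ V : ℝ) + 2 * β))⁻¹ := by
    unfold lamV
    rw [← integral_neg]
    refine integral_mono (lamV_int hβ).neg (cos_int hβ u) fun y => ?_
    simp only
    have h : 0 ≤ (‖y‖ ^ ((Module.finrank ℝ V : ℝ) + 2 * β))⁻¹ := by positivity
    nlinarith [Real.neg_one_le_cos ⟪u, y⟫]
  linarith

lemma pos_big (μ : Measure ℝ) [SFinite μ] {β : ℝ} (hβ : 0 < β) :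
    PosC (mSum (V := V) μ) chi (Sum.elim
      (fun u => ((-∫ y in (closedBall (0 : V) 1)ᶜ, Real.cos ⟪u, y⟫ * (‖y‖ ^ ((Module.finrank ℝ V : ℝ) + 2 * β))⁻¹ : ℝ) : ℂ))
      (fun _ => (lamV V β : ℂ))) := by
  set ρ : Measure V := (volume.restrict (closedBall (0 : V) 1)ᶜ).withDensity
    (fun y => ENNReal.ofReal ((‖y‖ ^ ((Module.finrank ℝ V : ℝ) + 2 * β))⁻¹)) with hρ
  have : IsFiniteMeasure ρ := isFiniteMeasure_withDensity_ofReal (lamV_int hβ).2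
  set Φ : V → V ⊕ ℝ → ℂ := fun y => Sum.elim (fun u => ((-Real.cos ⟪u, y⟫ : ℝ) : ℂ)) (fun _ => 1) with hΦ
  have hpos : ∀ y, PosC (mSum (V := V) μ) chi (Φ y) := by
    intro y
    have h1 := ((PosC.char (μ := mSum (V := V) μ) chi_meas chi_bdd (⟨⟨0, le_rfl⟩, y, ⟨-1, by simp⟩⟩ : SInd V)).add
      (PosC.char (μ := mSum (V := V) μ) chi_meas chi_bdd (⟨⟨0, le_rfl⟩, -y, ⟨-1, by simp⟩⟩ : SInd V))).smul
        (c := 1/2) (by norm_num)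
    convert h1 using 2 with ω
    rcases ω with u | l
    · simp only [hΦ, chi, Sum.elim_inl]
      push_cast
      rw [Complex.cos, real_inner_comm, inner_neg_left]
      push_cast
      simp
      ring_nf
    · simp [hΦ, chi]; norm_num
  have hb : ∀ y ω, ‖Φ y ω‖ ≤ 1 := by
    intro y ω
    rcases ω with u | l
    · simp only [hΦ, Sum.elim_inl, Complex.norm_real, norm_neg, Real.norm_eq_abs]
      exact Real.abs_cos_le_one _
    · simp [hΦ]
  have hm : Measurable (Function.uncurry Φ) := by
    have h1 : Measurable (Sum.elim id (fun _ => 0) : V ⊕ ℝ → V) := Measurable.sumElim measurable_id measurable_const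
    have h2 : Measurable (Sum.elim (fun _ => 1) (fun _ => 0) : V ⊕ ℝ → ℂ) :=
      Measurable.sumElim measurable_const measurable_const
    have h3 : Measurable (Sum.elim (fun _ => 0) (fun _ => 1) : V ⊕ ℝ → ℂ) :=
      Measurable.sumElim measurable_const measurable_const
    have : Function.uncurry Φ = fun z : V × (V ⊕ ℝ) =>
        (Sum.elim (fun _ => 1) (fun _ => 0) : V ⊕ ℝ → ℂ) z.2 *
          ((-Real.cos ⟪(Sum.elim id (fun _ => 0) : V ⊕ ℝ → V) z.2, z.1⟫ : ℝ) : ℂ) +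
        (Sum.elim (fun _ => 0) (fun _ => 1) : V ⊕ ℝ → ℂ) z.2 := by
      ext ⟨y, ω⟩
      rcases ω with u | l <;> simp [hΦ]
    rw [this]
    fun_prop
  have h1 := PosC.mix ρ hpos hm 1 hb
  convert h1 using 2 with ω
  rw [hρ, integral_withDensity_eq_integral_toReal_smul (by fun_prop) (by simp)]
  rcases ω with u | l
  · simp only [Sum.elim_inl, hΦ]
    rw [← integral_neg, ← integral_complex_ofReal]
    congr 1; ext y
    rw [ENNReal.toReal_ofReal (by positivity), Complex.real_smul]
    push_cast; ring
  · simp only [Sum.elim_inr, hΦ]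
    unfold lamV
    rw [← integral_complex_ofReal]
    congr 1; ext y
    rw [ENNReal.toReal_ofReal (by positivity), Complex.real_smul, mul_one]

end KeyPart


section KeyBound

set_option linter.unusedSectionVars false

variable {V : Type} [NormedAddCommGroup V] [InnerProductSpace ℝ V] [FiniteDimensional ℝ V]
  [MeasurableSpace V] [BorelSpace V]

/-- the hypothesis provided by `psi_identity` -/
def KapHyp (V : Type) [NormedAddCommGroup V] [InnerProductSpace ℝ V] [FiniteDimensional ℝ V]
    [MeasurableSpace V] [BorelSpace V] (β κ : ℝ) : Prop :=
  ∀ u : V, Integrable (fun y : V => (1 - Real.cos ⟪u, y⟫) / ‖y‖ ^ ((Module.finrank ℝ V : ℝ) + 2 * β)) ∧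
    ∫ y : V, (1 - Real.cos ⟪u, y⟫) / ‖y‖ ^ ((Module.finrank ℝ V : ℝ) + 2 * β) = κ * psi1 β (‖u‖ ^ 2)

lemma pos_comb (μ : Measure ℝ) [SFinite μ] {β κ t : ℝ} (hβ : 0 < β) (hβ1 : β < 1) (hκ : 0 < κ)
    (hK : KapHyp V β κ) (ht : 0 ≤ t) :
    PosC (mSum (V := V) μ) chi (Sum.elim
      (fun u => (Real.exp (-t * PsiV β u) : ℂ))
      (fun l => (Real.exp (2 * t * lamV V β - t * κ * psi1 β |l|) : ℂ))) := by
  have h1 := PosC.mul chi_meas chi_bdd chi_mul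
    ((pos_stable (V := V) μ hβ hβ1 (a := t * κ) (by positivity)).smul (c := Real.exp (t * lamV V β)) (Real.exp_pos _).le)
    (PosC.exp chi_meas chi_bdd chi_mul chi_one ((pos_big (V := V) μ hβ).smul ht))
  convert h1 using 2 with ω
  rcases ω with u | l
  · simp only [Sum.elim_inl, ell]
    rw [← Complex.ofReal_mul, ← Complex.ofReal_mul, ← Complex.ofReal_exp, ← Complex.ofReal_mul, ← Real.exp_add,
      ← Real.exp_add, PsiV_eq hβ u (hK u).1 (hK u).2]
    congr 2
    ring
  · simp only [Sum.elim_inr, ell]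
    rw [← Complex.ofReal_mul, ← Complex.ofReal_mul, ← Complex.ofReal_exp, ← Complex.ofReal_mul, ← Real.exp_add,
      ← Real.exp_add]
    congr 2
    ring

lemma psi1_nonneg {β l : ℝ} (hl : 0 ≤ l) : 0 ≤ psi1 β l :=
  setIntegral_nonneg measurableSet_Ioi fun _ hs => psi1_nonneg_integrand hl hs

lemma key_bound (μ : Measure ℝ) [IsFiniteMeasure μ] {β κ t : ℝ} (hβ : 0 < β) (hβ1 : β < 1) (hκ : 0 < κ)
    (hK : KapHyp V β κ) (ht : 0 ≤ t) {h : V → ℂ} (hh : Integrable h)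
    (hb : ∀ s : ℝ, 0 ≤ s → ∀ x : V, ‖∫ u, h u * ((Real.exp (-s * ‖u‖ ^ 2) : ℂ) * Complex.exp (Complex.I * ⟪x, u⟫))‖
      ≤ ∫ l, Real.exp (-s * |l|) ∂μ) :
    ‖∫ u, h u * (Real.exp (-t * PsiV β u) : ℂ)‖ ≤ ∫ l, Real.exp (2 * t * lamV V β - t * κ * psi1 β |l|) ∂μ := by
  obtain ⟨c, hc, hc2⟩ := Complex.exists_norm_eq_mul_self (∫ u, h u * (Real.exp (-t * PsiV β u) : ℂ))
  have hP := pos_comb (V := V) μ hβ hβ1 hκ hK ht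
  obtain ⟨hm, ⟨C, hC⟩, hpos⟩ := hP
  set F : V ⊕ ℝ → ℂ := (Sum.elim
      (fun u => (Real.exp (-t * PsiV β u) : ℂ))
      (fun l => (Real.exp (2 * t * lamV V β - t * κ * psi1 β |l|) : ℂ))) with hF
  have hH : Integrable (Sum.elim (fun u => -c * h u) (fun _ => 1) : V ⊕ ℝ → ℂ) (mSum μ) :=
    mSum_integrable (hh.const_mul _) (integrable_const _)
  have h1 := hpos _ hH ?_
  · have hi := integrable_mul_bdd hH hm hC
    unfold mSum at hi
    have hi1 := emb_inl.integrable_map_iff.1 hi.left_of_add_measure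
    have hi2 := emb_inr.integrable_map_iff.1 hi.right_of_add_measure
    rw [mSum_integral hi1 hi2] at h1
    simp only [Sum.elim_inl, Sum.elim_inr, hF, one_mul] at h1
    simp_rw [mul_assoc] at h1
    rw [integral_const_mul, integral_complex_ofReal, neg_mul, ← hc2, Complex.add_re, Complex.neg_re,
      Complex.ofReal_re, Complex.ofReal_re] at h1
    simp_rw [mul_assoc]
    linarith
  · intro p
    have hi := integrable_mul_bdd hH (chi_meas p) (chi_bdd p)
    unfold mSum at hi
    have hi1 := emb_inl.integrable_map_iff.1 hi.left_of_add_measure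
    have hi2 := emb_inr.integrable_map_iff.1 hi.right_of_add_measure
    rw [mSum_integral hi1 hi2]
    simp only [Sum.elim_inl, Sum.elim_inr, chi, one_mul]
    have e1 : ∀ u : V, -c * h u * (p.2.2 * (Real.exp (-p.1 * ‖u‖ ^ 2) : ℂ) * Complex.exp (Complex.I * ⟪p.2.1, u⟫)) =
      (-c * p.2.2) * (h u * ((Real.exp (-p.1 * ‖u‖ ^ 2) : ℂ) * Complex.exp (Complex.I * ⟪p.2.1, u⟫))) := fun u => by ring
    simp_rw [e1]
    rw [integral_const_mul, integral_complex_ofReal, Complex.add_re, Complex.ofReal_re]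
    have h2 := hb p.1 p.1.2 p.2.1
    set J := ∫ u, h u * ((Real.exp (-p.1 * ‖u‖ ^ 2) : ℂ) * Complex.exp (Complex.I * ⟪p.2.1, u⟫))
    have h3 : |(-c * (p.2.2 : ℂ) * J).re| ≤ ‖J‖ := by
      refine (Complex.abs_re_le_norm _).trans ?_
      rw [norm_mul, norm_mul, norm_neg, hc, one_mul]
      exact mul_le_of_le_one_left (norm_nonneg _) p.2.2.2
    have := (abs_le.1 h3).1
    linarith

end KeyBound


section MultBound

set_option linter.unusedSectionVars false

variable {V : Type} [NormedAddCommGroup V] [InnerProductSpace ℝ V] [FiniteDimensional ℝ V]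
  [MeasurableSpace V] [BorelSpace V]

/-- auxiliary finite measure on the line -/
noncomputable def muD (A D δ : ℝ) : Measure ℝ :=
  ENNReal.ofReal A • Measure.dirac 0 + ENNReal.ofReal D •
    (volume.restrict (Set.Ioi 0)).withDensity (fun l => ENNReal.ofReal (Real.exp (-δ * l)))

lemma exp_int {δ : ℝ} (hδ : 0 < δ) : IntegrableOn (fun l => Real.exp (-δ * l)) (Set.Ioi 0) :=
  exp_neg_integrableOn_Ioi 0 hδ

lemma muD_fin (A D : ℝ) {δ : ℝ} (hδ : 0 < δ) : IsFiniteMeasure (muD A D δ) := by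
  have : IsFiniteMeasure ((volume.restrict (Set.Ioi (0:ℝ))).withDensity
      (fun l => ENNReal.ofReal (Real.exp (-δ * l)))) := isFiniteMeasure_withDensity_ofReal (exp_int hδ).2
  have h1 : IsFiniteMeasure (ENNReal.ofReal A • Measure.dirac (0:ℝ)) := Measure.smul_finite _ (by simp)
  have h2 : IsFiniteMeasure (ENNReal.ofReal D • ((volume.restrict (Set.Ioi (0:ℝ))).withDensity
      (fun l => ENNReal.ofReal (Real.exp (-δ * l))))) := Measure.smul_finite _ (by simp)
  unfold muD
  infer_instance

lemma muD_integral {A D δ : ℝ} (hA : 0 ≤ A) (hD : 0 ≤ D) (hδ : 0 < δ) {f : ℝ → ℝ} (hf : Measurable f) {C : ℝ}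
    (hC : ∀ l, ‖f l‖ ≤ C) :
    ∫ l, f l ∂(muD A D δ) = A * f 0 + D * ∫ l in Set.Ioi 0, Real.exp (-δ * l) * f l := by
  have hfin := muD_fin A D hδ
  have hi : Integrable f (muD A D δ) := Integrable.of_bound hf.aestronglyMeasurable C (Filter.Eventually.of_forall hC)
  unfold muD at hi ⊢
  rw [integral_add_measure hi.left_of_add_measure hi.right_of_add_measure, integral_smul_measure, integral_smul_measure,
    integral_dirac, integral_withDensity_eq_integral_toReal_smul (by fun_prop) (by simp),
    ENNReal.toReal_ofReal hA, ENNReal.toReal_ofReal hD]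
  simp only [smul_eq_mul]
  congr 2
  congr 1; ext l
  rw [ENNReal.toReal_ofReal (Real.exp_pos _).le]

lemma PsiV_meas {β κ : ℝ} (hβ : 0 < β) (hβ1 : β < 1) (hκ : 0 < κ)
    (hK : KapHyp V β κ) : Measurable (PsiV β : V → ℝ) := by
  have := (pos_comb (V := V) (0 : Measure ℝ) hβ hβ1 hκ hK zero_le_one).1
  have h2 : Measurable (fun u : V => (Real.exp (-1 * PsiV β u) : ℂ)) := this.comp measurable_inl
  have h3 := Real.measurable_log.comp (Complex.measurable_re.comp h2)
  have h4 := h3.neg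
  convert h4 using 1
  ext u
  simp only [Pi.neg_apply, Function.comp, Complex.ofReal_re, Real.log_exp]
  ring

lemma PsiV_nonneg (β : ℝ) (u : V) : 0 ≤ PsiV β u :=
  setIntegral_nonneg measurableSet_closedBall fun y _ => div_nonneg (one_sub_cos_nonneg _) (by positivity)

lemma mult_bound {β κ t : ℝ} (hβ : 0 < β) (hβ1 : β < 1) (hκ : 0 < κ)
    (hK : KapHyp V β κ) (ht : 0 < t) {a : V → ℂ} {K0 K1 : ℝ} (hK0 : 0 ≤ K0) (hK1 : 0 ≤ K1)
    (ha : ∀ τ : ℝ, 0 < τ → MB (fun u => a u * (Real.exp (-τ * ‖u‖ ^ 2) : ℂ)) (K0 + K1 / τ))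
    {h : V → ℂ} (hh : Integrable h) (hha : Integrable (fun u => h u * a u)) {B : ℝ}
    (hB : ∀ x : V, ‖∫ u, h u * Complex.exp (Complex.I * ⟪x, u⟫)‖ ≤ B) :
    ‖∫ u, h u * (a u * (Real.exp (-t * PsiV β u) : ℂ))‖ ≤
      Real.exp (2 * t * lamV V β) * (K0 + K1 * ((t * κ * psi1 β 1) ^ (-1 / β) * Real.Gamma (1 / β + 1))) * B := by
  have hB0 : 0 ≤ B := (norm_nonneg _).trans (hB 0)
  have hp1 := psi1_pos hβ hβ1 one_pos
  have hb : 0 < t * κ * psi1 β 1 := by positivity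
  have hPm := PsiV_meas hβ hβ1 hκ hK
  have hP0 := PsiV_nonneg (V := V) β
  set D := ∫ l in Set.Ioi (0:ℝ), Real.exp (-(t * κ * psi1 β 1) * l ^ β) with hD
  have hDint : IntegrableOn (fun l : ℝ => Real.exp (-(t * κ * psi1 β 1) * l ^ β)) (Set.Ioi 0) := by
    have := integrableOn_rpow_mul_exp_neg_mul_rpow (p := β) (s := 0) (b := t * κ * psi1 β 1) (by norm_num) hβ hb
    simpa using this
  have hDv : D = (t * κ * psi1 β 1) ^ (-1 / β) * Real.Gamma (1 / β + 1) := integral_exp_neg_mul_rpow hβ hb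
  rw [← hDv]
  have hδ : ∀ δ : ℝ, 0 < δ → ‖∫ u, (h u * a u * (Real.exp (-δ * ‖u‖ ^ 2) : ℂ)) * (Real.exp (-t * PsiV β u) : ℂ)‖ ≤
      Real.exp (2 * t * lamV V β) * (K0 + K1 * D) * B := by
    intro δ hδ
    have hfin := muD_fin (K0 * B) (K1 * B) hδ
    have h0 : Integrable (fun u => h u * a u * (Real.exp (-δ * ‖u‖ ^ 2) : ℂ)) :=
      integrable_mul_bdd hha (MB_gauss hδ.le).1 (C := 1) (fun u => by
        rw [Complex.norm_real, Real.norm_of_nonneg (Real.exp_pos _).le]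
        exact Real.exp_le_one_iff.2 (by nlinarith [sq_nonneg ‖u‖]))
    refine (key_bound (muD (K0 * B) (K1 * B) δ) hβ hβ1 hκ hK ht.le h0 ?_).trans ?_
    · intro s hs x
      rw [muD_integral (by positivity) (by positivity) hδ (by fun_prop) (C := 1) (fun l => by
        rw [Real.norm_of_nonneg (Real.exp_pos _).le]
        exact Real.exp_le_one_iff.2 (by nlinarith [abs_nonneg l]))]
      have e1 : ∫ l in Set.Ioi (0:ℝ), Real.exp (-δ * l) * Real.exp (-s * |l|) = 1 / (s + δ) := by
        have := integral_exp_mul_Ioi (a := -(s + δ)) (by linarith) 0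
        have e2 : ∀ l ∈ Set.Ioi (0:ℝ), Real.exp (-δ * l) * Real.exp (-s * |l|) = Real.exp (-(s + δ) * l) := by
          intro l hl
          rw [abs_of_pos hl, ← Real.exp_add]; congr 1; ring
        rw [setIntegral_congr_fun measurableSet_Ioi e2, this, mul_zero, Real.exp_zero, neg_div_neg_eq]
      rw [e1]
      have := (ha (s + δ) (by linarith)).2.2 (fun u => h u * Complex.exp (Complex.I * ⟪x, u⟫))
        (integrable_mul_bdd hh (by fun_prop) (C := 1) (fun u => (norm_char x u).le)) B ?_
      · refine le_trans (le_of_eq ?_) (this.trans (le_of_eq ?_))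
        · congr 2; ext u
          simp only
          rw [neg_add, add_mul, Real.exp_add]; push_cast; ring
        · simp; ring
      · intro z
        convert hB (x + z) using 3
        ext u
        rw [inner_add_left, mul_assoc, ← Complex.exp_add]
        push_cast; ring_nf
    · rw [muD_integral (by positivity) (by positivity) hδ ?_ (C := Real.exp (2 * t * lamV V β)) ?_]
      · have e0 : psi1 β |(0:ℝ)| = 0 := by rw [abs_zero, psi1_zero]
        rw [e0]
        have h3 : ∫ l in Set.Ioi (0:ℝ), Real.exp (-δ * l) * Real.exp (2 * t * lamV V β - t * κ * psi1 β |l|) ≤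
            Real.exp (2 * t * lamV V β) * D := by
          rw [hD, ← integral_const_mul]
          refine integral_mono_of_nonneg (Filter.Eventually.of_forall fun l => by positivity)
            (hDint.const_mul _) ((ae_restrict_iff' measurableSet_Ioi).2 (Filter.Eventually.of_forall fun l hl => ?_))
          have hl : 0 < l := hl
          simp only
          rw [abs_of_pos hl, psi1_eq hβ hl.le, ← Real.exp_add, ← Real.exp_add]
          refine Real.exp_le_exp.2 ?_
          nlinarith [mul_pos hδ hl]
        have h4 := mul_le_mul_of_nonneg_left h3 (by positivity : 0 ≤ K1 * B)
        simp only [mul_zero, sub_zero]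
        nlinarith
      · have : Measurable (fun l : ℝ => psi1 β |l|) := by
          simp_rw [psi1_eq hβ (abs_nonneg _)]
          fun_prop
        fun_prop
      · intro l
        rw [Real.norm_of_nonneg (Real.exp_pos _).le]
        refine Real.exp_le_exp.2 ?_
        have := psi1_nonneg (β := β) (abs_nonneg l)
        have : 0 ≤ t * κ * psi1 β |l| := by positivity
        linarith
  have hlim : Filter.Tendsto (fun n : ℕ => ∫ u, (h u * a u * (Real.exp (-(1 / ((n:ℝ) + 1)) * ‖u‖ ^ 2) : ℂ)) *
      (Real.exp (-t * PsiV β u) : ℂ)) Filter.atTop (nhds (∫ u, h u * (a u * (Real.exp (-t * PsiV β u) : ℂ)))) := by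
    refine tendsto_integral_of_dominated_convergence (fun u => ‖h u * a u‖) (fun n => ?_) hha.norm (fun n => ?_) ?_
    · refine (hha.aestronglyMeasurable.mul ?_).mul ?_
      · exact (MB_gauss (by positivity)).1.aestronglyMeasurable
      · exact Measurable.aestronglyMeasurable (by fun_prop)
    · refine Filter.Eventually.of_forall fun u => ?_
      rw [norm_mul, norm_mul, Complex.norm_real, Complex.norm_real, Real.norm_of_nonneg (Real.exp_pos _).le,
        Real.norm_of_nonneg (Real.exp_pos _).le, mul_assoc]
      refine mul_le_of_le_one_right (norm_nonneg _) (mul_le_one₀ ?_ (Real.exp_pos _).le ?_)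
      · refine Real.exp_le_one_iff.2 ?_
        rw [neg_mul]
        exact neg_nonpos.2 (by positivity)
      · exact Real.exp_le_one_iff.2 (by nlinarith [hP0 u])
    · refine Filter.Eventually.of_forall fun u => ?_
      have h1 : Filter.Tendsto (fun n : ℕ => Real.exp (-(1 / ((n:ℝ) + 1)) * ‖u‖ ^ 2)) Filter.atTop (nhds 1) := by
        have := (tendsto_one_div_add_atTop_nhds_zero_nat (𝕜 := ℝ)).neg.mul_const (‖u‖ ^ 2)
        have := (Real.continuous_exp.tendsto _).comp this
        simpa [Function.comp_def] using this
      have h2 := ((Complex.continuous_ofReal.tendsto _).comp h1).const_mul (h u * a u)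
      have h3 := h2.mul_const (Real.exp (-t * PsiV β u) : ℂ)
      simpa [mul_assoc] using h3
  exact le_of_tendsto hlim.norm (Filter.Eventually.of_forall fun n => hδ _ (by positivity))

end MultBound


section Dual

set_option linter.unusedSectionVars false

variable {V : Type} [NormedAddCommGroup V] [InnerProductSpace ℝ V] [FiniteDimensional ℝ V]
  [MeasurableSpace V] [BorelSpace V]

/-- unnormalised inverse Fourier transform -/
noncomputable def Gf (b : V → ℂ) (y : V) : ℂ := ∫ u, b u * Complex.exp (Complex.I * ⟪y, u⟫)

lemma Gf_cont {b : V → ℂ} (hb : Integrable b) : Continuous (Gf b) := by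
  unfold Gf
  refine continuous_of_dominated (bound := fun u => ‖b u‖) (fun y => ?_) (fun y => ?_) hb.norm ?_
  · exact hb.aestronglyMeasurable.mul (Continuous.aestronglyMeasurable (by fun_prop))
  · exact Filter.Eventually.of_forall fun u => by rw [norm_mul, norm_char, mul_one]
  · exact Filter.Eventually.of_forall fun u => by fun_prop

lemma gauss_int {δ : ℝ} (hδ : 0 < δ) : Integrable (fun u : V => Real.exp (-δ * ‖u‖ ^ 2)) := by
  have := (GaussianFourier.integrable_cexp_neg_mul_sq_norm_add (V := V) (b := δ) (by simpa using hδ) 0 0).norm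
  refine this.congr (Filter.Eventually.of_forall fun y => ?_)
  simp [Complex.norm_exp, ← Complex.ofReal_pow]

lemma gauss_ft {δ : ℝ} (hδ : 0 < δ) (z : V) :
    ∫ u : V, (Real.exp (-δ * ‖u‖ ^ 2) : ℂ) * Complex.exp (Complex.I * ⟪z, u⟫) =
      (((Real.pi / δ) ^ ((Module.finrank ℝ V : ℝ) / 2) * Real.exp (-(1 / (4 * δ)) * ‖z‖ ^ 2) : ℝ) : ℂ) := by
  have h := GaussianFourier.integral_cexp_neg_mul_sq_norm_add (V := V) (b := δ) (by simpa using hδ) Complex.I z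
  have e : ∀ u : V, (Real.exp (-δ * ‖u‖ ^ 2) : ℂ) * Complex.exp (Complex.I * ⟪z, u⟫) =
      Complex.exp (-δ * ‖u‖ ^ 2 + Complex.I * ⟪z, u⟫) := fun u => by
    rw [Complex.exp_add]; push_cast; rfl
  simp_rw [e]
  rw [h, Complex.ofReal_mul, Complex.ofReal_cpow (by positivity)]
  push_cast
  congr 2
  rw [Complex.I_sq]
  field_simp

lemma gauss_L1 {δ : ℝ} (hδ : 0 < δ) :
    ∫ z : V, (Real.pi / δ) ^ ((Module.finrank ℝ V : ℝ) / 2) * Real.exp (-(1 / (4 * δ)) * ‖z‖ ^ 2) =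
      (2 * Real.pi) ^ (Module.finrank ℝ V) := by
  rw [integral_const_mul, GaussianFourier.integral_rexp_neg_mul_sq_norm (by positivity),
    ← Real.mul_rpow (by positivity) (by positivity)]
  have : Real.pi / δ * (Real.pi / (1 / (4 * δ))) = (2 * Real.pi) ^ (2:ℝ) := by
    rw [Real.rpow_two]; field_simp; ring
  rw [this, ← Real.rpow_mul (by positivity), mul_div_cancel₀ _ (by norm_num : (2:ℝ) ≠ 0), Real.rpow_natCast]

lemma dual_ball {b : V → ℂ} (hb : Integrable b) {K : ℝ}
    (hK : ∀ h : V → ℂ, Measurable h → ∀ C δ : ℝ, 0 < δ → (∀ u, ‖h u‖ ≤ C * Real.exp (-δ * ‖u‖ ^ 2)) → ∀ B : ℝ,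
      (∀ x : V, ‖∫ u, h u * Complex.exp (Complex.I * ⟪x, u⟫)‖ ≤ B) → ‖∫ u, h u * b u‖ ≤ K * B)
    {g : V → ℂ} (hg : Integrable g) (hg1 : ∀ y, ‖g y‖ ≤ 1) :
    ‖∫ y, g y * Gf b y‖ ≤ K * (2 * Real.pi) ^ (Module.finrank ℝ V) := by
  have hgc := Gf_cont hg
  have hδ : ∀ δ : ℝ, 0 < δ → ‖∫ u, (Gf g u * (Real.exp (-δ * ‖u‖ ^ 2) : ℂ)) * b u‖ ≤
      K * (2 * Real.pi) ^ (Module.finrank ℝ V) := by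
    intro δ hδ
    refine hK _ (by fun_prop) (∫ y, ‖g y‖) δ hδ (fun u => ?_) _ (fun x => ?_)
    · rw [norm_mul, Complex.norm_real, Real.norm_of_nonneg (Real.exp_pos _).le]
      refine mul_le_mul_of_nonneg_right ?_ (Real.exp_pos _).le
      unfold Gf
      refine (norm_integral_le_integral_norm _).trans (le_of_eq ?_)
      congr 1; ext y
      rw [norm_mul, norm_char, mul_one]
    · have hInt0 : Integrable (Function.uncurry fun (y u : V) => g y * ((Real.exp (-δ * ‖u‖ ^ 2) : ℂ) *
          Complex.exp (Complex.I * ⟪x + y, u⟫))) (volume.prod volume) := by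
        have h1 := hg.mul_prod ((gauss_int (V := V) hδ).ofReal (𝕜 := ℂ))
        have h2 := h1.mul_bdd (c := 1) (g := fun z : V × V => Complex.exp (Complex.I * ⟪x + z.1, z.2⟫))
          (Continuous.aestronglyMeasurable (by fun_prop)) (Filter.Eventually.of_forall fun z => (norm_char _ _).le)
        refine h2.congr (Filter.Eventually.of_forall fun z => ?_)
        simp [Function.uncurry, mul_assoc]
      have e : ∫ u, Gf g u * (Real.exp (-δ * ‖u‖ ^ 2) : ℂ) * Complex.exp (Complex.I * ⟪x, u⟫) =
          ∫ y, g y * (((Real.pi / δ) ^ ((Module.finrank ℝ V : ℝ) / 2) *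
            Real.exp (-(1 / (4 * δ)) * ‖x + y‖ ^ 2) : ℝ) : ℂ) := by
        simp_rw [← gauss_ft hδ, ← integral_const_mul]
        rw [integral_integral_swap hInt0]
        congr 1; ext u
        unfold Gf
        rw [mul_assoc, ← integral_mul_const]
        congr 1; ext y
        rw [inner_add_left, Complex.ofReal_add, mul_add, Complex.exp_add, real_inner_comm u y]
        ring
      rw [e, ← gauss_L1 (V := V) hδ]
      rw [← integral_add_left_eq_self (μ := (volume : Measure V)) (fun z : V => (Real.pi / δ) ^ ((Module.finrank ℝ V : ℝ) / 2) *
            Real.exp (-(1 / (4 * δ)) * ‖z‖ ^ 2)) x]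
      refine norm_integral_le_of_norm_le ?_ (Filter.Eventually.of_forall fun y => ?_)
      · exact (((gauss_int (V := V) (δ := 1 / (4 * δ)) (by positivity)).const_mul _).comp_add_left x)
      · rw [norm_mul, Complex.norm_real, Real.norm_of_nonneg (by positivity)]
        exact mul_le_of_le_one_left (by positivity) (hg1 y)
  have hlim : Filter.Tendsto (fun n : ℕ => ∫ u, (Gf g u * (Real.exp (-(1 / ((n:ℝ) + 1)) * ‖u‖ ^ 2) : ℂ)) * b u)
      Filter.atTop (nhds (∫ u, Gf g u * b u)) := by
    refine tendsto_integral_of_dominated_convergence (fun u => (∫ y, ‖g y‖) * ‖b u‖) (fun n => ?_) (hb.norm.const_mul _)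
      (fun n => ?_) ?_
    · exact (Continuous.aestronglyMeasurable (by fun_prop)).mul hb.aestronglyMeasurable
    · refine Filter.Eventually.of_forall fun u => ?_
      rw [norm_mul, norm_mul, Complex.norm_real, Real.norm_of_nonneg (Real.exp_pos _).le]
      refine mul_le_mul_of_nonneg_right ?_ (norm_nonneg _)
      have h1 : ‖Gf g u‖ ≤ ∫ y, ‖g y‖ := by
        unfold Gf
        refine (norm_integral_le_integral_norm _).trans (le_of_eq ?_)
        congr 1; ext y
        rw [norm_mul, norm_char, mul_one]
      refine le_trans (mul_le_of_le_one_right (norm_nonneg _) ?_) h1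
      refine Real.exp_le_one_iff.2 ?_
      rw [neg_mul]
      exact neg_nonpos.2 (by positivity)
    · refine Filter.Eventually.of_forall fun u => ?_
      have h1 : Filter.Tendsto (fun n : ℕ => Real.exp (-(1 / ((n:ℝ) + 1)) * ‖u‖ ^ 2)) Filter.atTop (nhds 1) := by
        have := (tendsto_one_div_add_atTop_nhds_zero_nat (𝕜 := ℝ)).neg.mul_const (‖u‖ ^ 2)
        have := (Real.continuous_exp.tendsto _).comp this
        simpa [Function.comp_def] using this
      have h2 := ((Complex.continuous_ofReal.tendsto _).comp h1).const_mul (Gf g u)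
      have h3 := h2.mul_const (b u)
      simpa using h3
  have hsw : ∫ y, g y * Gf b y = ∫ u, Gf g u * b u := by
    have hInt0 : Integrable (Function.uncurry fun (y u : V) => g y * (b u * Complex.exp (Complex.I * ⟪y, u⟫)))
        (volume.prod volume) := by
      have h1 := hg.mul_prod hb
      have h2 := h1.mul_bdd (c := 1) (g := fun z : V × V => Complex.exp (Complex.I * ⟪z.1, z.2⟫))
        (Continuous.aestronglyMeasurable (by fun_prop)) (Filter.Eventually.of_forall fun z => (norm_char _ _).le)
      refine h2.congr (Filter.Eventually.of_forall fun z => ?_)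
      simp [Function.uncurry, mul_assoc]
    unfold Gf
    simp_rw [← integral_const_mul, ← integral_mul_const]
    rw [integral_integral_swap hInt0]
    congr 1; ext u; congr 1; ext y
    rw [real_inner_comm u y]; ring
  rw [hsw]
  exact le_of_tendsto hlim.norm (Filter.Eventually.of_forall fun n => hδ _ (by positivity))

lemma dual_L1 {b : V → ℂ} (hb : Integrable b) {K : ℝ}
    (hK : ∀ h : V → ℂ, Measurable h → ∀ C δ : ℝ, 0 < δ → (∀ u, ‖h u‖ ≤ C * Real.exp (-δ * ‖u‖ ^ 2)) → ∀ B : ℝ,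
      (∀ x : V, ‖∫ u, h u * Complex.exp (Complex.I * ⟪x, u⟫)‖ ≤ B) → ‖∫ u, h u * b u‖ ≤ K * B) :
    Integrable (Gf b) ∧ ∫ y, ‖Gf b y‖ ≤ K * (2 * Real.pi) ^ (Module.finrank ℝ V) := by
  have hc := Gf_cont hb
  have hball : ∀ n : ℕ, ∫ y in closedBall (0:V) n, ‖Gf b y‖ ≤ K * (2 * Real.pi) ^ (Module.finrank ℝ V) := by
    intro n
    set g : V → ℂ := fun y => (closedBall (0:V) n).indicator (fun y => (starRingEnd ℂ) (Gf b y) / ‖Gf b y‖) y with hg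
    have hgm : Measurable g := by
      refine Measurable.indicator ?_ measurableSet_closedBall
      have : Continuous fun y => (starRingEnd ℂ) (Gf b y) := Complex.continuous_conj.comp hc
      fun_prop
    have hg1 : ∀ y, ‖g y‖ ≤ 1 := by
      intro y
      rw [hg]
      refine (norm_indicator_le_norm_self _ _).trans ?_
      simp only [norm_div, RCLike.norm_conj, Complex.norm_real, norm_norm]
      exact div_self_le_one _
    have hgi : Integrable g := by
      have h1 : IntegrableOn (fun _ : V => (1:ℝ)) (closedBall (0:V) n) := by
        exact integrableOn_const (isCompact_closedBall _ _).measure_lt_top.ne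
      refine Integrable.mono' (h1.integrable_indicator measurableSet_closedBall) hgm.aestronglyMeasurable
        (Filter.Eventually.of_forall fun y => ?_)
      by_cases hy : y ∈ closedBall (0:V) n
      · rw [Set.indicator_of_mem hy]; exact hg1 y
      · simp only [hg]
        rw [Set.indicator_of_notMem hy, Set.indicator_of_notMem hy]; simp
    have h1 := dual_ball hb hK hgi hg1
    have e : ∫ y, g y * Gf b y = ((∫ y in closedBall (0:V) n, ‖Gf b y‖ : ℝ) : ℂ) := by
      rw [← integral_complex_ofReal, ← integral_indicator measurableSet_closedBall]
      congr 1; ext y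
      by_cases hy : y ∈ closedBall (0:V) n
      · simp only [hg]
        rw [Set.indicator_of_mem hy, Set.indicator_of_mem hy, div_mul_eq_mul_div, Complex.conj_mul']
        by_cases h0 : ‖Gf b y‖ = 0
        · simp [h0]
        · field_simp
      · simp only [hg]
        rw [Set.indicator_of_notMem hy, Set.indicator_of_notMem hy, zero_mul]
    rw [e, Complex.norm_real] at h1
    exact (le_abs_self _).trans h1
  have hcov : AECover (volume : Measure V) Filter.atTop (fun n : ℕ => closedBall (0:V) n) :=
    aecover_closedBall tendsto_natCast_atTop_atTop
  have hi : Integrable (Gf b) := by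
    refine hcov.integrable_of_integral_norm_bounded (K * (2 * Real.pi) ^ (Module.finrank ℝ V)) (fun n => ?_)
      (Filter.Eventually.of_forall hball)
    exact hc.continuousOn.integrableOn_compact (isCompact_closedBall _ _)
  exact ⟨hi, le_of_tendsto (hcov.integral_tendsto_of_countably_generated hi.norm) (Filter.Eventually.of_forall hball)⟩

end Dual


section Conv

set_option linter.unusedSectionVars false

variable {V : Type} [NormedAddCommGroup V] [InnerProductSpace ℝ V] [FiniteDimensional ℝ V]
  [MeasurableSpace V] [BorelSpace V]

/-- correlation of `φ` and `G` -/
noncomputable def cv (φ G : V → ℝ) (x : V) : ℝ := ∫ z, φ z * G (z - x)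

variable {φ : V → ℝ} {M : ℝ}

lemma cv_int (hφ : Measurable φ) (hM : ∀ x, |φ x| ≤ M) {G : V → ℝ} (hG : Integrable G) (x : V) :
    Integrable (fun z => φ z * G (z - x)) :=
  (hG.comp_sub_right x).bdd_mul (c := M) hφ.aestronglyMeasurable (Filter.Eventually.of_forall hM)

lemma cv_bound (hM : ∀ x, |φ x| ≤ M) {G : V → ℝ} (hG : Integrable G) (x : V) :
    |cv φ G x| ≤ M * ∫ y, |G y| := by
  unfold cv
  rw [← integral_sub_right_eq_self (fun y => |G y|) x, ← integral_const_mul, ← Real.norm_eq_abs]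
  refine norm_integral_le_of_norm_le ((hG.abs.comp_sub_right x).const_mul M) (Filter.Eventually.of_forall fun z => ?_)
  rw [norm_mul]
  exact mul_le_mul_of_nonneg_right (hM z) (norm_nonneg _)

lemma cv_cont (hφ : Measurable φ) (hM : ∀ x, |φ x| ≤ M) {G : V → ℝ} (hG : Integrable G) :
    Continuous (cv φ G) := by
  refine continuous_of_uniform_approx_of_continuous fun U hU => ?_
  obtain ⟨ε, hε, hεU⟩ := Metric.mem_uniformity_dist.1 hU
  have hM0 : 0 ≤ M := (abs_nonneg _).trans (hM 0)
  obtain ⟨g, hgc, hgε, hgcont, hgi⟩ := hG.exists_hasCompactSupport_integral_sub_le (ε := ε / (2 * (M + 1))) (by positivity)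
  refine ⟨cv φ g, ?_, fun y => hεU ?_⟩
  · have hloc : LocallyIntegrable φ := by
      refine LocallyIntegrable.mono (f := fun _ => M) (locallyIntegrable_const M) hφ.aestronglyMeasurable
        (Filter.Eventually.of_forall fun x => ?_)
      rw [Real.norm_of_nonneg hM0]; exact hM x
    have h1 := HasCompactSupport.continuous_convolution_right (μ := volume) (ContinuousLinearMap.mul ℝ ℝ)
      (hgc.comp_homeomorph (Homeomorph.neg V)) hloc (hgcont.comp continuous_neg)
    convert h1 using 1
    ext x
    unfold cv convolution
    simp
  · rw [Real.dist_eq]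
    have e : cv φ G y - cv φ g y = cv φ (fun z => G z - g z) y := by
      unfold cv
      rw [← integral_sub (cv_int hφ hM hG y) (cv_int hφ hM hgi y)]
      congr 1; ext z; ring
    rw [e]
    refine (cv_bound hM (hG.sub hgi) y).trans_lt ?_
    have h2 : ∫ y, |(G - g) y| ≤ ε / (2 * (M + 1)) := hgε
    calc M * ∫ y, |(G - g) y| ≤ M * (ε / (2 * (M + 1))) := mul_le_mul_of_nonneg_left h2 hM0
      _ < ε := by
        rw [mul_div_assoc', div_lt_iff₀ (by positivity)]
        nlinarith

lemma cv_ftc (hφ : Measurable φ) (hM : ∀ x, |φ x| ≤ M) {G : V → ℝ} (hG1 : ContDiff ℝ 1 G) (hG : Integrable G)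
    (hG' : ∀ e, Integrable (fun y => fderiv ℝ G y e)) (x v : V) :
    cv φ G (x + v) - cv φ G x = ∫ s in (0:ℝ)..1, -cv φ (fun y => fderiv ℝ G y v) (x + s • v) := by
  have hc : Continuous (fun y => fderiv ℝ G y v) := (hG1.continuous_fderiv one_ne_zero).clm_apply continuous_const
  have hM0 : 0 ≤ M := (abs_nonneg _).trans (hM 0)
  have hInt0 : Integrable (Function.uncurry fun (z : V) (s : ℝ) => φ z * -(fderiv ℝ G (z - (x + s • v)) v))
      (volume.prod (volume.restrict (Set.Ioc 0 1))) := by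
    have hm : AEStronglyMeasurable (Function.uncurry fun (z : V) (s : ℝ) => φ z * -(fderiv ℝ G (z - (x + s • v)) v))
      (volume.prod (volume.restrict (Set.Ioc 0 1))) := by
      refine Measurable.aestronglyMeasurable ?_
      have h1 : Continuous (fun q : V × ℝ => fderiv ℝ G (q.1 - (x + q.2 • v)) v) := hc.comp (by fun_prop)
      exact (hφ.comp measurable_fst).mul h1.measurable.neg
    rw [integrable_prod_iff' hm]
    refine ⟨Filter.Eventually.of_forall fun s => ?_, ?_⟩
    · exact cv_int hφ hM (G := fun y => -(fderiv ℝ G y v)) (hG' v).neg (x + s • v)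
    · refine Integrable.of_bound (C := M * ∫ y, |fderiv ℝ G y v|) ?_ ?_
      · exact hm.norm.prod_swap.integral_prod_right'
      · refine Filter.Eventually.of_forall fun s => ?_
        simp only [Function.uncurry]
        rw [Real.norm_of_nonneg (integral_nonneg fun z => norm_nonneg _),
          ← integral_sub_right_eq_self (fun y => |fderiv ℝ G y v|) (x + s • v), ← integral_const_mul]
        refine integral_mono_of_nonneg (Filter.Eventually.of_forall fun z => norm_nonneg _)
          (((hG' v).abs.comp_sub_right (x + s • v)).const_mul M) (Filter.Eventually.of_forall fun z => ?_)
        simp only [norm_mul, norm_neg]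
        exact mul_le_mul_of_nonneg_right (hM z) (norm_nonneg _)
  have h1 : cv φ G (x + v) - cv φ G x = ∫ z, ∫ s in Set.Ioc (0:ℝ) 1, φ z * -(fderiv ℝ G (z - (x + s • v)) v) := by
    unfold cv
    rw [← integral_sub (cv_int hφ hM hG _) (cv_int hφ hM hG _)]
    congr 1; ext z
    rw [integral_const_mul, ← mul_sub]
    congr 1
    rw [← intervalIntegral.integral_of_le zero_le_one]
    have h2 := intervalIntegral.integral_eq_sub_of_hasDerivAt (a := 0) (b := 1) (f := fun s : ℝ => G (z - (x + s • v)))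
      (f' := fun s => -(fderiv ℝ G (z - (x + s • v)) v)) (fun s _ => ?_) ?_
    · rw [h2]; simp
    · have hd := (hG1.differentiable one_ne_zero (z - (x + s • v))).hasFDerivAt
      have hd2 : HasDerivAt (fun s : ℝ => z - (x + s • v)) (-v) s := by
        have := (((hasDerivAt_id s).smul_const v).const_add x).const_sub z
        simpa using this
      have := hd.comp_hasDerivAt s hd2
      simpa [Function.comp_def] using this
    · refine Continuous.intervalIntegrable ?_ _ _
      exact (hc.comp (by fun_prop : Continuous fun s : ℝ => z - (x + s • v))).neg
  rw [h1, integral_integral_swap hInt0, intervalIntegral.integral_of_le zero_le_one]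
  congr 1; ext s
  unfold cv
  rw [← integral_neg]
  congr 1; ext z; ring

lemma cv_step (hφ : Measurable φ) (hM : ∀ x, |φ x| ≤ M) {G : V → ℝ} (hG1 : ContDiff ℝ 1 G) (hG : Integrable G)
    (hG' : ∀ e, Integrable (fun y => fderiv ℝ G y e)) :
    ContDiff ℝ 1 (cv φ G) ∧ ∀ x e, fderiv ℝ (cv φ G) x e = -cv φ (fun y => fderiv ℝ G y e) x := by
  set F : V → V →L[ℝ] ℝ := fun x => LinearMap.toContinuousLinearMap
    { toFun := fun e => -cv φ (fun y => fderiv ℝ G y e) x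
      map_add' := fun e e' => by
        unfold cv
        rw [← neg_add, ← integral_add (cv_int hφ hM (hG' e) x) (cv_int hφ hM (hG' e') x)]
        congr 2; ext z; simp; ring
      map_smul' := fun c e => by
        unfold cv
        rw [smul_eq_mul, mul_neg, RingHom.id_apply, ← integral_const_mul]
        congr 2; ext z; simp; ring } with hF
  have hFe : ∀ x e, F x e = -cv φ (fun y => fderiv ℝ G y e) x := fun x e => rfl
  have hFc : Continuous F := continuous_clm_apply.2 fun e => (cv_cont hφ hM (hG' e)).neg
  have hd : ∀ x, HasFDerivAt (cv φ G) (F x) x := by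
    intro x
    rw [hasFDerivAt_iff_isLittleO_nhds_zero, Asymptotics.isLittleO_iff]
    intro ε hε
    obtain ⟨δ, hδ, hδ2⟩ := Metric.continuousAt_iff.1 (hFc.continuousAt (x := x)) ε hε
    filter_upwards [Metric.ball_mem_nhds (0:V) hδ] with v hv
    have hv : ‖v‖ < δ := by simpa using hv
    have hcF : Continuous (fun s : ℝ => F (x + s • v) v) :=
      (hFc.comp (by fun_prop : Continuous fun s : ℝ => x + s • v)).clm_apply continuous_const
    have e : cv φ G (x + v) - cv φ G x - F x v = ∫ s in (0:ℝ)..1, (F (x + s • v) v - F x v) := by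
      rw [cv_ftc hφ hM hG1 hG hG', intervalIntegral.integral_sub (hcF.intervalIntegrable _ _) (by simp)]
      simp [hFe]
    rw [e]
    have := intervalIntegral.norm_integral_le_of_norm_le_const (a := (0:ℝ)) (b := 1) (C := ε * ‖v‖)
      (f := fun s : ℝ => F (x + s • v) v - F x v) (fun s hs => ?_)
    · simpa using this
    · rw [← ContinuousLinearMap.sub_apply]
      refine (ContinuousLinearMap.le_opNorm _ _).trans (mul_le_mul_of_nonneg_right ?_ (norm_nonneg _))
      rw [← dist_eq_norm]
      refine (hδ2 ?_).le
      rw [Set.uIoc_of_le zero_le_one] at hs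
      rw [dist_eq_norm, add_sub_cancel_left, norm_smul, Real.norm_of_nonneg hs.1.le]
      exact (mul_le_of_le_one_left (norm_nonneg _) hs.2).trans_lt hv
  refine ⟨contDiff_one_iff_hasFDerivAt.2 ⟨F, hFc, hd⟩, fun x e => ?_⟩
  rw [(hd x).fderiv, hFe]

lemma cv_two (hφ : Measurable φ) (hM : ∀ x, |φ x| ≤ M) {p : V → ℝ} (hp : ContDiff ℝ 2 p) (hp0 : Integrable p)
    (hp1 : ∀ e, Integrable (fun y => fderiv ℝ p y e))
    (hp2 : ∀ e e', Integrable (fun y => fderiv ℝ (fun y => fderiv ℝ p y e) y e')) {K : ℝ} (hK0 : 0 ≤ K)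
    (hK : ∀ e e', ∫ y, |fderiv ℝ (fun y => fderiv ℝ p y e) y e'| ≤ K * ‖e‖ * ‖e'‖) :
    ContDiff ℝ 2 (cv φ p) ∧ ∀ x, ‖iteratedFDeriv ℝ 2 (cv φ p) x‖ ≤ K * M := by
  have hM0 : 0 ≤ M := (abs_nonneg _).trans (hM 0)
  have h21 : (2 : WithTop ℕ∞) = 1 + 1 := by norm_num
  have hpe : ∀ e, ContDiff ℝ 1 (fun y => fderiv ℝ p y e) := by
    rw [h21, contDiff_succ_iff_fderiv_apply] at hp
    exact hp.2.2
  have s1 := cv_step hφ hM (hp.of_le (by norm_num)) hp0 hp1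
  have s2 := fun e => cv_step hφ hM (hpe e) (hp1 e) (hp2 e)
  have hC : ContDiff ℝ 2 (cv φ p) := by
    rw [h21, contDiff_succ_iff_fderiv_apply]
    refine ⟨s1.1.differentiable one_ne_zero, fun h => by simp at h, fun e => ?_⟩
    simp_rw [s1.2]
    exact (s2 e).1.neg
  refine ⟨hC, fun x => ?_⟩
  refine ContinuousMultilinearMap.opNorm_le_bound (by positivity) fun m => ?_
  rw [iteratedFDeriv_two_apply]
  have hdd : DifferentiableAt ℝ (fderiv ℝ (cv φ p)) x :=
    ((hC.fderiv_right (m := 1) (by norm_num)).differentiable one_ne_zero) x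
  have e1 : fderiv ℝ (fderiv ℝ (cv φ p)) x (m 0) (m 1) = fderiv ℝ (fun x => fderiv ℝ (cv φ p) x (m 1)) x (m 0) := by
    rw [fderiv_clm_apply hdd (by fun_prop)]
    simp
  rw [e1]
  simp_rw [s1.2]
  rw [fderiv_fun_neg, ContinuousLinearMap.neg_apply, (s2 (m 1)).2, neg_neg]
  refine (cv_bound hM (hp2 _ _) x).trans ?_
  refine (mul_le_mul_of_nonneg_left (hK (m 1) (m 0)) hM0).trans (le_of_eq ?_)
  rw [Fin.prod_univ_two]; ring

end Conv


section Assemble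

set_option linter.unusedSectionVars false

variable {V : Type} [NormedAddCommGroup V] [InnerProductSpace ℝ V] [FiniteDimensional ℝ V]
  [MeasurableSpace V] [BorelSpace V]

lemma Gf_hasFDeriv {b : V → ℂ} (hb : Integrable b) (hb1 : Integrable (fun u => ‖u‖ * ‖b u‖)) (y : V) :
    ∃ L : V →L[ℝ] ℝ, HasFDerivAt (fun y => (Gf b y).re) L y ∧
      ∀ e, L e = (Gf (fun u => (Complex.I * ⟪e, u⟫) * b u) y).re := by
  set F' : V → V → V →L[ℝ] ℂ := fun y u =>
    (b u * (Complex.exp (Complex.I * ⟪y, u⟫) * Complex.I)) • (Complex.ofRealCLM.comp (innerSL ℝ u)) with hF'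
  have hF'm : ∀ y, AEStronglyMeasurable (F' y) := by
    intro y
    refine AEStronglyMeasurable.smul (hb.aestronglyMeasurable.mul (Continuous.aestronglyMeasurable (by fun_prop))) ?_
    exact Continuous.aestronglyMeasurable (by fun_prop)
  have hF'b : ∀ y u, ‖F' y u‖ ≤ ‖u‖ * ‖b u‖ := by
    intro y u
    refine ContinuousLinearMap.opNorm_le_bound _ (by positivity) fun e => ?_
    simp only [hF', ContinuousLinearMap.smul_apply, ContinuousLinearMap.comp_apply, innerSL_apply_apply,
      Complex.ofRealCLM_apply, smul_eq_mul, norm_mul, norm_char, Complex.norm_I, mul_one, Complex.norm_real]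
    have := norm_inner_le_norm (𝕜 := ℝ) u e
    nlinarith [norm_nonneg (b u)]
  have hd : HasFDerivAt (Gf b) (∫ u, F' y u) y := by
    unfold Gf
    refine hasFDerivAt_integral_of_dominated_of_fderiv_le (s := Set.univ) (bound := fun u => ‖u‖ * ‖b u‖) Filter.univ_mem
      (Filter.Eventually.of_forall fun z => ?_) ?_ (hF'm y) (Filter.Eventually.of_forall fun u z _ => hF'b z u) hb1
      (Filter.Eventually.of_forall fun u z _ => ?_)
    · exact hb.aestronglyMeasurable.mul (Continuous.aestronglyMeasurable (by fun_prop))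
    · exact integrable_mul_bdd hb (by fun_prop) (C := 1) (fun u => (norm_char y u).le)
    · have h1 : HasFDerivAt (fun z : V => ((⟪z, u⟫ : ℝ) : ℂ)) (Complex.ofRealCLM.comp (innerSL ℝ u)) z := by
        have := (Complex.ofRealCLM.comp (innerSL ℝ u)).hasFDerivAt (x := z)
        refine this.congr_of_eventuallyEq (Filter.Eventually.of_forall fun w => ?_)
        simp [real_inner_comm]
      have h2 := ((h1.const_mul Complex.I).cexp).const_mul (b u)
      refine h2.congr_fderiv ?_
      simp only [hF', smul_smul, mul_assoc]
  refine ⟨Complex.reCLM.comp (∫ u, F' y u), Complex.reCLM.hasFDerivAt.comp y hd, fun e => ?_⟩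
  rw [ContinuousLinearMap.comp_apply, Complex.reCLM_apply,
    ContinuousLinearMap.integral_apply (Integrable.mono' hb1 (hF'm y) (Filter.Eventually.of_forall (hF'b y)))]
  unfold Gf
  congr 2; ext u
  simp only [hF', ContinuousLinearMap.smul_apply, ContinuousLinearMap.comp_apply, innerSL_apply_apply,
      Complex.ofRealCLM_apply, smul_eq_mul, real_inner_comm]
  ring

lemma mom [Nontrivial V] {β κ t : ℝ} (hβ : 0 < β) (hβ1 : β < 1) (hκ : 0 < κ)
    (hK : KapHyp V β κ) (ht : 0 < t) (k : ℕ) :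
    Integrable (fun u : V => ‖u‖ ^ k * Real.exp (-t * PsiV β u)) := by
  have hp1 := psi1_pos hβ hβ1 one_pos
  have hPm := PsiV_meas hβ hβ1 hκ hK
  have h1 : Integrable (fun u : V => ‖u‖ ^ k * Real.exp (-(t * κ * psi1 β 1) * ‖u‖ ^ (2 * β))) := by
    rw [integrable_fun_norm_addHaar (volume : Measure V)
      (f := fun r : ℝ => r ^ k * Real.exp (-(t * κ * psi1 β 1) * r ^ (2 * β)))]
    have := integrableOn_rpow_mul_exp_neg_mul_rpow (p := 2 * β) (s := ((Module.finrank ℝ V - 1 + k : ℕ) : ℝ))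
      (b := t * κ * psi1 β 1) (by linarith [Nat.cast_nonneg (α := ℝ) (Module.finrank ℝ V - 1 + k)]) (by positivity)
      (by positivity)
    refine this.congr_fun (fun r _ => ?_) measurableSet_Ioi
    simp only [smul_eq_mul]
    rw [Real.rpow_natCast, pow_add, mul_assoc]
  refine Integrable.mono' (h1.const_mul (Real.exp (2 * t * lamV V β))) (Measurable.aestronglyMeasurable (by fun_prop))
    (Filter.Eventually.of_forall fun u => ?_)
  rw [Real.norm_of_nonneg (by positivity), mul_left_comm, ← Real.exp_add]
  refine mul_le_mul_of_nonneg_left (Real.exp_le_exp.2 ?_) (by positivity)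
  have h2 := PsiV_lower hβ u (hK u).1 (hK u).2
  rw [psi1_eq hβ (by positivity), ← Real.rpow_two, ← Real.rpow_mul (norm_nonneg _)] at h2
  nlinarith

lemma L1_all {β κ t : ℝ} (hβ : 0 < β) (hβ1 : β < 1) (hκ : 0 < κ)
    (hK : KapHyp V β κ) (ht : 0 < t) {a : V → ℂ} (ham : Measurable a) {K0 K1 : ℝ} (hK0 : 0 ≤ K0) (hK1 : 0 ≤ K1)
    (ha : ∀ τ : ℝ, 0 < τ → MB (fun u => a u * (Real.exp (-τ * ‖u‖ ^ 2) : ℂ)) (K0 + K1 / τ))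
    (hb : Integrable (fun u => a u * (Real.exp (-t * PsiV β u) : ℂ))) :
    Integrable (Gf (fun u => a u * (Real.exp (-t * PsiV β u) : ℂ))) ∧
      ∫ y, ‖Gf (fun u => a u * (Real.exp (-t * PsiV β u) : ℂ)) y‖ ≤
      Real.exp (2 * t * lamV V β) * (K0 + K1 * ((t * κ * psi1 β 1) ^ (-1 / β) * Real.Gamma (1 / β + 1))) *
        (2 * Real.pi) ^ (Module.finrank ℝ V) := by
  refine dual_L1 hb fun h hm C δ hδ hC B hB => ?_
  have hC0 : 0 ≤ C := by simpa using (norm_nonneg _).trans (hC 0)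
  refine mult_bound hβ hβ1 hκ hK ht hK0 hK1 ha ?_ ?_ hB
  · exact Integrable.mono' ((gauss_int hδ).const_mul C) hm.aestronglyMeasurable (Filter.Eventually.of_forall hC)
  · obtain ⟨D, hD⟩ := (ha (δ / 2) (by positivity)).2.1
    refine Integrable.mono' ((gauss_int (V := V) (half_pos hδ)).const_mul (C * D)) (hm.mul ham).aestronglyMeasurable
      (Filter.Eventually.of_forall fun u => ?_)
    have h1 := hD u
    rw [norm_mul, Complex.norm_real, Real.norm_of_nonneg (Real.exp_pos _).le] at h1
    rw [norm_mul]
    have e : Real.exp (-δ * ‖u‖ ^ 2) = Real.exp (-(δ / 2) * ‖u‖ ^ 2) * Real.exp (-(δ / 2) * ‖u‖ ^ 2) := by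
      rw [← Real.exp_add]; congr 1; ring
    calc ‖h u‖ * ‖a u‖ ≤ (C * Real.exp (-δ * ‖u‖ ^ 2)) * ‖a u‖ := mul_le_mul_of_nonneg_right (hC u) (norm_nonneg _)
      _ = C * (‖a u‖ * Real.exp (-(δ / 2) * ‖u‖ ^ 2)) * Real.exp (-(δ / 2) * ‖u‖ ^ 2) := by rw [e]; ring
      _ ≤ C * D * Real.exp (-(δ / 2) * ‖u‖ ^ 2) := by gcongr

lemma main_V [Nontrivial V] {β κ t : ℝ} (hβ : 0 < β) (hβ1 : β < 1) (hκ : 0 < κ)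
    (hK : KapHyp V β κ) (ht : 0 < t) {φ : V → ℝ} {M : ℝ} (hφ : Measurable φ) (hM : ∀ x, |φ x| ≤ M) :
    ContDiff ℝ 2 (cv φ (fun y => ((2 * Real.pi) ^ (Module.finrank ℝ V))⁻¹ *
      (Gf (fun u => (Real.exp (-t * PsiV β u) : ℂ)) y).re)) ∧
    ∀ x, ‖iteratedFDeriv ℝ 2 (cv φ (fun y => ((2 * Real.pi) ^ (Module.finrank ℝ V))⁻¹ *
      (Gf (fun u => (Real.exp (-t * PsiV β u) : ℂ)) y).re)) x‖ ≤
      Real.exp (2 * t * lamV V β) * (2 * gC V ^ 2 * ((t * κ * psi1 β 1) ^ (-1 / β) * Real.Gamma (1 / β + 1))) * M := by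
  have hPm := PsiV_meas hβ hβ1 hκ hK
  have hp1 := psi1_pos hβ hβ1 one_pos
  have hg := gC_nonneg (V := V)
  set c : ℝ := ((2 * Real.pi) ^ (Module.finrank ℝ V))⁻¹ with hc
  have hc0 : 0 < c := by positivity
  have hΓ : 0 < Real.Gamma (1 / β + 1) := Real.Gamma_pos_of_pos (by positivity)
  -- the three symbols
  set b : V → ℂ := fun u => (Real.exp (-t * PsiV β u) : ℂ) with hb
  set b1 : V → V → ℂ := fun e u => (Complex.I * ⟪e, u⟫) * b u with hb1
  set b2 : V → V → V → ℂ := fun e e' u => (Complex.I * ⟪e', u⟫) * b1 e u with hb2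
  have hbn : ∀ u, ‖b u‖ = Real.exp (-t * PsiV β u) := fun u => by
    rw [hb, Complex.norm_real, Real.norm_of_nonneg (Real.exp_pos _).le]
  have hb1n : ∀ e u, ‖b1 e u‖ ≤ ‖e‖ * (‖u‖ * Real.exp (-t * PsiV β u)) := fun e u => by
    simp only [hb1, norm_mul, Complex.norm_I, one_mul, hbn, Complex.norm_real]
    rw [← mul_assoc]
    exact mul_le_mul_of_nonneg_right (norm_inner_le_norm (𝕜 := ℝ) e u) (Real.exp_pos _).le
  have hb2n : ∀ e e' u, ‖b2 e e' u‖ ≤ ‖e'‖ * ‖e‖ * (‖u‖ ^ 2 * Real.exp (-t * PsiV β u)) := fun e e' u => by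
    simp only [hb2]
    rw [norm_mul, norm_mul, Complex.norm_I, one_mul, Complex.norm_real]
    calc _ ≤ (‖e'‖ * ‖u‖) * (‖e‖ * (‖u‖ * Real.exp (-t * PsiV β u))) :=
          mul_le_mul (norm_inner_le_norm (𝕜 := ℝ) e' u) (hb1n e u) (norm_nonneg _) (by positivity)
      _ = _ := by ring
  have m0 := mom (V := V) hβ hβ1 hκ hK ht 0
  have m1 := mom (V := V) hβ hβ1 hκ hK ht 1
  have m2 := mom (V := V) hβ hβ1 hκ hK ht 2
  simp only [pow_zero, one_mul, pow_one] at m0 m1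
  have hbm : Measurable b := by fun_prop
  have hb1m : ∀ e, Measurable (b1 e) := fun e => by fun_prop
  have hb2m : ∀ e e', Measurable (b2 e e') := fun e e' => by fun_prop
  have hbi : Integrable b := m0.ofReal
  have hb1i : ∀ e, Integrable (b1 e) := fun e =>
    Integrable.mono' (m1.const_mul ‖e‖) (hb1m e).aestronglyMeasurable (Filter.Eventually.of_forall (hb1n e))
  have hb2i : ∀ e e', Integrable (b2 e e') := fun e e' =>
    Integrable.mono' (m2.const_mul (‖e'‖ * ‖e‖)) (hb2m e e').aestronglyMeasurable (Filter.Eventually.of_forall (hb2n e e'))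
  have hbi' : Integrable (fun u => ‖u‖ * ‖b u‖) := by simpa only [hbn] using m1
  have hb1i' : ∀ e, Integrable (fun u => ‖u‖ * ‖b1 e u‖) := fun e =>
    Integrable.mono' (m2.const_mul ‖e‖) (measurable_norm.mul (hb1m e).norm).aestronglyMeasurable
      (Filter.Eventually.of_forall fun u => by
        rw [norm_mul, norm_norm, norm_norm]
        calc _ ≤ ‖u‖ * (‖e‖ * (‖u‖ * Real.exp (-t * PsiV β u))) := mul_le_mul_of_nonneg_left (hb1n e u) (norm_nonneg _)
          _ = _ := by ring)
  -- L1 bounds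
  have L0 : Integrable (Gf b) := by
    have e0 : (fun u => (1:ℂ) * (Real.exp (-t * PsiV β u) : ℂ)) = b := by ext u; rw [one_mul]
    have := (L1_all (V := V) hβ hβ1 hκ hK ht (a := fun _ => 1) measurable_const zero_le_one le_rfl
      (fun τ hτ => by simpa using MB_gauss (V := V) hτ.le) (by rw [e0]; exact hbi)).1
    rwa [e0] at this
  have L1 : ∀ e, Integrable (Gf (b1 e)) := fun e => by
    refine (L1_all (V := V) hβ hβ1 hκ hK ht (a := fun u => Complex.I * ⟪e, u⟫) (by fun_prop)
      (K0 := gC V * ‖e‖) (K1 := gC V * ‖e‖) (by positivity) (by positivity) (fun τ hτ => ?_) (hb1i e)).1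
    have h1 := (MB_gauss1 hτ e).smul Complex.I
    simp only [Complex.norm_I, one_mul, ← mul_assoc] at h1
    refine h1.mono ?_
    have hs : 0 < Real.sqrt τ := Real.sqrt_pos.2 hτ
    have h2 : 1 / Real.sqrt τ ≤ 1 + 1 / τ := by
      have e1 : 1 / τ = (1 / Real.sqrt τ) ^ 2 := by rw [div_pow, Real.sq_sqrt hτ.le, one_pow]
      rw [e1]
      nlinarith [sq_nonneg (1 / Real.sqrt τ - 1/2)]
    calc gC V * ‖e‖ / Real.sqrt τ = gC V * ‖e‖ * (1 / Real.sqrt τ) := by ring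
      _ ≤ gC V * ‖e‖ * (1 + 1 / τ) := mul_le_mul_of_nonneg_left h2 (by positivity)
      _ = _ := by ring
  have L2 : ∀ e e', Integrable (Gf (b2 e e')) ∧ ∫ y, ‖Gf (b2 e e') y‖ ≤
      Real.exp (2 * t * lamV V β) * (2 * gC V ^ 2 * ‖e'‖ * ‖e‖ * ((t * κ * psi1 β 1) ^ (-1 / β) * Real.Gamma (1 / β + 1))) *
        (2 * Real.pi) ^ (Module.finrank ℝ V) := fun e e' => by
    have e0 : b2 e e' = fun u => ((Complex.I * ⟪e', u⟫) * (Complex.I * ⟪e, u⟫)) * (Real.exp (-t * PsiV β u) : ℂ) := by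
      ext u; simp only [hb2, hb1, hb, mul_assoc]
    have h := (L1_all (V := V) hβ hβ1 hκ hK ht (a := fun u => (Complex.I * ⟪e', u⟫) * (Complex.I * ⟪e, u⟫)) (by fun_prop)
      (K0 := 0) (K1 := 2 * gC V ^ 2 * ‖e'‖ * ‖e‖) le_rfl (by positivity) (fun τ hτ => ?_) (by rw [← e0]; exact hb2i e e'))
    · rw [zero_add, ← e0] at h
      exact h
    · have h1 := (MB_gauss2 hτ e' e).smul (-1)
      rw [norm_neg, norm_one, one_mul] at h1
      rw [zero_add]
      convert h1 using 2 with u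
      linear_combination ((⟪e', u⟫ : ℂ) * ⟪e, u⟫ * (Real.exp (-τ * ‖u‖ ^ 2) : ℂ)) * Complex.I_sq
  -- derivatives
  have d0 : ∀ y, ∃ L : V →L[ℝ] ℝ, HasFDerivAt (fun y => c * (Gf b y).re) L y ∧ ∀ e, L e = c * (Gf (b1 e) y).re := by
    intro y
    obtain ⟨L, hL, hLe⟩ := Gf_hasFDeriv hbi hbi' y
    exact ⟨c • L, hL.const_mul c, fun e => by simp [hLe, hb1]⟩
  have d1 : ∀ e y, ∃ L : V →L[ℝ] ℝ, HasFDerivAt (fun y => c * (Gf (b1 e) y).re) L y ∧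
      ∀ e', L e' = c * (Gf (b2 e e') y).re := by
    intro e y
    obtain ⟨L, hL, hLe⟩ := Gf_hasFDeriv (hb1i e) (hb1i' e) y
    exact ⟨c • L, hL.const_mul c, fun e' => by simp [hLe, hb2]⟩
  have f0 : ∀ e, (fun y => fderiv ℝ (fun y => c * (Gf b y).re) y e) = fun y => c * (Gf (b1 e) y).re := by
    intro e; ext y
    obtain ⟨L, hL, hLe⟩ := d0 y
    rw [hL.fderiv, hLe]
  have f1 : ∀ e e', (fun y => fderiv ℝ (fun y => c * (Gf (b1 e) y).re) y e') = fun y => c * (Gf (b2 e e') y).re := by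
    intro e e'; ext y
    obtain ⟨L, hL, hLe⟩ := d1 e y
    rw [hL.fderiv, hLe]
  have c1 : ∀ e, ContDiff ℝ 1 (fun y => c * (Gf (b1 e) y).re) := by
    intro e
    rw [contDiff_one_iff_fderiv]
    refine ⟨fun y => (d1 e y).choose_spec.1.differentiableAt, continuous_clm_apply.2 fun e' => ?_⟩
    rw [f1]
    exact continuous_const.mul (Complex.continuous_re.comp (Gf_cont (hb2i e e')))
  have c2 : ContDiff ℝ 2 (fun y => c * (Gf b y).re) := by
    have h21 : (2 : WithTop ℕ∞) = 1 + 1 := by norm_num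
    rw [h21, contDiff_succ_iff_fderiv_apply]
    refine ⟨fun y => (d0 y).choose_spec.1.differentiableAt, fun h => by simp at h, fun e => ?_⟩
    rw [f0]; exact c1 e
  refine cv_two hφ hM c2 (L0.re.const_mul c) (fun e => ?_) (fun e e' => ?_) (by positivity) (fun e e' => ?_)
  · rw [f0]; exact (L1 e).re.const_mul c
  · rw [f0, f1]; exact (L2 e e').1.re.const_mul c
  · rw [f0]
    have e1 : ∀ y, fderiv ℝ (fun y => c * (Gf (b1 e) y).re) y e' = c * (Gf (b2 e e') y).re := fun y => congrFun (f1 e e') y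
    simp_rw [e1]
    calc ∫ y, |c * (Gf (b2 e e') y).re| ≤ ∫ y, c * ‖Gf (b2 e e') y‖ := by
          refine integral_mono_of_nonneg (Filter.Eventually.of_forall fun y => abs_nonneg _)
            ((L2 e e').1.norm.const_mul c) (Filter.Eventually.of_forall fun y => ?_)
          simp only [abs_mul, abs_of_pos hc0]
          exact mul_le_mul_of_nonneg_left (Complex.abs_re_le_norm _) hc0.le
      _ = c * ∫ y, ‖Gf (b2 e e') y‖ := integral_const_mul _ _
      _ ≤ c * _ := mul_le_mul_of_nonneg_left (L2 e e').2 hc0.le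
      _ = _ := by
        rw [hc]
        field_simp

end Assemble

lemma Psi_eq_PsiV (d : ℕ) (α : ℝ) (u : EuclideanSpace ℝ (Fin d)) : Psi d α u = PsiV (α / 2) u := by
  unfold Psi PsiV
  have e : 2 * (α / 2) = α := by ring
  rw [finrank_euclideanSpace_fin, e]

lemma pdens_eq (d : ℕ) (α t : ℝ)
    (hi : Integrable (fun u : EuclideanSpace ℝ (Fin d) => Real.exp (-t * PsiV (α / 2) u)))
    (y : EuclideanSpace ℝ (Fin d)) :
    pdens d α t y = ((2 * Real.pi) ^ (Module.finrank ℝ (EuclideanSpace ℝ (Fin d))))⁻¹ *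
      (Gf (fun u => (Real.exp (-t * PsiV (α / 2) u) : ℂ)) y).re := by
  unfold pdens Gf
  rw [finrank_euclideanSpace_fin]
  congr 1
  have h1 : Integrable (fun u : EuclideanSpace ℝ (Fin d) =>
      (Real.exp (-t * PsiV (α / 2) u) : ℂ) * Complex.exp (Complex.I * ⟪y, u⟫)) := by
    refine Integrable.mono' hi (hi.ofReal.aestronglyMeasurable.mul
      (Continuous.aestronglyMeasurable (by fun_prop))) (Filter.Eventually.of_forall fun u => ?_)
    rw [norm_mul, mul_comm Complex.I, Complex.norm_exp_ofReal_mul_I, mul_one, Complex.norm_real,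
      Real.norm_of_nonneg (Real.exp_pos _).le]
  have h2 := integral_re h1
  refine Eq.trans ?_ h2
  refine integral_congr_ae (Filter.Eventually.of_forall fun u => ?_)
  change _ = Complex.re _
  simp only [Psi_eq_PsiV]
  rw [Complex.re_ofReal_mul, mul_comm Complex.I, Complex.exp_ofReal_mul_I_re, mul_comm]

lemma Pt_eq_s8 (d : ℕ) (α t : ℝ) (φ : EuclideanSpace ℝ (Fin d) → ℝ) :
    Pt d α φ t = cv φ (pdens d α t) := by
  ext x
  unfold Pt cv
  rw [← integral_sub_right_eq_self (fun y => φ (x + y) * pdens d α t y) x]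
  simp only [add_sub_cancel]

/-- Hessian estimate `‖D²(P_t φ)‖_∞ ≤ C ‖φ‖_∞ t^{-2/α}` for bounded measurable `φ`. -/
theorem stmt_8 (d : ℕ) (hd : 2 ≤ d) (α T : ℝ) (hα1 : 1 < α) (hα2 : α < 2) (hT : 0 < T) :
    ∃ C : ℝ, ∀ φ : EuclideanSpace ℝ (Fin d) → ℝ, Measurable φ →
      ∀ M : ℝ, (∀ x, |φ x| ≤ M) →
        ∀ t : ℝ, 0 < t → t ≤ T →
          ContDiff ℝ 2 (Pt d α φ t) ∧
          ∀ x : EuclideanSpace ℝ (Fin d),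
            ‖iteratedFDeriv ℝ 2 (Pt d α φ t) x‖ ≤ C * M * t ^ (-(2 / α)) := by
  have hβ : 0 < α / 2 := by linarith
  have hβ1 : α / 2 < 1 := by linarith
  have hf : 0 < Module.finrank ℝ (EuclideanSpace ℝ (Fin d)) := by
    rw [finrank_euclideanSpace_fin]; omega
  have : Nontrivial (EuclideanSpace ℝ (Fin d)) := Module.nontrivial_of_finrank_pos hf
  obtain ⟨κ, hκ, hK⟩ := psi_identity (V := EuclideanSpace ℝ (Fin d)) hβ hβ1 hf
  have hK' : KapHyp (EuclideanSpace ℝ (Fin d)) (α / 2) κ := hK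
  have hp := psi1_pos hβ hβ1 one_pos
  have hl := lamV_nonneg (V := EuclideanSpace ℝ (Fin d)) (α / 2)
  have hg := gC_nonneg (V := EuclideanSpace ℝ (Fin d))
  have hΓ : 0 < Real.Gamma (1 / (α / 2) + 1) := Real.Gamma_pos_of_pos (by positivity)
  refine ⟨Real.exp (2 * T * lamV (EuclideanSpace ℝ (Fin d)) (α / 2)) *
    (2 * gC (EuclideanSpace ℝ (Fin d)) ^ 2 *
      ((κ * psi1 (α / 2) 1) ^ (-1 / (α / 2)) * Real.Gamma (1 / (α / 2) + 1))),
    fun φ hφ M hM t ht htT => ?_⟩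
  have hM0 : 0 ≤ M := (abs_nonneg _).trans (hM 0)
  have m0 := mom (V := EuclideanSpace ℝ (Fin d)) hβ hβ1 hκ hK' ht 0
  simp only [pow_zero, one_mul] at m0
  have e1 : Pt d α φ t = cv φ (fun y =>
      ((2 * Real.pi) ^ (Module.finrank ℝ (EuclideanSpace ℝ (Fin d))))⁻¹ *
      (Gf (fun u => (Real.exp (-t * PsiV (α / 2) u) : ℂ)) y).re) := by
    rw [Pt_eq_s8]
    congr 1
    ext y
    exact pdens_eq d α t m0 y
  obtain ⟨hc, hb⟩ := main_V (V := EuclideanSpace ℝ (Fin d)) hβ hβ1 hκ hK' ht hφ hM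
  rw [← e1] at hc hb
  refine ⟨hc, fun x => (hb x).trans ?_⟩
  have e2 : (t * κ * psi1 (α / 2) 1) ^ (-1 / (α / 2)) =
      t ^ (-(2 / α)) * (κ * psi1 (α / 2) 1) ^ (-1 / (α / 2)) := by
    have e3 : -1 / (α / 2) = -(2 / α) := by field_simp
    rw [mul_assoc, Real.mul_rpow ht.le (by positivity), e3]
  rw [e2]
  have he : Real.exp (2 * t * lamV (EuclideanSpace ℝ (Fin d)) (α / 2)) ≤
      Real.exp (2 * T * lamV (EuclideanSpace ℝ (Fin d)) (α / 2)) := by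
    apply Real.exp_le_exp.2
    gcongr
  have hA : 0 ≤ 2 * gC (EuclideanSpace ℝ (Fin d)) ^ 2 *
      (t ^ (-(2 / α)) * (κ * psi1 (α / 2) 1) ^ (-1 / (α / 2)) * Real.Gamma (1 / (α / 2) + 1)) := by
    positivity
  calc _ ≤ Real.exp (2 * T * lamV (EuclideanSpace ℝ (Fin d)) (α / 2)) * (2 * gC (EuclideanSpace ℝ (Fin d)) ^ 2 *
      (t ^ (-(2 / α)) * (κ * psi1 (α / 2) 1) ^ (-1 / (α / 2)) * Real.Gamma (1 / (α / 2) + 1))) * M :=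
        mul_le_mul_of_nonneg_right (mul_le_mul_of_nonneg_right he hA) hM0
    _ = _ := by ring
end
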